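/- arXiv:1009.4826 — 3 statements merged into one kernel-verified Lean document; each statement's English description precedes it below -/
import Mathlib

section
/- For n > m ≥ 1, the set of n×m integer matrices whose m×m minors have gcd 1 (rectangular unimodular matrices) has natural density (ζ(n)·ζ(n−1)·...·ζ(n−m+1))^{-1}. -/
open Filter

/-- Real value of the Riemann zeta function at a natural number argument. -/
noncomputable def zetaR (k : ℕ) : ℝ := ∑' n : ℕ, (1 : ℝ) / (n + 1 : ℝ) ^ k

open scoped Classical in
/-- Number of matrices of `S` in the cube of side `2B` centered at `z`. -/
noncomputable def matCubeCount {n m : ℕ} (S : Set (Matrix (Fin n) (Fin m) ℤ))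
    (z : Matrix (Fin n) (Fin m) ℤ) (B : ℕ) : ℕ :=
  (Finset.filter (fun A : Fin n → Fin m → ℤ => Matrix.of A ∈ S)
    (Fintype.piFinset fun i =>
      Fintype.piFinset fun l => Finset.Ico (z i l - (B : ℤ)) (z i l + (B : ℤ)))).card

/-- Natural density of a set of `n × m` integer matrices, via counting in cubes
of side `2B` and arbitrary center, normalized by `(2B)^(nm)`. -/
def HasMatDensity {n m : ℕ} (S : Set (Matrix (Fin n) (Fin m) ℤ)) (δ : ℝ) : Prop :=
  ∀ z : Matrix (Fin n) (Fin m) ℤ,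
    Tendsto (fun B : ℕ => (matCubeCount S z B : ℝ) / (2 * (B : ℝ)) ^ (n * m))
      atTop (nhds δ)

open scoped Classical in
/-- The gcd of the `i × i` minors of the `n × i` submatrix of `A` formed by the
columns `c`, the minors being indexed by strictly monotone row selections. -/
noncomputable def minorsGcd {n m i : ℕ} (A : Matrix (Fin n) (Fin m) ℤ)
    (c : Fin i → Fin m) : ℤ :=
  Finset.univ.gcd fun ρ : {ρ : Fin i → Fin n // StrictMono ρ} =>
    (A.submatrix ρ.1 c).det

lemma exists_minor {K : Type*} [Field K] {n r : ℕ} (v : Fin r → Fin n → K)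
    (h : LinearIndependent K v) :
    ∃ ρ : Fin r → Fin n, StrictMono ρ ∧
      (Matrix.of fun (i c : Fin r) => v c (ρ i)).det ≠ 0 := by
  have h1 : (Matrix.of v).rank = r := by
    have := LinearIndependent.rank_matrix (M := Matrix.of v) h
    simpa using this
  rw [Matrix.rank_eq_finrank_span_cols] at h1
  obtain ⟨f, hf, -, hli⟩ := Submodule.exists_fun_fin_finrank_span_eq K
    (Set.range (Matrix.of v).col)
  have hli2 := hli.comp (finCongr h1.symm) (finCongr h1.symm).injective
  choose ρ hρ using fun i : Fin r => hf (finCongr h1.symm i)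
  have hfe : (f ∘ finCongr h1.symm) = fun i => (Matrix.of v).col (ρ i) := by
    funext i; exact (hρ i).symm
  rw [hfe] at hli2
  have hinj : Function.Injective ρ := fun a b hab => hli2.injective (by simp [hab])
  refine ⟨ρ ∘ Tuple.sort ρ, (Tuple.monotone_sort ρ).strictMono_of_injective
    (hinj.comp (Tuple.sort ρ).injective), ?_⟩
  have hli3 := hli2.comp (Tuple.sort ρ) (Tuple.sort ρ).injective
  rw [← isUnit_iff_ne_zero, ← Matrix.isUnit_iff_isUnit_det,
    ← Matrix.linearIndependent_rows_iff_isUnit]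
  exact hli3

/-- Columns of `x` are independent mod `p`. -/
def ColsLI {n m : ℕ} (p : ℕ) (x : Fin n × Fin m → ℤ) : Prop :=
  LinearIndependent (ZMod p) (fun (c : Fin m) (i : Fin n) => ((x (i, c) : ℤ) : ZMod p))

lemma minorsGcd_eq_one_iff {n m : ℕ} (x : Fin n × Fin m → ℤ) :
    minorsGcd (Matrix.of fun i c => x (i, c)) (fun l : Fin m => l) = 1 ↔
      ∀ p : ℕ, p.Prime → ColsLI p x := by
  have key : ∀ (p : ℕ) (ρ : Fin m → Fin n),
      (((Matrix.of fun i c => x (i, c)).submatrix ρ (fun l : Fin m => l)).det : ZMod p) =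
      (Matrix.of fun (i c : Fin m) => ((x (ρ i, c) : ℤ) : ZMod p)).det := by
    intro p ρ
    refine (RingHom.map_det (Int.castRingHom (ZMod p)) _).trans ?_
    rfl
  constructor
  · intro h p hp
    have := Fact.mk hp
    have : ∃ ρ : {ρ : Fin m → Fin n // StrictMono ρ},
        ¬ (p : ℤ) ∣ ((Matrix.of fun i c => x (i, c)).submatrix ρ.1 (fun l : Fin m => l)).det := by
      by_contra! hc
      have h2 : (p : ℤ) ∣ minorsGcd (Matrix.of fun i c => x (i, c)) (fun l : Fin m => l) :=
        Finset.dvd_gcd fun ρ _ => hc ρ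
      rw [h] at h2
      have := Int.natCast_dvd_natCast.1 (by simpa using h2 : (p : ℤ) ∣ ((1 : ℕ) : ℤ))
      exact hp.one_lt.ne' (Nat.dvd_one.1 this)
    obtain ⟨ρ, hρ⟩ := this
    rw [← ZMod.intCast_zmod_eq_zero_iff_dvd, key] at hρ
    have h3 := Matrix.linearIndependent_cols_iff_isUnit.2
      ((Matrix.isUnit_iff_isUnit_det _).2 (isUnit_iff_ne_zero.2 hρ))
    unfold ColsLI
    refine LinearIndependent.of_comp (LinearMap.funLeft (ZMod p) (ZMod p) ρ.1) ?_
    exact h3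
  · intro h
    have hn : minorsGcd (Matrix.of fun i c => x (i, c)) (fun l : Fin m => l) =
      normalize (minorsGcd (Matrix.of fun i c => x (i, c)) (fun l : Fin m => l)) := by
      unfold minorsGcd
      rw [Finset.normalize_gcd]
    rw [hn, normalize_eq_one, Int.isUnit_iff_natAbs_eq]
    by_contra hc
    obtain ⟨p, hp, hd⟩ := Nat.exists_prime_and_dvd hc
    have := Fact.mk hp
    obtain ⟨ρ, hm, hρ⟩ := exists_minor _ (h p hp)
    apply hρ
    rw [← key, ZMod.intCast_zmod_eq_zero_iff_dvd]
    refine (Int.natCast_dvd.2 hd).trans ?_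
    exact Finset.gcd_dvd (f := fun ρ : {ρ : Fin m → Fin n // StrictMono ρ} =>
      ((Matrix.of fun i c => x (i, c)).submatrix ρ.1 (fun l : Fin m => l)).det) (b := ⟨ρ, hm⟩) (Finset.mem_univ _)

lemma exists_first_dep {K V : Type*} [Field K] [AddCommGroup V] [Module K V] {m : ℕ}
    (v : Fin m → V) (h : ¬ LinearIndependent K v) :
    ∃ k : Fin m, LinearIndependent K (fun c : Fin k.val => v (Fin.castLE k.2.le c)) ∧
      v k ∈ Submodule.span K (Set.range (fun c : Fin k.val => v (Fin.castLE k.2.le c))) := by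
  by_contra! hc
  have : ∀ r (hr : r ≤ m), LinearIndependent K (fun c : Fin r => v (Fin.castLE hr c)) := by
    intro r
    induction r with
    | zero => intro hr; exact linearIndependent_empty_type
    | succ r ih =>
      intro hr
      rw [linearIndependent_finSucc']
      exact ⟨ih (by omega), hc ⟨r, hr⟩ (ih (by omega))⟩
  exact h (this m le_rfl)

lemma card_Ico_modEq (a v : ℤ) (B p : ℕ) (hp : 0 < p) :
    |(((Finset.Ico (a - (B : ℤ)) (a + B)).filter (fun x => x ≡ v [ZMOD (p : ℤ)])).card : ℝ)
      - 2 * B / p| ≤ 1 := by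
  have hp' : (0 : ℚ) < p := by exact_mod_cast hp
  have h := Int.Ico_filter_modEq_card (a - (B : ℤ)) (a + B) (r := (p : ℤ)) (by exact_mod_cast hp) v
  set N := ((Finset.Ico (a - (B : ℤ)) (a + B)).filter (fun x => x ≡ v [ZMOD (p : ℤ)])).card
  set s : ℚ := (((a + B : ℤ) : ℚ) - v) / ((p : ℤ) : ℚ) with hs
  set t : ℚ := (((a - B : ℤ) : ℚ) - v) / ((p : ℤ) : ℚ) with ht
  have hst : s - t = 2 * B / p := by
    rw [hs, ht]; push_cast; field_simp; ring
  have h0 : (0 : ℚ) ≤ 2 * B / p := by positivity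
  have hge : ⌈t⌉ ≤ ⌈s⌉ := Int.ceil_le_ceil (by linarith)
  rw [max_eq_left (by omega)] at h
  have hN : (N : ℚ) = ⌈s⌉ - ⌈t⌉ := by exact_mod_cast h
  have : |(N : ℚ) - 2 * B / p| ≤ 1 := by
    rw [hN, ← hst, abs_le]
    have := Int.le_ceil s
    have := Int.le_ceil t
    have := Int.ceil_lt_add_one s
    have := Int.ceil_lt_add_one t
    constructor <;> linarith
  have h5 := (Rat.cast_le (K := ℝ)).2 this
  push_cast at h5
  exact h5

lemma card_lin (M g a : ℤ) (B p : ℕ) (hp : p.Prime) (hM : ¬ (p : ℤ) ∣ M) :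
    (((Finset.Ico (a - (B : ℤ)) (a + B)).filter (fun y => (p : ℤ) ∣ M * y - g)).card : ℝ)
      ≤ 2 * B / p + 1 := by
  rcases Finset.eq_empty_or_nonempty
    ((Finset.Ico (a - (B : ℤ)) (a + B)).filter (fun y => (p : ℤ) ∣ M * y - g)) with h | ⟨y, hy⟩
  · rw [h]; simp; positivity
  · have h1 := (abs_le.1 (card_Ico_modEq a y B p hp.pos)).2
    have h2 : ((Finset.Ico (a - (B : ℤ)) (a + B)).filter (fun y => (p : ℤ) ∣ M * y - g)) ⊆
      ((Finset.Ico (a - (B : ℤ)) (a + B)).filter (fun x => x ≡ y [ZMOD (p : ℤ)])) := by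
      intro x hx
      rw [Finset.mem_filter] at hx hy ⊢
      refine ⟨hx.1, ?_⟩
      have h3 : (p : ℤ) ∣ M * (y - x) := by
        have e : M * (y - x) = (M * y - g) - (M * x - g) := by ring
        rw [e]; exact dvd_sub hy.2 hx.2
      exact (Int.modEq_iff_dvd).2 (((Nat.prime_iff_prime_int.1 hp).dvd_or_dvd h3).resolve_left hM)
    have h3 : (((Finset.Ico (a - (B : ℤ)) (a + B)).filter (fun y => (p : ℤ) ∣ M * y - g)).card : ℝ)
      ≤ _ := Nat.cast_le.2 (Finset.card_le_card h2)
    linarith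

lemma card_big_primes (D : ℤ) (hD : D ≠ 0) (B K : ℕ) (hB : 2 ≤ B) (h : |D| < (B : ℤ) ^ K) :
    (D.natAbs.primeFactors.filter (fun p => B < p)).card ≤ K := by
  have h1 : B ^ (D.natAbs.primeFactors.filter (fun p => B < p)).card ≤ D.natAbs := by
    calc _ ≤ ∏ p ∈ D.natAbs.primeFactors.filter (fun p => B < p), p := by
          apply Finset.pow_card_le_prod
          intro p hp
          exact (Finset.mem_filter.1 hp).2.le
      _ ≤ ∏ p ∈ D.natAbs.primeFactors, p := by
          apply Finset.prod_le_prod_of_subset_of_one_le' (Finset.filter_subset _ _)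
          intro p hp _
          exact (Nat.prime_of_mem_primeFactors hp).one_lt.le
      _ ≤ D.natAbs := Nat.le_of_dvd (by omega) (Nat.prod_primeFactors_dvd _)
  have h2 : D.natAbs < B ^ K := by
    zify; exact h
  exact ((Nat.pow_lt_pow_iff_right (by omega)).1 (h1.trans_lt h2)).le

open scoped Classical in
lemma pair_count (M f g a b : ℤ) (B K T : ℕ) (hB : 2 ≤ B) (hT : 2 ≤ T)
    (hK : ∀ x ∈ Finset.Ico (a - (B : ℤ)) (a + B), |M * x - f| < (B : ℤ) ^ K) :
    ((((Finset.Ico (a - (B : ℤ)) (a + B)) ×ˢ (Finset.Ico (b - (B : ℤ)) (b + B))).filter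
      (fun q => ∃ p : ℕ, p.Prime ∧ T ≤ p ∧ ¬ (p : ℤ) ∣ M ∧ (p : ℤ) ∣ M * q.1 - f ∧
        (p : ℤ) ∣ M * q.2 - g)).card : ℝ) ≤ (18 / T) * B ^ 2 + (2 + 6 * K) * B := by
  set I := Finset.Ico (a - (B : ℤ)) (a + B) with hI
  set J := Finset.Ico (b - (B : ℤ)) (b + B) with hJ
  have hIc : I.card = 2 * B := by rw [hI, Int.card_Ico]; omega
  have hJc : J.card = 2 * B := by rw [hJ, Int.card_Ico]; omega
  have hB0 : (0 : ℝ) < B := by positivity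
  let P := (Finset.Ico T (B + 1)).filter (fun p : ℕ => p.Prime ∧ ¬ (p : ℤ) ∣ M)
  let S1 := P.biUnion fun p => (I.filter fun x => (p : ℤ) ∣ M * x - f) ×ˢ
    (J.filter fun y => (p : ℤ) ∣ M * y - g)
  let I0 := if M = 0 then ∅ else I.filter fun x => M * x - f = 0
  let I1 := I.filter fun x => M * x - f ≠ 0
  let Q := fun x : ℤ => ((M * x - f).natAbs.primeFactors.filter (fun p => B < p)).filter
    (fun p : ℕ => ¬ (p : ℤ) ∣ M)
  let S3 := I1.biUnion fun x => (Q x).biUnion fun p =>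
    {x} ×ˢ (J.filter fun y => (p : ℤ) ∣ M * y - g)
  have hsub : ((I ×ˢ J).filter
      (fun q => ∃ p : ℕ, p.Prime ∧ T ≤ p ∧ ¬ (p : ℤ) ∣ M ∧ (p : ℤ) ∣ M * q.1 - f ∧
        (p : ℤ) ∣ M * q.2 - g)) ⊆ (S1 ∪ I0 ×ˢ J) ∪ S3 := by
    rintro ⟨x, y⟩ h
    simp only [Finset.mem_filter, Finset.mem_product] at h
    obtain ⟨⟨hx, hy⟩, p, hp, hTp, hpM, h1, h2⟩ := h
    simp only [Finset.mem_union, S1, S3, I0, I1, Q, P, Finset.mem_biUnion, Finset.mem_product,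
      Finset.mem_filter, Finset.mem_Ico, Finset.mem_singleton, Nat.mem_primeFactors]
    by_cases hpB : p ≤ B
    · left; left
      exact ⟨p, ⟨⟨hTp, by omega⟩, hp, hpM⟩, ⟨hx, h1⟩, hy, h2⟩
    · by_cases h0 : M * x - f = 0
      · left; right
        have hM : M ≠ 0 := by rintro rfl; simp at hpM
        rw [if_neg hM]
        exact ⟨Finset.mem_filter.2 ⟨hx, h0⟩, hy⟩
      · right
        exact ⟨x, ⟨hx, h0⟩, p, ⟨⟨⟨hp, Int.natCast_dvd.1 h1, by simpa using h0⟩, by omega⟩, hpM⟩,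
          rfl, hy, h2⟩
  have hS1 : (S1.card : ℝ) ≤ (18 / T) * B ^ 2 := by
    calc (S1.card : ℝ) ≤ ((∑ p ∈ P, ((I.filter fun x => (p : ℤ) ∣ M * x - f) ×ˢ
            (J.filter fun y => (p : ℤ) ∣ M * y - g)).card : ℕ) : ℝ) :=
          Nat.cast_le.2 Finset.card_biUnion_le
      _ ≤ ∑ p ∈ P, 9 * (B : ℝ) ^ 2 * ((p : ℝ) ^ 2)⁻¹ := by
          push_cast
          apply Finset.sum_le_sum
          intro p hp
          simp only [P, Finset.mem_filter, Finset.mem_Ico] at hp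
          have hp0 : (0 : ℝ) < p := by exact_mod_cast hp.2.1.pos
          have hpB : (p : ℝ) ≤ B := by exact_mod_cast Nat.lt_succ_iff.1 hp.1.2
          have e1 := card_lin M f a B p hp.2.1 hp.2.2
          have e2 := card_lin M g b B p hp.2.1 hp.2.2
          have e3 : 2 * (B : ℝ) / p + 1 ≤ 3 * B / p := by
            rw [div_add_one hp0.ne']; gcongr; linarith
          rw [Finset.card_product]
          push_cast
          calc _ ≤ (3 * (B : ℝ) / p) * (3 * B / p) := by
                gcongr <;> linarith
            _ = _ := by field_simp; ring
      _ ≤ ∑ p ∈ Finset.Ioo (T - 1) (B + 1), 9 * (B : ℝ) ^ 2 * ((p : ℝ) ^ 2)⁻¹ := by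
          apply Finset.sum_le_sum_of_subset_of_nonneg
          · intro p hp
            simp only [P, Finset.mem_filter, Finset.mem_Ico] at hp
            rw [Finset.mem_Ioo]; omega
          · intros; positivity
      _ ≤ 9 * (B : ℝ) ^ 2 * (2 / ((T - 1 : ℕ) + 1)) := by
          rw [← Finset.mul_sum]
          gcongr
          exact sum_Ioo_inv_sq_le _ _
      _ = _ := by
          rw [Nat.cast_sub (by omega)]; push_cast; rw [sub_add_cancel]; ring
  have hI0 : I0.card ≤ 1 := by
    simp only [I0]
    split_ifs with hM
    · simp
    · rw [Finset.card_le_one]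
      intro x hx y hy
      rw [Finset.mem_filter] at hx hy
      exact mul_left_cancel₀ hM (by linarith [hx.2, hy.2])
  have hS2 : (I0 ×ˢ J).card ≤ 2 * B := by
    rw [Finset.card_product, hJc]; nlinarith
  have hS3 : (S3.card : ℝ) ≤ 6 * K * B := by
    have : S3.card ≤ I1.card * (K * 3) := by
      apply Finset.card_biUnion_le_card_mul
      intro x hx
      simp only [I1, Finset.mem_filter] at hx
      refine (Finset.card_biUnion_le_card_mul _ _ 3 ?_).trans ?_
      · intro p hp
        simp only [Q, Finset.mem_filter, Nat.mem_primeFactors] at hp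
        have hp0 : (0 : ℝ) < p := by exact_mod_cast hp.1.1.1.pos
        have e2 := card_lin M g b B p hp.1.1.1 hp.2
        have e3 : 2 * (B : ℝ) / p ≤ 2 := by
          rw [div_le_iff₀ hp0]
          have : (B : ℝ) < p := by exact_mod_cast hp.1.2
          linarith
        rw [Finset.card_product, Finset.card_singleton, one_mul]
        have : ((J.filter fun y => (p : ℤ) ∣ M * y - g).card : ℝ) ≤ 3 := by linarith
        exact_mod_cast this
      · gcongr
        exact (Finset.card_le_card (Finset.filter_subset _ _)).trans
          (card_big_primes _ hx.2 B K hB (hK x hx.1))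
    have h2 : I1.card ≤ 2 * B := hIc ▸ Finset.card_le_card (Finset.filter_subset _ _)
    have h3 : S3.card ≤ 6 * K * B := by
      calc _ ≤ _ := this
        _ ≤ 2 * B * (K * 3) := by gcongr
        _ = _ := by ring
    exact_mod_cast h3
  have hfin := (Finset.card_le_card hsub).trans ((Finset.card_union_le _ _).trans
    (Nat.add_le_add_right (Finset.card_union_le _ _) _))
  have hfin' := (Nat.cast_le (α := ℝ)).2 hfin
  push_cast at hfin'
  have hS2' : ((I0 ×ˢ J).card : ℝ) ≤ 2 * B := by exact_mod_cast hS2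
  rw [Finset.card_product] at hS2'
  push_cast at hS2'
  try rw [Finset.card_product] at hfin'
  try push_cast at hfin'
  linarith

/-- The cube of side `2B` centered at `z`. -/
noncomputable def icube {ι : Type*} [Fintype ι] [DecidableEq ι] (z : ι → ℤ) (B : ℕ) : Finset (ι → ℤ) :=
  Fintype.piFinset fun i => Finset.Ico (z i - (B : ℤ)) (z i + (B : ℤ))

lemma card_icube {ι : Type*} [Fintype ι] [DecidableEq ι] (z : ι → ℤ) (B : ℕ) :
    (icube z B).card = (2 * B) ^ (Fintype.card ι) := by
  rw [icube, Fintype.card_piFinset, Finset.prod_congr rfl (g := fun _ => 2 * B)]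
  · simp
  · intro i _; rw [Int.card_Ico]; omega

open scoped Classical in
lemma fiber_count {ι : Type*} [Fintype ι] [DecidableEq ι] (z : ι → ℤ) (a b : ι) (hab : a ≠ b)
    (M f g : (ι → ℤ) → ℤ)
    (hM : ∀ x y : ι → ℤ, (∀ i, i ≠ a → i ≠ b → x i = y i) → M x = M y)
    (hf : ∀ x y : ι → ℤ, (∀ i, i ≠ a → i ≠ b → x i = y i) → f x = f y)
    (hg : ∀ x y : ι → ℤ, (∀ i, i ≠ a → i ≠ b → x i = y i) → g x = g y)
    (B K T : ℕ) (hB : 2 ≤ B) (hT : 2 ≤ T)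
    (hK : ∀ x ∈ icube z B, |M x * x a - f x| < (B : ℤ) ^ K) :
    (((icube z B).filter
      (fun x => ∃ p : ℕ, p.Prime ∧ T ≤ p ∧ ¬ (p : ℤ) ∣ M x ∧ (p : ℤ) ∣ M x * x a - f x ∧
        (p : ℤ) ∣ M x * x b - g x)).card : ℝ) ≤
      ((18 / T) * B ^ 2 + (2 + 6 * K) * B) * (2 * B) ^ (Fintype.card ι - 2) := by
  set s := (icube z B).filter
      (fun x => ∃ p : ℕ, p.Prime ∧ T ≤ p ∧ ¬ (p : ℤ) ∣ M x ∧ (p : ℤ) ∣ M x * x a - f x ∧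
        (p : ℤ) ∣ M x * x b - g x) with hs
  set R : ℝ := (18 / T) * B ^ 2 + (2 + 6 * K) * B with hR
  have hR0 : 0 ≤ R := by positivity
  let ι' := {i : ι // i ≠ a ∧ i ≠ b}
  let F : (ι → ℤ) → (ι' → ℤ) := fun x i => x i.1
  have hcard : Fintype.card ι' = Fintype.card ι - 2 := by
    have h1 : Fintype.card {i : ι // i = a ∨ i = b} = 2 := by
      rw [Fintype.card_subtype]
      have : (Finset.univ.filter fun i : ι => i = a ∨ i = b) = {a, b} := by
        ext i; simp
      rw [this, Finset.card_pair hab]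
    have h2 := Fintype.card_subtype_compl (fun i : ι => i = a ∨ i = b)
    rw [h1] at h2
    rw [← h2]
    exact Fintype.card_congr (Equiv.subtypeEquivRight (by simp))
  have hfib : ∀ y ∈ s.image F, (s.filter fun x => F x = y).card ≤ ⌊R⌋₊ := by
    intro y hy
    obtain ⟨x0, hx0, rfl⟩ := Finset.mem_image.1 hy
    apply Nat.le_floor
    have hx0c : x0 ∈ icube z B := (Finset.mem_filter.1 hx0).1
    have hagree : ∀ x, F x = F x0 → ∀ i, i ≠ a → i ≠ b → x i = x0 i := by
      intro x hx i hia hib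
      exact congrFun hx ⟨i, hia, hib⟩
    have hpc := pair_count (M x0) (f x0) (g x0) (z a) (z b) B K T hB hT (by
      intro t ht
      have hu : Function.update x0 a t ∈ icube z B := by
        rw [icube, Fintype.mem_piFinset] at hx0c ⊢
        intro i
        by_cases hi : i = a
        · subst hi; simpa using ht
        · simpa [hi] using hx0c i
      have hag : ∀ i, i ≠ a → i ≠ b → Function.update x0 a t i = x0 i := by
        intro i hi _; simp [hi]
      have := hK _ hu
      rw [hM _ _ hag, hf _ _ hag] at this
      simpa using this)
    refine le_trans (Nat.cast_le.2 ?_) hpc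
    refine Finset.card_le_card_of_injOn (fun x => (x a, x b)) ?_ ?_
    · intro x hx
      have hx' := Finset.mem_filter.1 (Finset.mem_coe.1 hx)
      have hx2 := Finset.mem_filter.1 hx'.1
      have hag := hagree x hx'.2
      have hx3 := hx2.1
      rw [icube, Fintype.mem_piFinset] at hx3
      rw [Finset.mem_coe, Finset.mem_filter, Finset.mem_product]
      refine ⟨⟨hx3 a, hx3 b⟩, ?_⟩
      have := hx2.2
      rw [hM _ _ hag, hf _ _ hag, hg _ _ hag] at this
      exact this
    · intro x hx x' hx' hxx
      have e1 := (Finset.mem_filter.1 (Finset.mem_coe.1 hx)).2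
      have e2 := (Finset.mem_filter.1 (Finset.mem_coe.1 hx')).2
      simp only [Prod.mk.injEq] at hxx
      funext i
      by_cases hia : i = a
      · rw [hia]; exact hxx.1
      by_cases hib : i = b
      · rw [hib]; exact hxx.2
      rw [hagree x e1 i hia hib, hagree x' e2 i hia hib]
  have himg : (s.image F).card ≤ (2 * B) ^ (Fintype.card ι - 2) := by
    rw [← hcard, ← card_icube (fun i : ι' => z i.1) B]
    apply Finset.card_le_card
    intro y hy
    obtain ⟨x, hx, rfl⟩ := Finset.mem_image.1 hy
    have hx3 := (Finset.mem_filter.1 hx).1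
    rw [icube, Fintype.mem_piFinset] at hx3 ⊢
    intro i; exact hx3 i.1
  have hfin := Finset.card_le_mul_card_image s _ hfib
  calc (s.card : ℝ) ≤ ((⌊R⌋₊ * (s.image F).card : ℕ) : ℝ) := Nat.cast_le.2 hfin
    _ ≤ ((⌊R⌋₊ * (2 * B) ^ (Fintype.card ι - 2) : ℕ) : ℝ) :=
        Nat.cast_le.2 (Nat.mul_le_mul_left _ himg)
    _ ≤ _ := by
      push_cast
      gcongr
      exact Nat.floor_le hR0

/-- Polynomially bounded. -/
def PB {ι : Type*} (h : (ι → ℤ) → ℤ) : Prop :=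
  ∃ C e : ℕ, ∀ X : ℤ, 1 ≤ X → ∀ x : ι → ℤ, (∀ i, |x i| ≤ X) → |h x| ≤ C * X ^ e

lemma PB.const {ι : Type*} (c : ℤ) : PB (fun _ : ι → ℤ => c) :=
  ⟨c.natAbs, 0, fun X _ x _ => by simp⟩

lemma PB.coord {ι : Type*} (i : ι) : PB (fun x : ι → ℤ => x i) :=
  ⟨1, 1, fun X _ x hx => by simpa using hx i⟩

lemma PB.mul {ι : Type*} {f g : (ι → ℤ) → ℤ} (hf : PB f) (hg : PB g) :
    PB (fun x => f x * g x) := by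
  obtain ⟨C, e, h⟩ := hf
  obtain ⟨D, d, h'⟩ := hg
  refine ⟨C * D, e + d, fun X hX x hx => ?_⟩
  rw [abs_mul]
  calc _ ≤ (C * X ^ e) * (D * X ^ d) := by
        gcongr
        · exact h X hX x hx
        · exact h' X hX x hx
    _ = _ := by push_cast; ring

lemma PB.add {ι : Type*} {f g : (ι → ℤ) → ℤ} (hf : PB f) (hg : PB g) :
    PB (fun x => f x + g x) := by
  obtain ⟨C, e, h⟩ := hf
  obtain ⟨D, d, h'⟩ := hg
  refine ⟨C + D, e + d, fun X hX x hx => ?_⟩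
  have h1 : X ^ e ≤ X ^ (e + d) := pow_le_pow_right₀ hX (by omega)
  have h2 : X ^ d ≤ X ^ (e + d) := pow_le_pow_right₀ hX (by omega)
  calc _ ≤ |f x| + |g x| := abs_add_le _ _
    _ ≤ C * X ^ e + D * X ^ d := add_le_add (h X hX x hx) (h' X hX x hx)
    _ ≤ C * X ^ (e + d) + D * X ^ (e + d) := by gcongr
    _ = _ := by push_cast; ring

lemma PB.sum {ι κ : Type*} (s : Finset κ) {f : κ → (ι → ℤ) → ℤ} (hf : ∀ k, PB (f k)) :
    PB (fun x => ∑ k ∈ s, f k x) := by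
  classical
  induction s using Finset.induction_on with
  | empty => simpa using PB.const 0
  | insert k s hk ih => simp_rw [Finset.sum_insert hk]; exact (hf k).add ih

lemma PB.prod {ι κ : Type*} (s : Finset κ) {f : κ → (ι → ℤ) → ℤ} (hf : ∀ k, PB (f k)) :
    PB (fun x => ∏ k ∈ s, f k x) := by
  classical
  induction s using Finset.induction_on with
  | empty => simpa using PB.const 1
  | insert k s hk ih => simp_rw [Finset.prod_insert hk]; exact (hf k).mul ih

lemma PB.det {ι : Type*} {r : ℕ} {A : (ι → ℤ) → Matrix (Fin r) (Fin r) ℤ}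
    (hA : ∀ i j, PB (fun x => A x i j)) : PB (fun x => (A x).det) := by
  simp_rw [Matrix.det_apply']
  exact PB.sum _ fun σ => (PB.const _).mul (PB.prod _ fun i => hA _ _)

lemma PB.adjugate {ι : Type*} {r : ℕ} {A : (ι → ℤ) → Matrix (Fin r) (Fin r) ℤ}
    (hA : ∀ i j, PB (fun x => A x i j)) (i j : Fin r) : PB (fun x => (A x).adjugate i j) := by
  simp_rw [Matrix.adjugate_apply]
  refine PB.det fun i' j' => ?_
  simp_rw [Matrix.updateRow_apply]
  split_ifs
  · exact PB.const _
  · exact hA _ _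

lemma PB.eventually {ι : Type*} [Fintype ι] [DecidableEq ι] {h : (ι → ℤ) → ℤ} (hh : PB h)
    (z : ι → ℤ) :
    ∃ K : ℕ, ∀ᶠ B : ℕ in atTop, ∀ x ∈ icube z B, |h x| < (B : ℤ) ^ K := by
  obtain ⟨C, e, h'⟩ := hh
  refine ⟨e + 1, ?_⟩
  filter_upwards [eventually_ge_atTop ((∑ i, (z i).natAbs) + C * 2 ^ e + 1)] with B hB x hx
  have h1 : ∀ i, |x i| ≤ 2 * (B : ℤ) := by
    intro i
    have e1 : (z i).natAbs ≤ ∑ i, (z i).natAbs :=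
      Finset.single_le_sum (f := fun i => (z i).natAbs) (fun _ _ => Nat.zero_le _)
        (Finset.mem_univ i)
    rw [icube, Fintype.mem_piFinset] at hx
    have := Finset.mem_Ico.1 (hx i)
    generalize C * 2 ^ e = w at hB
    rw [abs_le]; omega
  have hC : ((C * 2 ^ e : ℕ) : ℤ) < B := by
    generalize C * 2 ^ e = w at hB
    omega
  have hB0 : (0 : ℤ) < B := by omega
  calc |h x| ≤ C * (2 * (B : ℤ)) ^ e := h' _ (by omega) x h1
    _ = ((C * 2 ^ e : ℕ) : ℤ) * B ^ e := by push_cast; ring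
    _ < B * B ^ e := by gcongr
    _ = _ := by ring

open scoped Classical in
lemma generic_tail {ι : Type*} [Fintype ι] [DecidableEq ι] (z : ι → ℤ) (a b : ι) (hab : a ≠ b)
    (M f g : (ι → ℤ) → ℤ)
    (hM : ∀ x y : ι → ℤ, (∀ i, i ≠ a → i ≠ b → x i = y i) → M x = M y)
    (hf : ∀ x y : ι → ℤ, (∀ i, i ≠ a → i ≠ b → x i = y i) → f x = f y)
    (hg : ∀ x y : ι → ℤ, (∀ i, i ≠ a → i ≠ b → x i = y i) → g x = g y)
    (hPB : PB (fun x => M x * x a - f x)) (T : ℕ) (hT : 2 ≤ T) :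
    ∀ᶠ B : ℕ in atTop, (((icube z B).filter
      (fun x => ∃ p : ℕ, p.Prime ∧ T ≤ p ∧ ¬ (p : ℤ) ∣ M x ∧ (p : ℤ) ∣ M x * x a - f x ∧
        (p : ℤ) ∣ M x * x b - g x)).card : ℝ) ≤ (6 / T) * (2 * B) ^ (Fintype.card ι) := by
  obtain ⟨K, hK⟩ := hPB.eventually z
  have h2 : 2 ≤ Fintype.card ι := by
    have := Finset.card_le_univ ({a, b} : Finset ι)
    rwa [Finset.card_pair hab] at this
  filter_upwards [hK, eventually_ge_atTop 2, eventually_ge_atTop ((2 + 6 * K) * T)] with B hB h2B hKB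
  refine (fiber_count z a b hab M f g hM hf hg B K T h2B hT hB).trans ?_
  have hT0 : (0 : ℝ) < T := by positivity
  have hKB' : ((2 + 6 * K) * T : ℝ) ≤ B := by exact_mod_cast hKB
  have e1 : (18 / T) * B ^ 2 + (2 + 6 * K) * B ≤ (6 / T) * (2 * B : ℝ) ^ 2 := by
    have : ((2 + 6 * K) : ℝ) ≤ B / T := by rwa [le_div_iff₀ hT0]
    calc _ ≤ (18 / T) * (B : ℝ) ^ 2 + B / T * B := by gcongr
      _ = 19 / T * B ^ 2 := by ring
      _ ≤ 24 / T * B ^ 2 := by gcongr; norm_num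
      _ = _ := by ring
  calc _ ≤ (6 / T) * (2 * B : ℝ) ^ 2 * (2 * B) ^ (Fintype.card ι - 2) := by gcongr
    _ = _ := by rw [mul_assoc, ← pow_add]; congr 2; omega

/-- The submatrix with rows `ρ` and first `k` columns. -/
def subm {n m : ℕ} (k : Fin m) (ρ : Fin k.val → Fin n) (x : Fin n × Fin m → ℤ) :
    Matrix (Fin k.val) (Fin k.val) ℤ :=
  Matrix.of fun i c => x (ρ i, Fin.castLE k.2.le c)

/-- The Cramer form. -/
def wf {n m : ℕ} (k : Fin m) (ρ : Fin k.val → Fin n) (j : Fin n) (x : Fin n × Fin m → ℤ) : ℤ :=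
  ∑ c, x (j, Fin.castLE k.2.le c) * ∑ i, (subm k ρ x).adjugate c i * x (ρ i, k)

lemma exists_index {n m : ℕ} (hnm : m < n) (p : ℕ) (hp : p.Prime) (x : Fin n × Fin m → ℤ)
    (h : ¬ ColsLI p x) :
    ∃ (k : Fin m) (ρ : Fin k.val → Fin n) (j l : Fin n), (j ≠ l ∧ (∀ i, ρ i ≠ j) ∧ ∀ i, ρ i ≠ l) ∧
      ¬ (p : ℤ) ∣ (subm k ρ x).det ∧ (p : ℤ) ∣ (subm k ρ x).det * x (j, k) - wf k ρ j x ∧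
      (p : ℤ) ∣ (subm k ρ x).det * x (l, k) - wf k ρ l x := by
  have := Fact.mk hp
  obtain ⟨k, hli, hsp⟩ := exists_first_dep _ h
  obtain ⟨ρ, -, hρ⟩ := exists_minor _ hli
  have hcard : 1 < (Finset.univ.image ρ)ᶜ.card := by
    have h1 : (Finset.univ.image ρ).card ≤ k.val := by
      simpa using Finset.card_image_le (s := (Finset.univ : Finset (Fin k.val))) (f := ρ)
    rw [Finset.card_compl, Fintype.card_fin]
    have := k.2
    omega
  obtain ⟨j, hj, l, hl, hjl⟩ := Finset.one_lt_card.1 hcard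
  have hdet : (((subm k ρ x).det : ℤ) : ZMod p) =
      (Matrix.of fun (i c : Fin k.val) => ((x (ρ i, Fin.castLE k.2.le c) : ℤ) : ZMod p)).det :=
    (RingHom.map_det (Int.castRingHom (ZMod p)) _)
  have hadj : ∀ c i, (((subm k ρ x).adjugate c i : ℤ) : ZMod p) =
      (Matrix.of fun (i c : Fin k.val) =>
        ((x (ρ i, Fin.castLE k.2.le c) : ℤ) : ZMod p)).adjugate c i := by
    intro c i
    have := RingHom.map_adjugate (Int.castRingHom (ZMod p)) (subm k ρ x)
    exact congrFun (congrFun this c) i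
  obtain ⟨t, ht⟩ := (Submodule.mem_span_range_iff_exists_fun (ZMod p)).1 hsp
  have hcol : ∀ i, ((x (i, k) : ℤ) : ZMod p) =
      ∑ c : Fin k.val, ((x (i, Fin.castLE k.2.le c) : ℤ) : ZMod p) * t c := by
    intro i
    have := congrFun ht i
    simp only [Finset.sum_apply, Pi.smul_apply, smul_eq_mul] at this
    rw [← this]
    exact Finset.sum_congr rfl fun c _ => mul_comm _ _
  set N := (Matrix.of fun (i c : Fin k.val) =>
        ((x (ρ i, Fin.castLE k.2.le c) : ℤ) : ZMod p)) with hN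
  have key : ∀ j, (p : ℤ) ∣ (subm k ρ x).det * x (j, k) - wf k ρ j x := by
    intro j
    rw [← ZMod.intCast_zmod_eq_zero_iff_dvd]
    simp only [wf, Int.cast_sub, Int.cast_mul, Int.cast_sum, hadj, hdet]
    have e1 : (fun i => ((x (ρ i, k) : ℤ) : ZMod p)) = N.mulVec t := by
      funext i; rw [hcol]; rfl
    have e2 : ∀ c, ∑ i, N.adjugate c i * ((x (ρ i, k) : ℤ) : ZMod p) = N.det * t c := by
      intro c
      have : N.adjugate.mulVec (N.mulVec t) c = N.det * t c := by
        rw [Matrix.mulVec_mulVec, Matrix.adjugate_mul, Matrix.smul_mulVec, Matrix.one_mulVec]; rfl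
      rw [← this, ← e1]; rfl
    simp_rw [e2]
    rw [hcol j, Finset.mul_sum, sub_eq_zero]
    exact Finset.sum_congr rfl fun c _ => by ring
  refine ⟨k, ρ, j, l, ⟨hjl, ?_, ?_⟩, ?_, key j, key l⟩
  · intro i hi; simp at hj; exact hj i hi
  · intro i hi; simp at hl; exact hl i hi
  · rw [← ZMod.intCast_zmod_eq_zero_iff_dvd, hdet]; exact hρ

open scoped Classical in
lemma tail_bound {n m : ℕ} (hnm : m < n) (z : Fin n × Fin m → ℤ) :
    ∃ N : ℕ, ∀ T : ℕ, 2 ≤ T → ∀ᶠ B : ℕ in atTop,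
      (((icube z B).filter (fun x => ∃ p : ℕ, p.Prime ∧ T ≤ p ∧ ¬ ColsLI p x)).card : ℝ) ≤
        N * ((6 / T) * (2 * B) ^ (n * m)) := by
  let Idx := Σ k : Fin m, (Fin k.val → Fin n) × Fin n × Fin n
  let ok : Idx → Prop := fun q => q.2.2.1 ≠ q.2.2.2 ∧ (∀ i, q.2.1 i ≠ q.2.2.1) ∧
    ∀ i, q.2.1 i ≠ q.2.2.2
  let bad : ℕ → Idx → (Fin n × Fin m → ℤ) → Prop := fun T q x =>
    ∃ p : ℕ, p.Prime ∧ T ≤ p ∧ ¬ (p : ℤ) ∣ (subm q.1 q.2.1 x).det ∧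
      (p : ℤ) ∣ (subm q.1 q.2.1 x).det * x (q.2.2.1, q.1) - wf q.1 q.2.1 q.2.2.1 x ∧
      (p : ℤ) ∣ (subm q.1 q.2.1 x).det * x (q.2.2.2, q.1) - wf q.1 q.2.1 q.2.2.2 x
  let I : Finset Idx := Finset.univ.filter ok
  refine ⟨I.card, fun T hT => ?_⟩
  have hev : ∀ᶠ B : ℕ in atTop, ∀ q ∈ I, (((icube z B).filter (bad T q)).card : ℝ) ≤
      (6 / T) * (2 * B) ^ (n * m) := by
    rw [Filter.eventually_all_finset]
    rintro ⟨k, ρ, j, l⟩ hq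
    obtain ⟨hjl, hj, hl⟩ : j ≠ l ∧ (∀ i, ρ i ≠ j) ∧ ∀ i, ρ i ≠ l := (Finset.mem_filter.1 hq).2
    have hne : ∀ c : Fin k.val, Fin.castLE k.2.le c ≠ k := by
      intro c hc
      have := congrArg Fin.val hc
      simp at this
      have := c.2
      omega
    have hS : ∀ x y : Fin n × Fin m → ℤ, (∀ i, i ≠ (j, k) → i ≠ (l, k) → x i = y i) →
        subm k ρ x = subm k ρ y := by
      intro x y hxy
      ext i c
      exact hxy _ (by simp [hne]) (by simp [hne])
    have hw : ∀ j', ∀ x y : Fin n × Fin m → ℤ, (∀ i, i ≠ (j, k) → i ≠ (l, k) → x i = y i) →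
        wf k ρ j' x = wf k ρ j' y := by
      intro j' x y hxy
      unfold wf
      rw [hS x y hxy]
      refine Finset.sum_congr rfl fun c _ => ?_
      rw [hxy _ (by simp [hne]) (by simp [hne])]
      congr 1
      refine Finset.sum_congr rfl fun i _ => ?_
      rw [hxy (ρ i, k) (by simp [hj]) (by simp [hl])]
    have hsPB : ∀ i c, PB (fun x => subm k ρ x i c) := fun i c => PB.coord _
    have hPB : PB (fun x => (subm k ρ x).det * x (j, k) - wf k ρ j x) := by
      have h1 : PB (fun x => (subm k ρ x).det * x (j, k)) := (PB.det hsPB).mul (PB.coord _)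
      have h2 : PB (fun x => wf k ρ j x) :=
        PB.sum _ fun c => (PB.coord _).mul (PB.sum _ fun i =>
          (PB.adjugate hsPB c i).mul (PB.coord _))
      have h3 := h1.add ((PB.const (-1)).mul h2)
      convert h3 using 2 with x
      ring
    have := generic_tail z (j, k) (l, k) (by simp [hjl]) (fun x => (subm k ρ x).det)
      (wf k ρ j) (wf k ρ l) (fun x y hxy => by simp only [hS x y hxy]) (hw j) (hw l) hPB T hT
    simpa [bad] using this
  filter_upwards [hev] with B hB
  have hsub : (icube z B).filter (fun x => ∃ p : ℕ, p.Prime ∧ T ≤ p ∧ ¬ ColsLI p x) ⊆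
      I.biUnion fun q => (icube z B).filter (bad T q) := by
    intro x hx
    obtain ⟨hxc, p, hp, hTp, hli⟩ := Finset.mem_filter.1 hx
    obtain ⟨k, ρ, j, l, hok, h1, h2, h3⟩ := exists_index hnm p hp x hli
    refine Finset.mem_biUnion.2 ⟨⟨k, ρ, j, l⟩, Finset.mem_filter.2 ⟨Finset.mem_univ _, hok⟩,
      Finset.mem_filter.2 ⟨hxc, p, hp, hTp, h1, h2, h3⟩⟩
  calc _ ≤ ((∑ q ∈ I, ((icube z B).filter (bad T q)).card : ℕ) : ℝ) :=
        Nat.cast_le.2 ((Finset.card_le_card hsub).trans Finset.card_biUnion_le)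
    _ ≤ ∑ q ∈ I, (6 / T) * (2 * (B : ℝ)) ^ (n * m) := by
        push_cast; exact Finset.sum_le_sum hB
    _ = _ := by simp

lemma tendsto_Ico_modEq (a v : ℤ) (p : ℕ) (hp : 0 < p) :
    Tendsto (fun B : ℕ => (((Finset.Ico (a - (B : ℤ)) (a + B)).filter
      (fun x => x ≡ v [ZMOD (p : ℤ)])).card : ℝ) / (2 * B)) atTop (nhds (1 / (p : ℝ))) := by
  rw [tendsto_iff_norm_sub_tendsto_zero]
  have h0 : Tendsto (fun B : ℕ => (1 : ℝ) / (B : ℝ)) atTop (nhds 0) :=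
    tendsto_one_div_atTop_nhds_zero_nat
  refine squeeze_zero' (Eventually.of_forall fun _ => norm_nonneg _) ?_ h0
  filter_upwards [eventually_ge_atTop 1] with B hB
  have hB0 : (0 : ℝ) < B := by exact_mod_cast hB
  have hp0 : (0 : ℝ) < p := by exact_mod_cast hp
  have h := card_Ico_modEq a v B p hp
  set N := (((Finset.Ico (a - (B : ℤ)) (a + B)).filter
      (fun x => x ≡ v [ZMOD (p : ℤ)])).card : ℝ)
  have e : N / (2 * B) - 1 / p = (N - 2 * B / p) / (2 * B) := by
    field_simp
  rw [Real.norm_eq_abs, e, abs_div, abs_of_pos (show (0 : ℝ) < 2 * B by positivity),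
    div_le_div_iff₀ (by positivity) hB0]
  nlinarith

open scoped Classical in
lemma periodic_density {ι κ : Type*} [Fintype ι] [DecidableEq ι] [Fintype κ] (z : ι → ℤ)
    (a : κ → ℕ) (ha : ∀ k, 0 < a k) (hco : Pairwise (Function.onFun Nat.Coprime a))
    (R : ∀ k, Finset (ι → ZMod (a k))) :
    Tendsto (fun B : ℕ => (((icube z B).filter
      (fun x => ∀ k, (fun i => ((x i : ℤ) : ZMod (a k))) ∈ R k)).card : ℝ) /
        (2 * B) ^ (Fintype.card ι)) atTop
      (nhds (∏ k, ((R k).card : ℝ) / (a k : ℝ) ^ (Fintype.card ι))) := by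
  have hN : 0 < ∏ k, a k := Finset.prod_pos fun k _ => ha k
  have : NeZero (∏ k, a k) := ⟨hN.ne'⟩
  let red : (ι → ℤ) → (∀ k, ι → ZMod (a k)) := fun x k i => ((x i : ℤ) : ZMod (a k))
  let e := ZMod.prodEquivPi a hco
  let cc : (∀ k, ι → ZMod (a k)) → ι → ℤ := fun r i => ((e.symm fun k => r k i).val : ℤ)
  have hcc : ∀ (r : ∀ k, ι → ZMod (a k)) (x : ι → ℤ),
      red x = r ↔ ∀ i, x i ≡ cc r i [ZMOD ((∏ k, a k : ℕ) : ℤ)] := by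
    intro r x
    have h1 : red x = r ↔ ∀ i, (fun k => ((x i : ℤ) : ZMod (a k))) = fun k => r k i := by
      constructor
      · rintro rfl i; rfl
      · intro h; funext k i; exact congrFun (h i) k
    rw [h1]
    refine forall_congr' fun i => ?_
    rw [← ZMod.intCast_eq_intCast_iff]
    have h2 : ((cc r i : ℤ) : ZMod (∏ k, a k)) = e.symm fun k => r k i := by
      simp only [cc]
      rw [Int.cast_natCast, ZMod.natCast_zmod_val]
    rw [h2]
    rw [RingEquiv.eq_symm_apply, map_intCast]
    rfl
  have hcount : ∀ B : ℕ, ((icube z B).filter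
      (fun x => ∀ k, (fun i => ((x i : ℤ) : ZMod (a k))) ∈ R k)).card =
      ∑ r ∈ Fintype.piFinset R, ∏ i, ((Finset.Ico (z i - (B : ℤ)) (z i + B)).filter
        (fun x => x ≡ cc r i [ZMOD ((∏ k, a k : ℕ) : ℤ)])).card := by
    intro B
    rw [Finset.card_eq_sum_card_fiberwise (f := red) (t := Fintype.piFinset R)]
    · refine Finset.sum_congr rfl fun r hr => ?_
      rw [← Fintype.card_piFinset]
      congr 1
      ext x
      rw [Fintype.mem_piFinset] at hr
      simp only [Finset.mem_filter, Fintype.mem_piFinset, icube, hcc]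
      constructor
      · rintro ⟨⟨h1, h2⟩, h3⟩ i
        exact ⟨h1 i, h3 i⟩
      · intro h
        refine ⟨⟨fun i => (h i).1, fun k => ?_⟩, fun i => (h i).2⟩
        have := (hcc r x).2 fun i => (h i).2
        rw [← this] at hr
        exact hr k
    · intro x hx
      have := (Finset.mem_filter.1 (Finset.mem_coe.1 hx)).2
      rw [Finset.mem_coe, Fintype.mem_piFinset]
      exact this
  have hlim : Tendsto (fun B : ℕ => ∑ r ∈ Fintype.piFinset R, ∏ i,
      ((((Finset.Ico (z i - (B : ℤ)) (z i + B)).filter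
        (fun x => x ≡ cc r i [ZMOD ((∏ k, a k : ℕ) : ℤ)])).card : ℝ) / (2 * B))) atTop
      (nhds (∑ r ∈ Fintype.piFinset R, ∏ i : ι, (1 / ((∏ k, a k : ℕ) : ℝ)))) :=
    tendsto_finsetSum _ fun r _ => tendsto_finsetProd _ fun i _ =>
      tendsto_Ico_modEq _ _ _ hN
  convert hlim using 2 with B
  · rw [hcount]
    push_cast
    rw [Finset.sum_div]
    refine Finset.sum_congr rfl fun r _ => ?_
    rw [Finset.prod_div_distrib]
    simp
  · rw [Finset.sum_const, Fintype.card_piFinset, Finset.prod_const, nsmul_eq_mul,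
      Finset.prod_div_distrib]
    push_cast
    rw [Finset.prod_pow, Finset.card_univ]
    simp [div_eq_mul_inv]

open scoped Classical in
lemma card_LI {n m : ℕ} (hnm : m < n) (p : ℕ) (hp : p.Prime) [Fintype (ZMod p)] :
    ((Finset.univ.filter (fun y : Fin n × Fin m → ZMod p =>
      LinearIndependent (ZMod p) (fun (c : Fin m) (i : Fin n) => y (i, c)))).card : ℝ) /
      (p : ℝ) ^ (n * m) = ∏ i : Fin m, (1 - ((p : ℝ) ^ (n - (i : ℕ)))⁻¹) := by
  have := Fact.mk hp
  let e : (Fin n × Fin m → ZMod p) ≃ (Fin m → Fin n → ZMod p) :=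
    ⟨fun y c i => y (i, c), fun y q => y q.2 q.1, fun _ => rfl, fun _ => rfl⟩
  have h1 : (Finset.univ.filter (fun y : Fin n × Fin m → ZMod p =>
      LinearIndependent (ZMod p) (fun (c : Fin m) (i : Fin n) => y (i, c)))).card =
      Nat.card {s : Fin m → Fin n → ZMod p // LinearIndependent (ZMod p) s} := by
    rw [← Fintype.card_subtype, ← Nat.card_eq_fintype_card]
    exact Nat.card_congr (e.subtypeEquiv fun y => Iff.rfl)
  have hfr : Module.finrank (ZMod p) (Fin n → ZMod p) = n := by simp
  rw [h1, card_linearIndependent (by rw [hfr]; exact hnm.le), hfr, pow_mul]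
  have hp0 : (0 : ℝ) < p := by exact_mod_cast hp.pos
  have hcp : ∀ [Fintype (ZMod p)], Fintype.card (ZMod p) = p := by intro _; rw [ZMod.card]
  push_cast
  have h2 : ((p : ℝ) ^ n) ^ m = ∏ i : Fin m, (p : ℝ) ^ n := by simp
  rw [h2, ← Finset.prod_div_distrib]
  refine Finset.prod_congr rfl fun i _ => ?_
  have hi : (i : ℕ) ≤ n := by have := i.2; omega
  rw [hcp, Nat.cast_sub (Nat.pow_le_pow_right hp.pos hi), pow_sub₀ _ hp0.ne' hi]
  push_cast
  field_simp

/-- Inverse powers as a monoid hom. -/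
noncomputable def invPow (k : ℕ) (hk : k ≠ 0) : ℕ →*₀ ℝ where
  toFun n := ((n : ℝ) ^ k)⁻¹
  map_zero' := by simp [hk]
  map_one' := by simp
  map_mul' a b := by push_cast; rw [mul_pow, mul_inv]

lemma zeta_euler (k : ℕ) (hk : 2 ≤ k) :
    Tendsto (fun T : ℕ => ∏ p ∈ T.primesBelow, (1 - ((p : ℝ) ^ k)⁻¹)) atTop
      (nhds (zetaR k)⁻¹) := by
  have hk0 : k ≠ 0 := by omega
  have hs : Summable (fun n : ℕ => ((n : ℝ) ^ k)⁻¹) := Real.summable_nat_pow_inv.2 (by omega)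
  have hs' : Summable (fun n : ℕ => ‖invPow k hk0 n‖) := by
    convert hs using 2 with n
    change ‖((n : ℝ) ^ k)⁻¹‖ = _
    rw [Real.norm_of_nonneg (by positivity)]
  have h := EulerProduct.eulerProduct_completely_multiplicative hs'
  have hz : ∑' n : ℕ, invPow k hk0 n = zetaR k := by
    change ∑' n : ℕ, ((n : ℝ) ^ k)⁻¹ = _
    rw [hs.tsum_eq_zero_add]
    simp [hk0, zetaR]
  have hpos : zetaR k ≠ 0 := by
    rw [← hz]
    have : 0 < ∑' n : ℕ, ((n : ℝ) ^ k)⁻¹ :=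
      hs.tsum_pos (fun n => by positivity) 1 (by simp)
    exact this.ne'
  rw [hz] at h
  have h2 := h.inv₀ hpos
  convert h2 using 2 with T
  rw [← Finset.prod_inv_distrib]
  refine Finset.prod_congr rfl fun p _ => ?_
  rw [inv_inv]; rfl

open scoped Classical in
lemma finite_density {n m : ℕ} (hnm : m < n) (z : Fin n × Fin m → ℤ) (T : ℕ) :
    Tendsto (fun B : ℕ => (((icube z B).filter
      (fun x => ∀ p ∈ T.primesBelow, ColsLI p x)).card : ℝ) / (2 * B) ^ (n * m)) atTop
      (nhds (∏ p ∈ T.primesBelow, ∏ i : Fin m, (1 - ((p : ℝ) ^ (n - (i : ℕ)))⁻¹))) := by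
  let κ := {p // p ∈ T.primesBelow}
  have hpr : ∀ k : κ, k.1.Prime := fun k => Nat.prime_of_mem_primesBelow k.2
  have hnz : ∀ k : κ, NeZero k.1 := fun k => ⟨(hpr k).ne_zero⟩
  let R : ∀ k : κ, Finset (Fin n × Fin m → ZMod k.1) := fun k =>
    Finset.univ.filter (fun y : Fin n × Fin m → ZMod k.1 =>
      LinearIndependent (ZMod k.1) (fun (c : Fin m) (i : Fin n) => y (i, c)))
  have h := periodic_density z (fun k : κ => k.1) (fun k => (hpr k).pos)
    (fun k l hkl => (Nat.coprime_primes (hpr k) (hpr l)).2 fun h => hkl (Subtype.ext h)) R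
  have hc : Fintype.card (Fin n × Fin m) = n * m := by simp
  rw [hc] at h
  have hlim : ∏ k : κ, ((R k).card : ℝ) / (k.1 : ℝ) ^ (n * m) =
      ∏ p ∈ T.primesBelow, ∏ i : Fin m, (1 - ((p : ℝ) ^ (n - (i : ℕ)))⁻¹) := by
    rw [← Finset.prod_coe_sort T.primesBelow]
    exact Finset.prod_congr rfl fun k _ => card_LI hnm k.1 (hpr k)
  rw [hlim] at h
  convert h using 6 with B x
  simp only [R, Finset.mem_filter, Finset.mem_univ, true_and, ColsLI, κ, Subtype.forall]

open scoped Classical in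
lemma matCubeCount_eq {n m : ℕ} (z : Matrix (Fin n) (Fin m) ℤ) (B : ℕ) :
    matCubeCount {A : Matrix (Fin n) (Fin m) ℤ | minorsGcd A (fun l : Fin m => l) = 1} z B =
      ((icube (fun q : Fin n × Fin m => z q.1 q.2) B).filter
        (fun x => ∀ p : ℕ, p.Prime → ColsLI p x)).card := by
  unfold matCubeCount
  refine Finset.card_bij' (fun A _ => fun q => A q.1 q.2) (fun x _ => fun i c => x (i, c))
    ?_ ?_ (fun _ _ => rfl) (fun _ _ => rfl)
  · intro A hA
    simp only [Finset.mem_filter, Fintype.mem_piFinset, icube, Set.mem_setOf_eq] at hA ⊢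
    exact ⟨fun q => hA.1 q.1 q.2, (minorsGcd_eq_one_iff _).1 hA.2⟩
  · intro x hx
    simp only [Finset.mem_filter, Fintype.mem_piFinset, icube, Set.mem_setOf_eq] at hx ⊢
    exact ⟨fun i c => hx.1 (i, c), (minorsGcd_eq_one_iff _).2 hx.2⟩


/-- The density of `n × m` rectangular unimodular integer matrices (`n > m`),
i.e. matrices whose `m × m` minors are coprime, is `(ζ(n)⋯ζ(n-m+1))⁻¹`. -/
theorem density_rectangular_unimodular (n m : ℕ) (hm : 1 ≤ m) (hnm : m < n) :
    HasMatDensity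
      {A : Matrix (Fin n) (Fin m) ℤ | minorsGcd A (fun l : Fin m => l) = 1}
      (∏ i : Fin m, zetaR (n - (i : ℕ)))⁻¹ := by
  classical
  intro z
  set z' : Fin n × Fin m → ℤ := fun q => z q.1 q.2 with hz'
  set δ : ℝ := (∏ i : Fin m, zetaR (n - (i : ℕ)))⁻¹ with hδ
  set d : ℕ → ℝ := fun T =>
    ∏ p ∈ T.primesBelow, ∏ i : Fin m, (1 - ((p : ℝ) ^ (n - (i : ℕ)))⁻¹) with hd
  have hdlim : Tendsto d atTop (nhds δ) := by
    have h := tendsto_finsetProd (Finset.univ : Finset (Fin m)) (fun i _ =>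
      zeta_euler (n - (i : ℕ)) (by have := i.2; omega))
    rw [Finset.prod_inv_distrib] at h
    refine h.congr fun T => ?_
    rw [hd, Finset.prod_comm]
  obtain ⟨N, hN⟩ := tail_bound hnm z'
  have hNlim : Tendsto (fun T : ℕ => (N : ℝ) * (6 / (T : ℝ))) atTop (nhds 0) := by
    have := (tendsto_const_div_atTop_nhds_zero_nat (6 : ℝ)).const_mul (N : ℝ)
    simpa using this
  rw [Metric.tendsto_atTop']
  intro ε hε
  have e1 := (Metric.tendsto_nhds.1 hdlim) (ε / 3) (by positivity)
  have e2 := (Metric.tendsto_nhds.1 hNlim) (ε / 3) (by positivity)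
  obtain ⟨T, h1, h2, hT⟩ := (e1.and (e2.and (eventually_ge_atTop 2))).exists
  rw [Real.dist_eq] at h1 h2
  have e3 := (Metric.tendsto_nhds.1 (finite_density hnm z' T)) (ε / 3) (by positivity)
  obtain ⟨B₀, hB₀⟩ := eventually_atTop.1 (e3.and ((hN T hT).and (eventually_ge_atTop 1)))
  refine ⟨B₀, fun B hB => ?_⟩
  obtain ⟨h3, h4, h5⟩ := hB₀ B hB.le
  rw [Real.dist_eq] at h3 ⊢
  rw [matCubeCount_eq, ← hz']
  set S := (icube z' B).filter (fun x => ∀ p : ℕ, p.Prime → ColsLI p x) with hS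
  set ST := (icube z' B).filter (fun x => ∀ p ∈ T.primesBelow, ColsLI p x) with hST
  set Bad := (icube z' B).filter (fun x => ∃ p : ℕ, p.Prime ∧ T ≤ p ∧ ¬ ColsLI p x) with hBad
  have hB0 : (0 : ℝ) < B := by exact_mod_cast h5
  have hV : (0 : ℝ) < (2 * (B : ℝ)) ^ (n * m) := by positivity
  have s1 : S ⊆ ST := by
    intro x hx
    rw [hS, Finset.mem_filter] at hx
    rw [hST, Finset.mem_filter]
    exact ⟨hx.1, fun p hp => hx.2 p (Nat.prime_of_mem_primesBelow hp)⟩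
  have s2 : ST ⊆ S ∪ Bad := by
    intro x hx
    rw [hST, Finset.mem_filter] at hx
    rw [Finset.mem_union, hS, hBad, Finset.mem_filter, Finset.mem_filter]
    by_cases hb : ∃ p : ℕ, p.Prime ∧ T ≤ p ∧ ¬ ColsLI p x
    · exact Or.inr ⟨hx.1, hb⟩
    · refine Or.inl ⟨hx.1, fun p hp => ?_⟩
      by_contra hc
      by_cases hpT : p < T
      · exact hc (hx.2 p (Nat.mem_primesBelow.2 ⟨hpT, hp⟩))
      · exact hb ⟨p, hp, by omega, hc⟩
  have c1 : (S.card : ℝ) ≤ ST.card := Nat.cast_le.2 (Finset.card_le_card s1)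
  have c2 : (ST.card : ℝ) ≤ S.card + Bad.card := by
    exact_mod_cast (Finset.card_le_card s2).trans (Finset.card_union_le _ _)
  have q1 : (S.card : ℝ) / (2 * (B : ℝ)) ^ (n * m) ≤ ST.card / (2 * (B : ℝ)) ^ (n * m) := by
    gcongr
  have q2 : (ST.card : ℝ) / (2 * (B : ℝ)) ^ (n * m) ≤
      S.card / (2 * (B : ℝ)) ^ (n * m) + N * (6 / T) := by
    rw [div_le_iff₀ hV, add_mul, div_mul_cancel₀ _ hV.ne']
    linarith
  rw [sub_zero] at h2
  rw [abs_lt] at h1 h2 h3 ⊢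
  simp only [hd] at h1
  constructor <;> linarith
end

section
/- The natural density of n×n integer matrix bases of 'random lattice' type, i.e. matrices whose HNF has all diagonal entries equal to 1 except possibly the last, equals (ζ(n)·ζ(n−1)·...·ζ(2))^{-1}, and as n → ∞ this converges to d = (∏_{j≥2} ζ(j))^{-1} ≈ 0.43575707677. -/
open Filter

/-- `H` is in Hermite normal form with `r` nonzero rows and pivot columns `j`. -/
def IsHNFWith {n m : ℕ} (H : Matrix (Fin n) (Fin m) ℤ) (r : ℕ) (hr : r ≤ n)
    (j : Fin r → Fin m) : Prop :=
  StrictMono j ∧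
  (∀ i : Fin n, r ≤ (i : ℕ) → ∀ l, H i l = 0) ∧
  (∀ i : Fin r, 0 < H (Fin.castLE hr i) (j i)) ∧
  (∀ i : Fin r, ∀ l : Fin m, (l : ℕ) < (j i : ℕ) → H (Fin.castLE hr i) l = 0) ∧
  (∀ i : Fin r, ∀ k : Fin n, (k : ℕ) < (i : ℕ) →
    0 ≤ H k (j i) ∧ H k (j i) < H (Fin.castLE hr i) (j i))

/-- `H` is in Hermite normal form. -/
def IsHNF {n m : ℕ} (H : Matrix (Fin n) (Fin m) ℤ) : Prop :=
  ∃ (r : ℕ) (hr : r ≤ n) (j : Fin r → Fin m), IsHNFWith H r hr j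

/-- A square integer matrix is unimodular if its determinant is `±1`. -/
def IsUnimodular {n : ℕ} (U : Matrix (Fin n) (Fin n) ℤ) : Prop :=
  U.det = 1 ∨ U.det = -1

/-- `H` is the Hermite normal form of `A`: `H` is in HNF and `A = U * H`
for some unimodular `U`. -/
def IsHNFOf {n m : ℕ} (H A : Matrix (Fin n) (Fin m) ℤ) : Prop :=
  IsHNF H ∧ ∃ U : Matrix (Fin n) (Fin n) ℤ, IsUnimodular U ∧ A = U * H


lemma zsummable {k : ℕ} (hk : 2 ≤ k) : Summable (fun n : ℕ => (1 : ℝ) / (n + 1 : ℝ) ^ k) := by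
  have h := (summable_nat_add_iff 1).2 (Real.summable_one_div_nat_pow.2 (by omega : 1 < k))
  simpa using h

lemma ztail {k : ℕ} (hk : 2 ≤ k) (N : ℕ) :
    zetaR k = ∑ n ∈ Finset.range N, (1 : ℝ) / (n + 1 : ℝ) ^ k +
      ∑' n : ℕ, (1 : ℝ) / ((n : ℝ) + N + 1) ^ k := by
  have h := (zsummable hk).sum_add_tsum_nat_add N
  rw [zetaR, ← h]
  simp

lemma ztail_le {k : ℕ} (hk : 2 ≤ k) {N : ℕ} (hN : 1 ≤ N) :
    ∑' n : ℕ, (1 : ℝ) / ((n : ℝ) + N + 1) ^ k ≤ 1 / (N : ℝ) ^ (k - 1) := by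
  apply Real.tsum_le_of_sum_range_le (fun n => by positivity)
  intro m
  have hN0 : (0 : ℝ) < N := by exact_mod_cast hN
  have key : ∀ n : ℕ, (1 : ℝ) / ((n : ℝ) + N + 1) ^ k ≤
      1 / (N : ℝ) ^ (k - 2) * (1 / ((n : ℝ) + N) - 1 / (((n + 1 : ℕ) : ℝ) + N)) := by
    intro n
    have hn : (0 : ℝ) ≤ n := by positivity
    obtain ⟨j, rfl⟩ := Nat.exists_eq_add_of_le hk
    have h1 : (1 : ℝ) / ((n : ℝ) + N) - 1 / (((n + 1 : ℕ) : ℝ) + N)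
        = 1 / (((n : ℝ) + N) * (n + N + 1)) := by
      push_cast; field_simp; ring
    rw [h1, ← one_div_mul_one_div_rev, show 2 + j - 2 = j by omega, pow_add, ← one_div_mul_one_div,
      mul_comm]
    rw [one_div_mul_one_div_rev (n + N + 1 : ℝ), mul_comm ((n : ℝ)+N)]
    have : (N : ℝ) ^ j ≤ ((n : ℝ) + N + 1) ^ j := by
      gcongr; linarith
    gcongr
    nlinarith
  calc _ ≤ ∑ n ∈ Finset.range m, 1 / (N : ℝ) ^ (k - 2) * (1 / ((n : ℝ) + N) - 1 / (((n + 1 : ℕ) : ℝ) + N)) :=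
        Finset.sum_le_sum fun n _ => key n
    _ = 1 / (N : ℝ) ^ (k - 2) * (1 / (((0 : ℕ) : ℝ) + N) - 1 / ((m : ℝ) + N)) := by
        rw [← Finset.mul_sum, Finset.sum_range_sub' (fun n : ℕ => 1 / ((n : ℝ) + N))]
    _ ≤ 1 / (N : ℝ) ^ (k - 2) * (1 / N) := by
        gcongr
        have : 0 ≤ 1 / ((m : ℝ) + N) := by positivity
        simp only [Nat.cast_zero, zero_add]; linarith
    _ = _ := by
        rw [one_div_mul_one_div, ← pow_succ]; congr 3; omega

lemma zeta_lo {k : ℕ} (hk : 2 ≤ k) (N : ℕ) :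
    ∑ n ∈ Finset.range N, (1 : ℝ) / (n + 1 : ℝ) ^ k ≤ zetaR k := by
  rw [ztail hk N]
  have : 0 ≤ ∑' n : ℕ, (1 : ℝ) / ((n : ℝ) + N + 1) ^ k := tsum_nonneg fun n => by positivity
  linarith

lemma zeta_hi {k : ℕ} (hk : 2 ≤ k) {N : ℕ} (hN : 1 ≤ N) :
    zetaR k ≤ ∑ n ∈ Finset.range N, (1 : ℝ) / (n + 1 : ℝ) ^ k + 1 / (N : ℝ) ^ (k - 1) := by
  rw [ztail hk N]
  have := ztail_le hk hN
  linarith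

lemma zeta_ge_one {k : ℕ} (hk : 2 ≤ k) : 1 ≤ zetaR k := by
  have := zeta_lo hk 1
  simpa using this

lemma zeta_le_pow {k : ℕ} (hk : 2 ≤ k) : zetaR k ≤ 1 + 3 * (1 / 2) ^ k := by
  have := zeta_hi hk (N := 2) (by norm_num)
  obtain ⟨j, rfl⟩ := Nat.exists_eq_add_of_le hk
  simp only [Finset.sum_range_succ, Finset.sum_range_zero] at this
  rw [show 2 + j - 1 = j + 1 by omega] at this
  refine this.trans (le_of_eq ?_)
  push_cast
  simp only [one_div, inv_pow]
  norm_num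
  rw [pow_add, pow_add]; field_simp; ring

lemma zeta_multipliable : Multipliable (fun j : ℕ => zetaR (j + 2)) := by
  have h : Summable (fun j : ℕ => zetaR (j + 2) - 1) := by
    refine Summable.of_nonneg_of_le (f := fun j : ℕ => 3 * (1 / 2 : ℝ) ^ (j + 2)) (fun j => ?_) (fun j => ?_) ?_
    · have := zeta_ge_one (k := j + 2) (by omega); linarith
    · have := zeta_le_pow (k := j + 2) (by omega); linarith
    · exact ((summable_nat_add_iff 2).2 (summable_geometric_of_lt_one (by norm_num) (by norm_num))).mul_left 3
  have := Real.multipliable_one_add_of_summable h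
  simpa using this

lemma zeta_partial_tendsto : Tendsto (fun K : ℕ => ∏ j ∈ Finset.range K, zetaR (j + 2)) atTop
    (nhds (∏' j : ℕ, zetaR (j + 2))) := zeta_multipliable.tendsto_prod_tprod_nat

lemma zeta_tprod_ge (J : ℕ) : ∏ j ∈ Finset.range J, zetaR (j + 2) ≤ ∏' j : ℕ, zetaR (j + 2) := by
  refine ge_of_tendsto zeta_partial_tendsto ?_
  filter_upwards [eventually_ge_atTop J] with K hK
  apply Finset.prod_le_prod_of_subset_of_one_le
  · simpa using hK
  · intro i _
    have := zeta_ge_one (k := i + 2) (by omega); linarith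
  · intro i _ _; exact zeta_ge_one (by omega)

lemma zeta_tprod_le (J : ℕ) : ∏' j : ℕ, zetaR (j + 2) ≤
    (∏ j ∈ Finset.range J, zetaR (j + 2)) * Real.exp (6 * (1 / 2) ^ (J + 2)) := by
  refine le_of_tendsto zeta_partial_tendsto ?_
  filter_upwards [eventually_ge_atTop J] with K hK
  rw [← Finset.prod_range_mul_prod_Ico _ hK]
  refine mul_le_mul_of_nonneg_left ?_ (Finset.prod_nonneg fun i _ => by
    have := zeta_ge_one (k := i + 2) (by omega); linarith)
  calc ∏ j ∈ Finset.Ico J K, zetaR (j + 2) ≤ ∏ j ∈ Finset.Ico J K, (1 + 3 * (1 / 2 : ℝ) ^ (j + 2)) := by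
        refine Finset.prod_le_prod (fun i _ => ?_) (fun i _ => zeta_le_pow (by omega))
        have := zeta_ge_one (k := i + 2) (by omega); linarith
    _ ≤ Real.exp (∑ j ∈ Finset.Ico J K, 3 * (1 / 2 : ℝ) ^ (j + 2)) :=
        Real.prod_one_add_le_exp_sum _ (fun i => by positivity)
    _ ≤ _ := by
        apply Real.exp_le_exp.2
        have : ∀ d : ℕ, ∑ j ∈ Finset.Ico J (J + d), 3 * (1 / 2 : ℝ) ^ (j + 2) =
            6 * (1 / 2) ^ (J + 2) - 6 * (1 / 2) ^ (J + d + 2) := by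
          intro d
          induction d with
          | zero => simp
          | succ d ih =>
            rw [← add_assoc, Finset.sum_Ico_succ_top (by omega), ih]; ring
        obtain ⟨d, rfl⟩ := Nat.exists_eq_add_of_le hK
        rw [this]
        have : (0 : ℝ) ≤ 6 * (1 / 2) ^ (J + d + 2) := by positivity
        linarith

lemma part_two : Tendsto (fun n : ℕ => (∏ i : Fin (n - 1), zetaR (n - (i : ℕ)))⁻¹) atTop
      (nhds (∏' j : ℕ, zetaR (j + 2))⁻¹) := by
  have hne : (∏' j : ℕ, zetaR (j + 2)) ≠ 0 := by
    have := zeta_tprod_ge 0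
    simp at this; linarith
  refine Tendsto.inv₀ ?_ hne
  have h := zeta_partial_tendsto.comp (tendsto_sub_atTop_nat 1)
  refine h.congr fun n => ?_
  simp only [Function.comp]
  rw [← Finset.prod_range_reflect, ← Fin.prod_univ_eq_prod_range (fun j => zetaR (n - 1 - 1 - j + 2))]
  refine Finset.prod_congr rfl fun i _ => ?_
  congr 1
  have := i.2
  omega

/-- integer truncated zeta sums -/
def FZ (k : ℕ) : ℕ := (List.range 500).foldr (fun n s => 10 ^ 20 / (n + 1) ^ k + s) 0

lemma FZ_eq (k : ℕ) : FZ k = ∑ n ∈ Finset.range 500, 10 ^ 20 / (n + 1) ^ k := by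
  have : ∀ m, (List.range m).foldr (fun n s => 10 ^ 20 / (n + 1) ^ k + s) 0
      = ∑ n ∈ Finset.range m, 10 ^ 20 / (n + 1) ^ k := by
    intro m
    rw [Finset.sum_range, ← List.sum_ofFn, ← List.foldr_map (f := fun n => 10 ^ 20 / (n + 1) ^ k) (g := (· + ·))]
    simp [List.sum_eq_foldr, List.ofFn_eq_map, ← List.map_coe_finRange_eq_range, Function.comp_def]
  exact this 500

attribute [irreducible] FZ

lemma FZ_lo (k : ℕ) : (FZ k : ℝ) / 10 ^ 20 ≤ ∑ n ∈ Finset.range 500, (1 : ℝ) / (n + 1 : ℝ) ^ k := by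
  rw [FZ_eq, Nat.cast_sum, Finset.sum_div]
  refine Finset.sum_le_sum fun n _ => ?_
  have := @Nat.cast_div_le ℝ _ _ _ (10 ^ 20) ((n + 1) ^ k)
  push_cast at this
  rw [div_le_iff₀ (by positivity)]
  refine this.trans (le_of_eq ?_)
  ring

lemma FZ_hi (k : ℕ) : ∑ n ∈ Finset.range 500, (1 : ℝ) / (n + 1 : ℝ) ^ k ≤ (FZ k + 500 : ℝ) / 10 ^ 20 := by
  have : (FZ k + 500 : ℝ) / 10 ^ 20 = ∑ n ∈ Finset.range 500, (((10 ^ 20 / (n + 1) ^ k : ℕ) : ℝ) + 1) / 10 ^ 20 := by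
    rw [FZ_eq, Nat.cast_sum, ← Finset.sum_div, Finset.sum_add_distrib]; simp
  rw [this]
  clear this
  refine Finset.sum_le_sum fun n _ => ?_
  rw [le_div_iff₀ (by positivity), div_mul_eq_mul_div, one_mul, div_le_iff₀ (by positivity)]
  have := Nat.lt_succ_iff.1 (Nat.lt_succ_of_le (Nat.lt_mul_div_succ (10 ^ 20) (b := (n + 1) ^ k) (by positivity)).le)
  have h2 : ((10 ^ 20 : ℕ) : ℝ) ≤ (((n + 1) ^ k * (10 ^ 20 / (n + 1) ^ k + 1) : ℕ) : ℝ) := by exact_mod_cast this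
  push_cast at h2 ⊢
  linarith

lemma zeta3_lo : (FZ 3 : ℝ) / 10 ^ 20 + 1 / 501001 ≤ zetaR 3 := by
  have key : (1 : ℝ) / 501001 ≤ ∑' n : ℕ, (1 : ℝ) / ((n : ℝ) + 500 + 1) ^ 3 := by
    have hs : Summable (fun n : ℕ => (1 : ℝ) / ((n : ℝ) + 500 + 1) ^ 3) := by
      have := (summable_nat_add_iff 500).2 (zsummable (k := 3) (by norm_num))
      simpa using this
    have ht := hs.hasSum.tendsto_sum_nat
    let g : ℕ → ℝ := fun n => 1 / (2 * ((n : ℝ) + 500) ^ 2 + 2 * (n + 500) + 1)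
    have hg : Tendsto (fun m => g 0 - g m) atTop (nhds (g 0 - 0)) := by
      refine tendsto_const_nhds.sub ?_
      refine squeeze_zero (fun n => by positivity) (g := fun n : ℕ => 1 / ((n : ℝ) + 1)) (fun n => ?_)
        tendsto_one_div_add_atTop_nhds_zero_nat
      have : (0 : ℝ) ≤ n := by positivity
      apply one_div_le_one_div_of_le (by positivity)
      nlinarith
    have := le_of_tendsto_of_tendsto' hg ht (fun m => by
      rw [← Finset.sum_range_sub' g]
      refine Finset.sum_le_sum fun n _ => ?_
      have : (0 : ℝ) ≤ n := by positivity
      simp only [g]; push_cast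
      rw [div_sub_div _ _ (by positivity) (by positivity), div_le_div_iff₀ (by positivity) (by positivity)]
      nlinarith)
    refine le_trans (le_of_eq ?_) this
    simp [g]; norm_num
  have h2 := FZ_lo 3
  rw [ztail (k := 3) (by norm_num) 500]
  push_cast at *
  linarith

lemma zeta3_hi : zetaR 3 ≤ (FZ 3 + 500 : ℝ) / 10 ^ 20 + 1 / 501000 := by
  have key : ∑' n : ℕ, (1 : ℝ) / ((n : ℝ) + 500 + 1) ^ 3 ≤ (1 : ℝ) / 501000 := by
    apply Real.tsum_le_of_sum_range_le (fun n => by positivity)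
    intro m
    let g : ℕ → ℝ := fun n => 1 / (2 * ((n : ℝ) + 500) ^ 2 + 2 * (n + 500))
    calc _ ≤ ∑ n ∈ Finset.range m, (g n - g (n + 1)) := by
          refine Finset.sum_le_sum fun n _ => ?_
          have : (0 : ℝ) ≤ n := by positivity
          simp only [g]; push_cast
          rw [div_sub_div _ _ (by positivity) (by positivity), div_le_div_iff₀ (by positivity) (by positivity)]
          have : (0:ℝ) ≤ (n + 501) ^ 2 := by positivity
          nlinarith
      _ = g 0 - g m := Finset.sum_range_sub' g m
      _ ≤ g 0 := by have : 0 ≤ g m := by positivity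
                    linarith
      _ = _ := by simp [g]; norm_num
  have h2 := FZ_hi 3
  rw [ztail (k := 3) (by norm_num) 500]
  push_cast at *
  linarith

lemma zeta2_eq : zetaR 2 = Real.pi ^ 2 / 6 := by
  have h := (hasSum_nat_add_iff' 1).2 hasSum_zeta_two
  have h2 := h.tsum_eq
  simpa [zetaR] using h2

lemma zeta4_eq : zetaR 4 = Real.pi ^ 4 / 90 := by
  have h := (hasSum_nat_add_iff' 1).2 hasSum_zeta_four
  have h2 := h.tsum_eq
  simpa [zetaR] using h2

def PLo : ℕ := (List.range 35).foldr (fun j s => FZ (j + 5) * s / 10 ^ 20) (10 ^ 20)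
def PHi : ℕ := (List.range 35).foldr (fun j s => (FZ (j + 5) + 501 + 10 ^ 20 / 500 ^ (j + 4)) * s / 10 ^ 20 + 1) (10 ^ 20)

lemma foldr_range_succ' {α : Type*} (f : ℕ → α → α) (a : α) (m : ℕ) :
    (List.range (m + 1)).foldr f a = (List.range m).foldr f (f m a) := by
  rw [List.range_succ, List.foldr_append]; simp

lemma PLo_le : (PLo : ℝ) / 10 ^ 20 ≤ ∏ j ∈ Finset.range 35, zetaR (j + 5) := by
  have : ∀ m (a : ℕ) (x : ℝ), (a : ℝ) / 10 ^ 20 ≤ x →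
    (((List.range m).foldr (fun j s => FZ (j + 5) * s / 10 ^ 20) a : ℕ) : ℝ) / 10 ^ 20 ≤
      (∏ j ∈ Finset.range m, zetaR (j + 5)) * x := by
    intro m
    induction m with
    | zero => intro a x h; simpa using h
    | succ m ih =>
      intro a x h
      rw [foldr_range_succ', Finset.prod_range_succ, mul_assoc]
      apply ih
      have h1 : (FZ (m + 5) : ℝ) / 10 ^ 20 ≤ zetaR (m + 5) := (FZ_lo _).trans (zeta_lo (by omega) 500)
      have h3 := @Nat.cast_div_le ℝ _ _ _ (FZ (m + 5) * a) (10 ^ 20)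
      push_cast at h3
      have h4 := mul_le_mul h1 h (by positivity) (by have := zeta_ge_one (k := m + 5) (by omega); linarith)
      refine le_trans ?_ h4
      rw [div_mul_div_comm, ← div_div]
      gcongr
      exact_mod_cast h3
  have := this 35 (10 ^ 20) 1 (by norm_num)
  rw [mul_one] at this
  unfold PLo
  exact this

lemma PHi_ge : ∏ j ∈ Finset.range 35, zetaR (j + 5) ≤ (PHi : ℝ) / 10 ^ 20 := by
  have : ∀ m (a : ℕ) (x : ℝ), 0 ≤ x → x ≤ (a : ℝ) / 10 ^ 20 →
      (∏ j ∈ Finset.range m, zetaR (j + 5)) * x ≤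
    (((List.range m).foldr (fun j s => (FZ (j + 5) + 501 + 10 ^ 20 / 500 ^ (j + 4)) * s / 10 ^ 20 + 1) a : ℕ) : ℝ) / 10 ^ 20 := by
    intro m
    induction m with
    | zero => intro a x _ h; simpa using h
    | succ m ih =>
      intro a x hx h
      rw [foldr_range_succ', Finset.prod_range_succ, mul_assoc]
      have h0 := zeta_ge_one (k := m + 5) (by omega)
      refine ih _ _ (by positivity) ?_
      have h1 : zetaR (m + 5) ≤ ((FZ (m + 5) + 501 + 10 ^ 20 / 500 ^ (m + 4) : ℕ) : ℝ) / 10 ^ 20 := by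
        have e := zeta_hi (k := m + 5) (by omega) (N := 500) (by norm_num)
        have e2 := FZ_hi (m + 5)
        rw [show m + 5 - 1 = m + 4 by omega] at e
        have e3 : (1 : ℝ) / ((500 : ℕ) : ℝ) ^ (m + 4) ≤ (1 + (10 ^ 20 / 500 ^ (m + 4) : ℕ)) / 10 ^ 20 := by
          rw [le_div_iff₀ (by positivity), div_mul_eq_mul_div, one_mul, div_le_iff₀ (by positivity)]
          have := (Nat.lt_mul_div_succ (10 ^ 20) (b := 500 ^ (m + 4)) (by positivity)).le
          have h2 : ((10 ^ 20 : ℕ) : ℝ) ≤ ((500 ^ (m + 4) * (10 ^ 20 / 500 ^ (m + 4) + 1) : ℕ) : ℝ) := by exact_mod_cast this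
          push_cast at h2 ⊢
          linarith
        rw [Nat.cast_add, Nat.cast_add, add_div] at *
        rw [add_div] at *
        push_cast at *
        linarith
      generalize FZ (m + 5) + 501 + 10 ^ 20 / 500 ^ (m + 4) = c at *
      have h4 := mul_le_mul h1 h hx (by positivity)
      refine h4.trans ?_
      rw [div_mul_div_comm, ← div_div]
      gcongr
      rw [div_le_iff₀ (by positivity)]
      have := (Nat.lt_mul_div_succ (c * a) (b := 10 ^ 20) (by positivity)).le
      have h2 : ((c * a : ℕ) : ℝ) ≤ ((10 ^ 20 * (c * a / 10 ^ 20 + 1) : ℕ) : ℝ) := by exact_mod_cast this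
      rw [Nat.cast_mul (10 ^ 20), Nat.cast_mul] at h2
      rw [mul_comm _ ((10 : ℝ) ^ 20)]
      exact_mod_cast h2
  have := this 35 (10 ^ 20) 1 (by norm_num) (by norm_num)
  rw [mul_one] at this
  unfold PHi
  exact this

attribute [irreducible] PLo PHi

lemma FZ3_lo : 120205490715559428832 ≤ FZ 3 := by decide +kernel
lemma FZ3_hi : FZ 3 ≤ 120205490715559428832 := by decide +kernel
lemma PLo_val : 107232158464320964009 ≤ PLo := by decide +kernel
lemma PHi_val : PHi ≤ 107232158465978975942 := by decide +kernel

lemma prod38 : ∏ j ∈ Finset.range 38, zetaR (j + 2) =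
    zetaR 2 * zetaR 3 * zetaR 4 * ∏ j ∈ Finset.range 35, zetaR (j + 5) := by
  rw [Finset.prod_range_succ', Finset.prod_range_succ', Finset.prod_range_succ']
  simp only [add_assoc]
  norm_num
  ring

lemma part_three : |(∏' j : ℕ, zetaR (j + 2))⁻¹ - 0.43575707677| < 1 / 10 ^ 10 := by
  set T := ∏' j : ℕ, zetaR (j + 2) with hT
  set R := ∏ j ∈ Finset.range 35, zetaR (j + 5) with hR
  have h1 : 1.0723215846432 ≤ R := by
    refine le_trans ?_ PLo_le
    have : ((107232158464320964009 : ℕ) : ℝ) ≤ PLo := by exact_mod_cast PLo_val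
    rw [le_div_iff₀ (by positivity)]
    refine le_trans ?_ this
    norm_num
  have h2 : R ≤ 1.0723215846598 := by
    refine PHi_ge.trans ?_
    have : (PHi : ℝ) ≤ ((107232158465978975942 : ℕ) : ℝ) := by exact_mod_cast PHi_val
    rw [div_le_iff₀ (by positivity)]
    refine this.trans ?_
    norm_num
  have h3 : 1.20205690315156 ≤ zetaR 3 := by
    refine le_trans ?_ zeta3_lo
    have : ((120205490715559428832 : ℕ) : ℝ) ≤ FZ 3 := by exact_mod_cast FZ3_lo
    have h : ((120205490715559428832 : ℕ) : ℝ) / 10 ^ 20 ≤ FZ 3 / 10 ^ 20 := by gcongr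
    refine le_trans ?_ (add_le_add_left h _)
    norm_num
  have h4 : zetaR 3 ≤ 1.2020569031637 := by
    refine zeta3_hi.trans ?_
    have : (FZ 3 : ℝ) ≤ ((120205490715559428832 : ℕ) : ℝ) := by exact_mod_cast FZ3_hi
    have h : ((FZ 3 : ℝ) + 500) / 10 ^ 20 ≤ (((120205490715559428832 : ℕ) : ℝ) + 500) / 10 ^ 20 := by gcongr
    refine (add_le_add_left h _).trans ?_
    norm_num
  have hp1 := Real.pi_gt_d20
  have hp2 := Real.pi_lt_d20
  have h5 : 1.644934066848226 ≤ zetaR 2 := by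
    rw [zeta2_eq]
    have : (3.14159265358979323846 : ℝ) ^ 2 ≤ Real.pi ^ 2 := by gcongr
    norm_num at this ⊢; linarith
  have h6 : zetaR 2 ≤ 1.644934066848227 := by
    rw [zeta2_eq]
    have : Real.pi ^ 2 ≤ (3.14159265358979323847 : ℝ) ^ 2 := by gcongr
    norm_num at this ⊢; linarith
  have h7 : 1.082323233711138 ≤ zetaR 4 := by
    rw [zeta4_eq]
    have : (3.14159265358979323846 : ℝ) ^ 4 ≤ Real.pi ^ 4 := by gcongr
    norm_num at this ⊢; linarith
  have h8 : zetaR 4 ≤ 1.082323233711139 := by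
    rw [zeta4_eq]
    have : Real.pi ^ 4 ≤ (3.14159265358979323847 : ℝ) ^ 4 := by gcongr
    norm_num at this ⊢; linarith
  have hlo := zeta_tprod_ge 38
  have hhi := zeta_tprod_le 38
  rw [prod38, ← hT, ← hR] at hlo hhi
  have hA : (1.644934066848226 * 1.20205690315156 * 1.082323233711138 * 1.0723215846432 : ℝ) ≤
      zetaR 2 * zetaR 3 * zetaR 4 * R := by gcongr
  have hB : zetaR 2 * zetaR 3 * zetaR 4 * R ≤
      (1.644934066848227 * 1.2020569031637 * 1.082323233711139 * 1.0723215846598 : ℝ) := by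
    gcongr
  have hE : Real.exp (6 * (1 / 2) ^ (38 + 2)) ≤ 1 + 1 / 10 ^ 11 := by
    have := Real.one_sub_le_exp_neg (6 * (1 / 2) ^ (38 + 2))
    rw [Real.exp_neg] at this
    have h := le_inv_of_le_inv₀ (by norm_num) this
    refine h.trans ?_
    norm_num
  have hT1 := hA.trans hlo
  have hT2 : T ≤ (1.644934066848227 * 1.2020569031637 * 1.082323233711139 * 1.0723215846598 : ℝ) * (1 + 1 / 10 ^ 11) := by
    refine hhi.trans ?_
    gcongr
  have hT0 : 0 < T := lt_of_lt_of_le (by norm_num) hT1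
  rw [abs_lt]
  constructor
  · rw [lt_sub_iff_add_lt, lt_inv_comm₀ (by norm_num) hT0]
    refine hT2.trans_lt ?_
    norm_num
  · rw [sub_lt_iff_lt_add, inv_lt_comm₀ hT0 (by norm_num)]
    refine lt_of_lt_of_le ?_ hT1
    norm_num

lemma strictMono_ge {r n : ℕ} (j : Fin r → Fin n) (hj : StrictMono j) (i : Fin r) :
    (i : ℕ) ≤ (j i : ℕ) := by
  obtain ⟨i, hi⟩ := i
  induction i with
  | zero => simp
  | succ i ih =>
    have h1 := ih (by omega)
    have h2 : j ⟨i, by omega⟩ < j ⟨i + 1, hi⟩ := hj (by simp [Fin.lt_def])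
    have h3 : (j ⟨i, by omega⟩ : ℕ) < (j ⟨i + 1, hi⟩ : ℕ) := h2
    simp only at h1 ⊢
    omega

lemma alg_forward {m : ℕ} (A : Matrix (Fin (m + 1)) (Fin (m + 1)) ℤ)
    (h : ∃ H, IsHNFOf H A ∧ ∀ i : Fin (m + 1), (i : ℕ) < m + 1 - 1 → H i i = 1)
    (p : ℕ) (hp : p.Prime) :
    LinearIndependent (ZMod p) (fun (j : Fin m) (i : Fin (m + 1)) => ((A i j.castSucc : ℤ) : ZMod p)) := by
  have := Fact.mk hp
  obtain ⟨H, ⟨⟨r, hr, j, hj, hz, -, hl, -⟩, U, hU, hA⟩, hd⟩ := h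
  have htri : ∀ i l : Fin (m + 1), l < i → H i l = 0 := by
    intro i l hli
    by_cases hir : (i : ℕ) < r
    · have := hl ⟨i, hir⟩ l (lt_of_lt_of_le hli (strictMono_ge j hj ⟨i, hir⟩))
      simpa using this
    · exact hz i (by omega) l
  let φ := Int.castRingHom (ZMod p)
  have hUu : IsUnit (U.map φ) := by
    rw [Matrix.isUnit_iff_isUnit_det, ← RingHom.mapMatrix_apply, ← RingHom.map_det]
    rcases hU with h | h <;> rw [h] <;> simp
  have hAm : A.map φ = U.map φ * H.map φ := by
    rw [hA, Matrix.map_mul]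
  rw [Fintype.linearIndependent_iff]
  intro v hv
  let w : Fin (m + 1) → ZMod p := Fin.snoc v 0
  have hAw : (A.map φ).mulVec w = 0 := by
    funext i
    have := congrFun hv i
    simp only [Finset.sum_apply, Pi.smul_apply, smul_eq_mul, Pi.zero_apply] at this
    simp only [Matrix.mulVec, dotProduct, Fin.sum_univ_castSucc, w, Fin.snoc_castSucc, Fin.snoc_last,
      mul_zero, add_zero, Matrix.map_apply, Pi.zero_apply, φ, eq_intCast]
    rw [← this]
    exact Finset.sum_congr rfl fun _ _ => mul_comm _ _
  have hHw : (H.map φ).mulVec w = 0 := by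
    rw [hAm, ← Matrix.mulVec_mulVec] at hAw
    have := Matrix.mulVec_injective_of_isUnit hUu
    apply this
    rw [hAw, Matrix.mulVec_zero]
  let T : Matrix (Fin m) (Fin m) (ZMod p) := (H.map φ).submatrix Fin.castSucc Fin.castSucc
  have hT : T.det = 1 := by
    rw [Matrix.det_of_isUpperTriangular]
    · apply Finset.prod_eq_one
      intro i _
      simp [T, hd i.castSucc (by simp)]
    · intro i l hil
      simp only [T, Matrix.submatrix_apply, Matrix.map_apply]
      rw [htri _ _ (by simpa using hil)]; simp
  have hTv : T.mulVec v = 0 := by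
    funext i
    have := congrFun hHw i.castSucc
    simpa [Matrix.mulVec, dotProduct, Fin.sum_univ_castSucc, w, T] using this
  have : v = 0 := by
    by_contra hne
    exact absurd hT (by rw [Matrix.exists_mulVec_eq_zero_iff.1 ⟨v, hne, hTv⟩]; simp)
  intro i; rw [this]; rfl

lemma dvd_coeff {m n : ℕ} (c : Fin m → Fin n → ℤ)
    (hc : ∀ p : ℕ, p.Prime → LinearIndependent (ZMod p) (fun j i => ((c j i : ℤ) : ZMod p)))
    {p : ℕ} (hp : p.Prime) (a : Fin m → ℤ) (v : Fin n → ℤ)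
    (h : ∑ j, a j • c j = (p : ℤ) • v) (j : Fin m) : (p : ℤ) ∣ a j := by
  have := Fintype.linearIndependent_iff.1 (hc p hp) (fun j => (a j : ZMod p)) (by
    funext i
    have := congrArg (fun z : ℤ => (z : ZMod p)) (congrFun h i)
    simpa using this) j
  exact (ZMod.intCast_zmod_eq_zero_iff_dvd _ _).1 this

lemma li_int {m n : ℕ} (c : Fin m → Fin n → ℤ)
    (hc : ∀ p : ℕ, p.Prime → LinearIndependent (ZMod p) (fun j i => ((c j i : ℤ) : ZMod p))) : LinearIndependent ℤ c := by
  rw [Fintype.linearIndependent_iff]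
  intro g hg j
  obtain ⟨p, hpl, hp⟩ := Nat.exists_infinite_primes ((g j).natAbs + 1)
  have := dvd_coeff c hc hp g 0 (by simpa using hg) j
  exact Int.eq_zero_of_dvd_of_natAbs_lt_natAbs this (by simp; omega)

lemma sat {m n : ℕ} (c : Fin m → Fin n → ℤ)
    (hc : ∀ p : ℕ, p.Prime → LinearIndependent (ZMod p) (fun j i => ((c j i : ℤ) : ZMod p)))
    (k : ℕ) : k ≠ 0 → ∀ v : Fin n → ℤ, (k : ℤ) • v ∈ Submodule.span ℤ (Set.range c) →
    v ∈ Submodule.span ℤ (Set.range c) := by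
  induction k using induction_on_primes with
  | zero => simp
  | one => simp
  | prime_mul p k hp ih =>
    intro hk v hv
    apply ih (by rintro rfl; simp at hk)
    rw [Submodule.mem_span_range_iff_exists_fun] at hv
    obtain ⟨a, ha⟩ := hv
    rw [Nat.cast_mul, mul_smul] at ha
    have hd := dvd_coeff c hc hp a _ ha
    choose b hb using hd
    rw [Submodule.mem_span_range_iff_exists_fun]
    refine ⟨b, ?_⟩
    have hp0 : (p : ℤ) ≠ 0 := by exact_mod_cast hp.ne_zero
    apply smul_right_injective _ hp0
    simp only
    rw [← ha, Finset.smul_sum]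
    exact Finset.sum_congr rfl fun j _ => by rw [hb j, mul_smul]

lemma exists_basis {m : ℕ} (c : Fin m → Fin (m + 1) → ℤ)
    (hc : ∀ p : ℕ, p.Prime → LinearIndependent (ZMod p) (fun j i => ((c j i : ℤ) : ZMod p))) :
    ∃ b : Module.Basis (Fin (m + 1)) ℤ (Fin (m + 1) → ℤ), ∀ j, b j.castSucc = c j := by
  set W := Submodule.span ℤ (Set.range c) with hW
  let bW : Module.Basis (Fin m) ℤ W := Module.Basis.span (li_int c hc)
  have : Module.IsTorsionFree ℤ ((Fin (m + 1) → ℤ) ⧸ W) := by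
    rw [Module.isTorsionFree_iff_smul_eq_zero]
    intro k q hkq
    induction q using Submodule.Quotient.induction_on with | H v => ?_
    rw [← Submodule.Quotient.mk_smul, Submodule.Quotient.mk_eq_zero] at hkq
    by_cases hk : k = 0
    · exact Or.inl hk
    right
    rw [Submodule.Quotient.mk_eq_zero]
    apply sat c hc k.natAbs (by simpa using hk)
    rcases Int.natAbs_eq k with h | h
    · rw [← h]; exact hkq
    · rw [h, neg_smul] at hkq; exact (Submodule.neg_mem_iff _).1 hkq
  let bQ := Module.Free.chooseBasis ℤ ((Fin (m + 1) → ℤ) ⧸ W)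
  let b := Module.Basis.sumQuot bW bQ
  have hcard := Module.finrank_eq_card_basis b
  simp only [Module.finrank_fintype_fun_eq_card, Fintype.card_fin, Fintype.card_sum] at hcard
  have e1 : Module.Free.ChooseBasisIndex ℤ ((Fin (m + 1) → ℤ) ⧸ W) ≃ Fin 1 :=
    Fintype.equivFinOfCardEq (by omega)
  refine ⟨b.reindex ((Equiv.sumCongr (Equiv.refl _) e1).trans finSumFinEquiv), fun j => ?_⟩
  have : (j.castSucc : Fin (m + 1)) = ((Equiv.sumCongr (Equiv.refl _) e1).trans finSumFinEquiv) (Sum.inl j) := by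
    simp; rfl
  rw [this, Module.Basis.reindex_apply, Equiv.symm_apply_apply]
  simp only [b, Module.Basis.sumQuot_inl]
  exact congrArg Subtype.val (Module.Basis.span_apply (li_int c hc) j)

lemma alg_backward {m : ℕ} (A : Matrix (Fin (m + 1)) (Fin (m + 1)) ℤ)
    (hc : ∀ p : ℕ, p.Prime → LinearIndependent (ZMod p)
      (fun (j : Fin m) (i : Fin (m + 1)) => ((A i j.castSucc : ℤ) : ZMod p))) :
    ∃ H, IsHNFOf H A ∧ ∀ i : Fin (m + 1), (i : ℕ) < m + 1 - 1 → H i i = 1 := by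
  obtain ⟨b, hb⟩ := exists_basis (fun (j : Fin m) (i : Fin (m + 1)) => A i j.castSucc) hc
  let V : Matrix (Fin (m + 1)) (Fin (m + 1)) ℤ := (Pi.basisFun ℤ (Fin (m + 1))).toMatrix b
  let U : Matrix (Fin (m + 1)) (Fin (m + 1)) ℤ := b.toMatrix (Pi.basisFun ℤ (Fin (m + 1)))
  have hVU : V * U = 1 := Module.Basis.toMatrix_mul_toMatrix_flip _ _
  have hUV : U * V = 1 := Module.Basis.toMatrix_mul_toMatrix_flip _ _
  have hVe : ∀ i (j : Fin m), V i j.castSucc = A i j.castSucc := by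
    intro i j
    simp [V, Module.Basis.toMatrix_apply, hb]
  have hVu : IsUnit V.det := by
    have := congrArg Matrix.det hVU
    rw [Matrix.det_mul, Matrix.det_one] at this
    exact IsUnit.of_mul_eq_one _ this
  let H0 := U * A
  have hA0 : A = V * H0 := by simp only [H0]; rw [← Matrix.mul_assoc, hVU, Matrix.one_mul]
  have hH0 : ∀ i (j : Fin m), H0 i j.castSucc = if i = j.castSucc then 1 else 0 := by
    intro i j
    have := congrFun (congrFun hUV i) j.castSucc
    rw [Matrix.one_apply] at this
    rw [← this]
    simp only [H0, Matrix.mul_apply, hVe]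
  let d := H0 (Fin.last m) (Fin.last m)
  let s : ℤ := if d < 0 then -1 else 1
  have hs : s = 1 ∨ s = -1 := by simp only [s]; split_ifs <;> simp
  have hsd : s * |d| = d := by
    simp only [s]; split_ifs with h
    · rw [abs_of_neg h]; ring
    · rw [abs_of_nonneg (not_lt.1 h)]; ring
  let H : Matrix (Fin (m + 1)) (Fin (m + 1)) ℤ := fun i j =>
    Fin.lastCases (motive := fun _ => ℤ) (if i = Fin.last m then |d| else H0 i (Fin.last m) % |d|)
      (fun j' => if i = j'.castSucc then 1 else 0) j
  let W : Matrix (Fin (m + 1)) (Fin (m + 1)) ℤ := fun i j =>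
    Fin.lastCases (motive := fun _ => ℤ) (if i = Fin.last m then s else H0 i (Fin.last m) / |d|)
      (fun j' => if i = j'.castSucc then 1 else 0) j
  have H1 : ∀ i (j : Fin m), H i j.castSucc = if i = j.castSucc then 1 else 0 := by
    intro i j; simp [H]
  have H2 : ∀ i, H i (Fin.last m) = if i = Fin.last m then |d| else H0 i (Fin.last m) % |d| := by
    intro i; simp [H]
  have W1 : ∀ i (j : Fin m), W i j.castSucc = if i = j.castSucc then 1 else 0 := by
    intro i j; simp [W]
  have W2 : ∀ i, W i (Fin.last m) = if i = Fin.last m then s else H0 i (Fin.last m) / |d| := by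
    intro i; simp [W]
  have hnl : ∀ j : Fin m, Fin.last m ≠ j.castSucc := fun j => (Fin.castSucc_lt_last j).ne'
  have hW : W.det = s := by
    rw [Matrix.det_of_isUpperTriangular, Fin.prod_univ_castSucc]
    · simp [W1, W2]
    · intro i j hij
      induction j using Fin.lastCases with
      | last => exact absurd hij (by simpa using Fin.le_last i)
      | cast j => rw [W1, if_neg]; rintro rfl; simp at hij
  have hWH : H0 = W * H := by
    ext i j
    rw [Matrix.mul_apply, Fin.sum_univ_castSucc]
    induction j using Fin.lastCases with
    | last =>
      simp only [W1, W2, H2, if_true]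
      induction i using Fin.lastCases with
      | last => simp [hnl, hsd, d]
      | cast i =>
        simp [(hnl _).symm, -Int.emod_abs, Int.emod_add_ediv_mul]
    | cast j =>
      simp only [W1, W2, H1, hH0, hnl, if_false, mul_zero, add_zero]
      induction i using Fin.lastCases with
      | last => simp [hnl]
      | cast i => simp
  have hdiag : ∀ i : Fin (m + 1), (i : ℕ) < m + 1 - 1 → H i i = 1 := by
    intro i hi
    induction i using Fin.lastCases with
    | last => simp at hi
    | cast i => simp [H1]
  refine ⟨H, ⟨?_, V * W, ?_, ?_⟩, hdiag⟩
  · by_cases hd : d = 0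
    · refine ⟨m, by omega, Fin.castSucc, Fin.strictMono_castSucc, ?_, ?_, ?_, ?_⟩
      · intro i hi l
        have : i = Fin.last m := Fin.ext (by simp; omega)
        subst this
        induction l using Fin.lastCases with
        | last => simp [H2, hd]
        | cast l => simp [H1, hnl]
      · intro i
        rw [show Fin.castLE (by omega) i = i.castSucc from rfl, H1]; simp
      · intro i l hl
        induction l using Fin.lastCases with
        | last => simp at hl; omega
        | cast l =>
          rw [show Fin.castLE (by omega) i = i.castSucc from rfl, H1, if_neg]
          intro h
          simp at h hl; subst h; omega
      · intro i k hk
        rw [show Fin.castLE (by omega) i = i.castSucc from rfl, H1, H1, if_neg]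
        · simp
        · rintro rfl; simp at hk
    · refine ⟨m + 1, le_rfl, id, strictMono_id, ?_, ?_, ?_, ?_⟩
      · intro i hi; omega
      · intro i
        rw [Fin.castLE_rfl]
        induction i using Fin.lastCases with
        | last => simp [H2, hd]
        | cast i => simp [H1]
      · intro i l hl
        rw [Fin.castLE_rfl]
        induction l using Fin.lastCases with
        | last => simp at hl; omega
        | cast l =>
          rw [id, H1, if_neg]; rintro rfl; simp at hl
      · intro i k hk
        rw [Fin.castLE_rfl]
        induction i using Fin.lastCases with
        | last =>
          have hkl : k ≠ Fin.last m := by rintro rfl; simp at hk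
          simp only [id, H2, if_neg hkl, if_true]
          exact ⟨Int.emod_nonneg _ (by simpa using hd), Int.emod_lt_of_pos _ (by simpa using hd)⟩
        | cast i =>
          simp only [id, H1]
          rw [if_neg]
          · simp
          · rintro rfl; simp at hk
  · rw [IsUnimodular, Matrix.det_mul, hW]
    rcases Int.isUnit_iff.1 hVu with h | h <;> rcases hs with h' | h' <;> rw [h, h'] <;> simp
  · rw [Matrix.mul_assoc, ← hWH, ← hA0]

open Classical in
noncomputable def bx {ι : Type*} [Fintype ι] (z : ι → ℤ) (B : ℕ) : Finset (ι → ℤ) :=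
  Fintype.piFinset fun i => Finset.Ico (z i - (B : ℤ)) (z i + (B : ℤ))

lemma mem_bx {ι : Type*} [Fintype ι] {z : ι → ℤ} {B : ℕ} {x : ι → ℤ} :
    x ∈ bx z B ↔ ∀ i, z i - B ≤ x i ∧ x i < z i + B := by
  simp [bx]

lemma card_bx {ι : Type*} [Fintype ι] (z : ι → ℤ) (B : ℕ) :
    (bx z B).card = (2 * B) ^ Fintype.card ι := by
  simp only [bx, Fintype.card_piFinset, Int.card_Ico]
  rw [Finset.prod_congr rfl (g := fun _ => 2 * B) (fun i _ => by omega)]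
  simp

open Classical in
noncomputable def pr {ι : Type*} [Fintype ι] (z : ι → ℤ) (B : ℕ) (P : (ι → ℤ) → Prop) : ℝ :=
  (((bx z B).filter P).card : ℝ) / (2 * (B : ℝ)) ^ Fintype.card ι

lemma pr_nonneg {ι : Type*} [Fintype ι] (z : ι → ℤ) (B : ℕ) (P : (ι → ℤ) → Prop) : 0 ≤ pr z B P := by
  unfold pr; positivity

lemma pr_mono {ι : Type*} [Fintype ι] {z : ι → ℤ} {B : ℕ} {P Q : (ι → ℤ) → Prop}
    (h : ∀ x ∈ bx z B, P x → Q x) : pr z B P ≤ pr z B Q := by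
  classical
  unfold pr
  gcongr with x hx
  exact h x hx

lemma pr_congr {ι : Type*} [Fintype ι] {z : ι → ℤ} {B : ℕ} {P Q : (ι → ℤ) → Prop}
    (h : ∀ x, P x ↔ Q x) : pr z B P = pr z B Q :=
  le_antisymm (pr_mono fun x _ => (h x).1) (pr_mono fun x _ => (h x).2)

lemma pr_union {ι α : Type*} [Fintype ι] {z : ι → ℤ} {B : ℕ} {P : (ι → ℤ) → Prop} (s : Finset α)
    (Q : α → (ι → ℤ) → Prop)
    (h : ∀ x ∈ bx z B, P x → ∃ a ∈ s, Q a x) : pr z B P ≤ ∑ a ∈ s, pr z B (Q a) := by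
  classical
  unfold pr
  rw [← Finset.sum_div]
  gcongr
  rw [← Nat.cast_sum]
  norm_cast
  refine le_trans (Finset.card_le_card ?_) (Finset.card_biUnion_le (s := s) (t := fun a => (bx z B).filter (Q a)))
  intro x hx
  simp only [Finset.mem_filter, Finset.mem_biUnion] at hx ⊢
  obtain ⟨a, ha, hq⟩ := h x hx.1 hx.2
  exact ⟨a, ha, hx.1, hq⟩

lemma pr_or {ι : Type*} [Fintype ι] {z : ι → ℤ} {B : ℕ} {P Q R : (ι → ℤ) → Prop}
    (h : ∀ x ∈ bx z B, P x → Q x ∨ R x) : pr z B P ≤ pr z B Q + pr z B R := by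
  have := pr_union (z := z) (B := B) (P := P) Finset.univ (fun b : Bool => if b then Q else R) (by
    intro x hx hp
    rcases h x hx hp with h | h
    · exact ⟨true, by simp, by simpa using h⟩
    · exact ⟨false, by simp, by simpa using h⟩)
  simpa using this

lemma pr_reindex {ι κ : Type*} [Fintype ι] [Fintype κ] (e : κ ≃ ι) (z : ι → ℤ) (B : ℕ)
    (P : (ι → ℤ) → Prop) : pr z B P = pr (z ∘ e) B (fun y => P (y ∘ e.symm)) := by
  classical
  unfold pr
  rw [Fintype.card_congr e]
  congr 2
  apply Finset.card_nbij' (fun x => x ∘ e) (fun y => y ∘ e.symm)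
  · intro x hx
    simp only [Finset.coe_filter, Set.mem_ofPred_eq, mem_bx] at hx ⊢
    refine ⟨fun i => hx.1 (e i), ?_⟩
    convert hx.2 using 1
    funext i; simp
  · intro y hy
    simp only [Finset.coe_filter, Set.mem_ofPred_eq, mem_bx] at hy ⊢
    refine ⟨fun i => ?_, hy.2⟩
    simpa using hy.1 (e.symm i)
  · intro x _; funext i; simp
  · intro x _; funext i; simp

open Classical in
lemma card_sum {κ μ : Type*} [Fintype κ] [Fintype μ] (z : κ ⊕ μ → ℤ) (B : ℕ)
    (P : (κ ⊕ μ → ℤ) → Prop) : ((bx z B).filter P).card =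
      ∑ a ∈ bx (z ∘ Sum.inl) B, ((bx (z ∘ Sum.inr) B).filter (fun r => P (Sum.elim a r))).card := by
  rw [Finset.card_eq_sum_card_fiberwise (f := fun x => x ∘ Sum.inl) (t := bx (z ∘ Sum.inl) B)]
  · refine Finset.sum_congr rfl fun a ha => ?_
    apply Finset.card_nbij' (fun x => x ∘ Sum.inr) (fun r => Sum.elim a r)
    · intro x hx
      simp only [Finset.coe_filter, Set.mem_ofPred_eq, Finset.mem_filter, mem_bx] at hx ⊢
      obtain ⟨⟨h1, h2⟩, rfl⟩ := hx
      refine ⟨fun i => h1 (Sum.inr i), ?_⟩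
      rwa [Sum.elim_comp_inl_inr]
    · intro r hr
      simp only [Finset.coe_filter, Set.mem_ofPred_eq, Finset.mem_filter, mem_bx] at hr ⊢
      refine ⟨⟨?_, hr.2⟩, by simp⟩
      rintro (i | i)
      · exact mem_bx.1 ha i
      · exact hr.1 i
    · intro x hx
      simp only [Finset.coe_filter, Set.mem_ofPred_eq, Finset.mem_filter, mem_bx] at hx
      obtain ⟨⟨h1, h2⟩, rfl⟩ := hx
      simp [Sum.elim_comp_inl_inr]
    · intro x _; simp
  · intro x hx
    simp only [Finset.coe_filter, Set.mem_ofPred_eq, Finset.mem_coe, mem_bx] at hx ⊢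
    exact fun i => hx.1 (Sum.inl i)

lemma pr_fubini_le {κ μ : Type*} [Fintype κ] [Fintype μ] (z : κ ⊕ μ → ℤ) {B : ℕ} (hB : 1 ≤ B)
    (P : (κ ⊕ μ → ℤ) → Prop) (c : ℝ)
    (h : ∀ a ∈ bx (z ∘ Sum.inl) B, pr (z ∘ Sum.inr) B (fun r => P (Sum.elim a r)) ≤ c) :
    pr z B P ≤ c := by
  classical
  have hB0 : (0 : ℝ) < B := by exact_mod_cast hB
  unfold pr at *
  rw [div_le_iff₀ (by positivity), card_sum, Nat.cast_sum, Fintype.card_sum, pow_add]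
  calc _ ≤ ∑ a ∈ bx (z ∘ Sum.inl) B, c * (2 * (B : ℝ)) ^ Fintype.card μ := by
        refine Finset.sum_le_sum fun a ha => ?_
        have := h a ha
        rwa [div_le_iff₀ (by positivity)] at this
    _ = _ := by
        rw [Finset.sum_const, card_bx, nsmul_eq_mul]; push_cast; ring

lemma pr_marg_sum {κ μ : Type*} [Fintype κ] [Fintype μ] (z : κ ⊕ μ → ℤ) {B : ℕ} (hB : 1 ≤ B)
    (P : (κ → ℤ) → Prop) : pr z B (fun x => P (x ∘ Sum.inl)) = pr (z ∘ Sum.inl) B P := by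
  classical
  have hB0 : (0 : ℝ) < B := by exact_mod_cast hB
  unfold pr
  rw [card_sum, Fintype.card_sum, pow_add]
  have : ∀ a, ((bx (z ∘ Sum.inr) B).filter (fun r => P (Sum.elim a r ∘ Sum.inl))).card =
      if P a then (2 * B) ^ Fintype.card μ else 0 := by
    intro a
    split_ifs with h
    · rw [Finset.filter_true_of_mem, card_bx]
      intro r _; rwa [Sum.elim_comp_inl]
    · rw [Finset.filter_false_of_mem, Finset.card_empty]
      intro r _; rwa [Sum.elim_comp_inl]
  simp only [this]
  rw [← Finset.sum_filter, Finset.sum_const, smul_eq_mul]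
  push_cast
  field_simp

lemma pr_marg {ι κ : Type*} [Fintype ι] [Fintype κ] (f : κ → ι) (hf : Function.Injective f)
    (z : ι → ℤ) {B : ℕ} (hB : 1 ≤ B) (P : (κ → ℤ) → Prop) :
    pr z B (fun x => P (x ∘ f)) = pr (z ∘ f) B P := by
  classical
  let e : κ ⊕ ↥(Set.range f)ᶜ ≃ ι :=
    ((Equiv.ofInjective f hf).sumCongr (Equiv.refl _)).trans (Equiv.Set.sumCompl (Set.range f))
  have he : ∀ k, e (Sum.inl k) = f k := by intro k; simp [e]
  rw [pr_reindex e]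
  have h1 : (fun y : (κ ⊕ ↥(Set.range f)ᶜ) → ℤ => P ((y ∘ e.symm) ∘ f)) = fun y => P (y ∘ Sum.inl) := by
    funext y
    congr 1
    funext k
    simp [← he]
  rw [h1, pr_marg_sum _ hB]
  congr 1

/- residue counts -/
noncomputable def rc (z : ℤ) (B N : ℕ) (r : ZMod N) : ℕ :=
  ((Finset.Ico (z - (B : ℤ)) (z + (B : ℤ))).filter (fun x : ℤ => (x : ZMod N) = r)).card

lemma rc_bounds (z : ℤ) (B N : ℕ) (hN : 1 ≤ N) (r : ZMod N) :
    (2 * B : ℝ) / N - 1 ≤ rc z B N r ∧ (rc z B N r : ℝ) ≤ (2 * B : ℝ) / N + 1 := by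
  have hN0 : (0 : ℝ) < N := by exact_mod_cast hN
  have : NeZero N := ⟨by omega⟩
  have h := Int.Ico_filter_modEq_card (z - (B : ℤ)) (z + (B : ℤ)) (r := N) (by exact_mod_cast hN) (r.val : ℤ)
  have h2 : rc z B N r = ((Finset.Ico (z - (B : ℤ)) (z + (B : ℤ))).filter (· ≡ (r.val : ℤ) [ZMOD N])).card := by
    unfold rc
    congr 1
    apply Finset.filter_congr
    intro x _
    rw [← ZMod.intCast_eq_intCast_iff]
    simp
  rw [← h2] at h
  set u : ℚ := (((z + (B : ℤ) : ℤ) : ℚ) - ((r.val : ℤ) : ℚ)) / ((N : ℤ) : ℚ) with hu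
  set w : ℚ := (((z - (B : ℤ) : ℤ) : ℚ) - ((r.val : ℤ) : ℚ)) / ((N : ℤ) : ℚ) with hw
  have hNq : (0 : ℚ) < N := by exact_mod_cast hN
  have huw : u - w = 2 * B / N := by
    rw [hu, hw]; push_cast; field_simp; ring
  have a1 := Int.le_ceil u
  have a2 := Int.ceil_lt_add_one u
  have a3 := Int.le_ceil w
  have a4 := Int.ceil_lt_add_one w
  have hq : (2 * B : ℚ) / N - 1 ≤ rc z B N r ∧ (rc z B N r : ℚ) ≤ (2 * B : ℚ) / N + 1 := by
    have h3 : (rc z B N r : ℚ) = max ((⌈u⌉ : ℚ) - ⌈w⌉) 0 := by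
      have := congrArg (fun t : ℤ => (t : ℚ)) h
      push_cast at this
      exact_mod_cast this
    have hnn : (0 : ℚ) ≤ 2 * B / N := by positivity
    rw [h3]
    constructor
    · refine le_trans ?_ (le_max_left _ _); linarith
    · apply max_le <;> linarith
  constructor
  · have := (Rat.cast_le (K := ℝ)).2 hq.1; push_cast at this; exact this
  · have := (Rat.cast_le (K := ℝ)).2 hq.2; push_cast at this; exact this

lemma rc_tendsto (z : ℤ) (N : ℕ) (hN : 1 ≤ N) (r : ZMod N) :
    Tendsto (fun B : ℕ => (rc z B N r : ℝ) / (2 * B)) atTop (nhds (1 / N)) := by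
  have hN0 : (0 : ℝ) < N := by exact_mod_cast hN
  have ht : Tendsto (fun B : ℕ => (1 : ℝ) / (2 * B)) atTop (nhds 0) := by
    have := (tendsto_one_div_atTop_nhds_zero_nat (𝕜 := ℝ)).const_mul (1 / 2)
    simp only [mul_zero] at this
    refine this.congr fun B => ?_
    ring
  have l1 : Tendsto (fun B : ℕ => (1 : ℝ) / N - 1 / (2 * B)) atTop (nhds (1 / N)) := by
    simpa using (tendsto_const_nhds (x := (1 : ℝ) / N)).sub ht
  have l2 : Tendsto (fun B : ℕ => (1 : ℝ) / N + 1 / (2 * B)) atTop (nhds (1 / N)) := by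
    simpa using (tendsto_const_nhds (x := (1 : ℝ) / N)).add ht
  refine tendsto_of_tendsto_of_tendsto_of_le_of_le' l1 l2 ?_ ?_
  all_goals
    filter_upwards [eventually_ge_atTop 1] with B hB
    have hB0 : (0 : ℝ) < B := by exact_mod_cast hB
    obtain ⟨h1, h2⟩ := rc_bounds z B N hN r
  · rw [le_div_iff₀ (by positivity)]
    refine le_trans (le_of_eq ?_) h1
    field_simp
  · rw [div_le_iff₀ (by positivity)]
    refine h2.trans (le_of_eq ?_)
    field_simp

open Classical in
lemma pr_mod {ι : Type*} [Fintype ι] (z : ι → ℤ) (B N : ℕ) [NeZero N] (Q : (ι → ZMod N) → Prop) :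
    pr z B (fun x => Q (fun i => (x i : ZMod N))) =
      ∑ r ∈ Finset.univ.filter Q, ∏ i, ((rc (z i) B N (r i) : ℝ) / (2 * B)) := by
  unfold pr
  rw [Finset.card_eq_sum_card_fiberwise (f := fun x i => (x i : ZMod N)) (t := Finset.univ.filter Q),
    Nat.cast_sum, Finset.sum_div]
  · refine Finset.sum_congr rfl fun r hr => ?_
    rw [Finset.prod_div_distrib, Finset.prod_const, Finset.card_univ]
    congr 1
    rw [← Nat.cast_prod]
    congr 1
    unfold rc
    rw [← Fintype.card_piFinset]
    congr 1
    ext x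
    simp only [Finset.mem_filter, Finset.mem_univ, true_and, mem_bx, Fintype.mem_piFinset, Finset.mem_Ico] at hr ⊢
    constructor
    · rintro ⟨⟨h1, h2⟩, h3⟩ i
      exact ⟨h1 i, congrFun h3 i⟩
    · intro h
      have h3 : (fun i => (x i : ZMod N)) = r := funext fun i => (h i).2
      exact ⟨⟨fun i => (h i).1, by rw [h3]; exact hr⟩, h3⟩
  · intro x hx
    simp only [Finset.coe_filter, Set.mem_ofPred_eq, Finset.mem_univ, true_and] at hx ⊢
    exact hx.2

lemma pr_mod_tendsto {ι : Type*} [Fintype ι] (z : ι → ℤ) (N : ℕ) (hN : 1 ≤ N) (Q : (ι → ZMod N) → Prop) :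
    Tendsto (fun B : ℕ => pr z B (fun x => Q (fun i => (x i : ZMod N)))) atTop
      (nhds ((Nat.card {r // Q r} : ℝ) / (N : ℝ) ^ Fintype.card ι)) := by
  classical
  have : NeZero N := ⟨by omega⟩
  have h : Tendsto (fun B : ℕ => ∑ r ∈ Finset.univ.filter Q, ∏ i, ((rc (z i) B N (r i) : ℝ) / (2 * B)))
    atTop (nhds (∑ r ∈ Finset.univ.filter Q, ∏ i : ι, ((1 : ℝ) / N))) :=
    tendsto_finsetSum _ fun r _ => tendsto_finsetProd _ fun i _ => rc_tendsto (z i) N hN (r i)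
  have e : (∑ r ∈ Finset.univ.filter Q, ∏ i : ι, ((1 : ℝ) / N)) = (Nat.card {r // Q r} : ℝ) / (N : ℝ) ^ Fintype.card ι := by
    rw [Finset.sum_const, Finset.prod_const, Nat.card_eq_fintype_card, Fintype.card_subtype, Finset.card_univ,
      nsmul_eq_mul]
    simp [div_eq_mul_inv]
  rw [e] at h
  exact h.congr fun B => (pr_mod z B N Q).symm

lemma pr_mod_le {ι : Type*} [Fintype ι] (z : ι → ℤ) (B N : ℕ) (hN : 1 ≤ N) (hNB : N ≤ 2 * B)
    (Q : (ι → ZMod N) → Prop) :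
    pr z B (fun x => Q (fun i => (x i : ZMod N))) ≤
      2 ^ Fintype.card ι * ((Nat.card {r // Q r} : ℝ) / (N : ℝ) ^ Fintype.card ι) := by
  classical
  have : NeZero N := ⟨by omega⟩
  have hN0 : (0 : ℝ) < N := by exact_mod_cast hN
  have hB0 : (0 : ℝ) < B := by
    have : 0 < B := by omega
    exact_mod_cast this
  have hNB' : (N : ℝ) ≤ 2 * B := by exact_mod_cast hNB
  rw [pr_mod]
  calc _ ≤ ∑ r ∈ Finset.univ.filter Q, ∏ i : ι, ((2 : ℝ) / N) := by
        refine Finset.sum_le_sum fun r _ => Finset.prod_le_prod (fun i _ => by positivity) fun i _ => ?_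
        have h2 := (rc_bounds (z i) B N hN (r i)).2
        rw [div_le_iff₀ (by positivity)]
        refine h2.trans ?_
        rw [div_mul_eq_mul_div, ← sub_nonneg]
        have : (2 : ℝ) * (2 * B) / N - (2 * B / N + 1) = (2 * B - N) / N := by field_simp; ring
        rw [this]
        apply div_nonneg <;> linarith
    _ = _ := by
        rw [Finset.sum_const, Finset.prod_const, Nat.card_eq_fintype_card, Fintype.card_subtype, Finset.card_univ,
          nsmul_eq_mul, div_pow]
        ring

def LId {k a : ℕ} (p : ℕ) (r : Fin k × Fin a → ZMod p) : Prop :=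
  LinearIndependent (ZMod p) (fun (j : Fin k) (i : Fin a) => r (j, i))

def LI {k a : ℕ} (p : ℕ) (x : Fin k × Fin a → ℤ) : Prop :=
  LId p (fun t => (x t : ZMod p))

noncomputable def loc (k a p : ℕ) : ℝ := ∏ i : Fin k, (1 - (p : ℝ) ^ (i : ℕ) / (p : ℝ) ^ a)

lemma card_LId {k a : ℕ} (hka : k ≤ a) (p : ℕ) (hp : p.Prime) :
    (Nat.card {r : Fin k × Fin a → ZMod p // LId p r} : ℝ) / (p : ℝ) ^ (k * a) = loc k a p := by
  have : Fact p.Prime := ⟨hp⟩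
  have hp0 : (0 : ℝ) < p := by exact_mod_cast hp.pos
  have e : Nat.card {r : Fin k × Fin a → ZMod p // LId p r} =
      Nat.card {s : Fin k → (Fin a → ZMod p) // LinearIndependent (ZMod p) s} := by
    refine Nat.card_congr ((Equiv.curry (Fin k) (Fin a) (ZMod p)).subtypeEquiv fun r => ?_)
    rfl
  have hc := card_linearIndependent (K := ZMod p) (V := Fin a → ZMod p) (k := k) (by simpa using hka)
  rw [e, hc]
  simp only [ZMod.card, Module.finrank_fin_fun]
  rw [loc, mul_comm, pow_mul, Nat.cast_prod]
  rw [show (((p : ℝ) ^ a) ^ k) = ∏ i : Fin k, (p : ℝ) ^ a by simp, ← Finset.prod_div_distrib]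
  refine Finset.prod_congr rfl fun i _ => ?_
  rw [Nat.cast_sub (Nat.pow_le_pow_right hp.pos (by omega))]
  push_cast
  field_simp

lemma one_sub_prod_le {α : Type*} (s : Finset α) (x : α → ℝ) (h0 : ∀ i ∈ s, 0 ≤ x i) (h1 : ∀ i ∈ s, x i ≤ 1) :
    1 - ∏ i ∈ s, (1 - x i) ≤ ∑ i ∈ s, x i := by
  classical
  induction s using Finset.induction_on with
  | empty => simp
  | insert a s ha ih =>
    rw [Finset.prod_insert ha, Finset.sum_insert ha]
    have ih' := ih (fun i hi => h0 i (Finset.mem_insert_of_mem hi)) (fun i hi => h1 i (Finset.mem_insert_of_mem hi))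
    have hP : ∏ i ∈ s, (1 - x i) ≤ 1 := Finset.prod_le_one
      (fun i hi => by have := h1 i (Finset.mem_insert_of_mem hi); linarith)
      (fun i hi => by have := h0 i (Finset.mem_insert_of_mem hi); linarith)
    have ha0 := h0 a (Finset.mem_insert_self _ _)
    nlinarith

lemma card_not_LId {k a : ℕ} (hka : k ≤ a) (p : ℕ) (hp : p.Prime) :
    (Nat.card {r : Fin k × Fin a → ZMod p // ¬ LId p r} : ℝ) / (p : ℝ) ^ (k * a) ≤
      ∑ i : Fin k, (p : ℝ) ^ (i : ℕ) / (p : ℝ) ^ a := by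
  classical
  have : Fact p.Prime := ⟨hp⟩
  have hp0 : (0 : ℝ) < p := by exact_mod_cast hp.pos
  have hp1 : (1 : ℝ) ≤ p := by exact_mod_cast hp.one_le
  have h1 := card_LId hka p hp
  have h2 : (Nat.card {r : Fin k × Fin a → ZMod p // LId p r} : ℝ) +
      (Nat.card {r : Fin k × Fin a → ZMod p // ¬ LId p r} : ℝ) = (p : ℝ) ^ (k * a) := by
    rw [Nat.card_eq_fintype_card, Nat.card_eq_fintype_card]
    have := Fintype.card_congr (Equiv.sumCompl (fun r : Fin k × Fin a → ZMod p => LId p r))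
    rw [Fintype.card_sum] at this
    simp only [Fintype.card_fun, ZMod.card, Fintype.card_prod, Fintype.card_fin] at this
    exact_mod_cast this
  have h3 : (Nat.card {r : Fin k × Fin a → ZMod p // ¬ LId p r} : ℝ) / (p : ℝ) ^ (k * a) = 1 - loc k a p := by
    rw [← h1, ← h2]
    have : (0 : ℝ) < (p : ℝ) ^ (k * a) := by positivity
    rw [← h2] at this
    field_simp
    ring
  rw [h3, loc]
  refine one_sub_prod_le _ _ (fun i _ => by positivity) fun i _ => ?_
  rw [div_le_one (by positivity)]
  exact pow_le_pow_right₀ hp1 (by omega)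

lemma pr_not_LI {k a s : ℕ} (hka : k + s = a + 1) (hs : 1 ≤ s) (p : ℕ) (hp : p.Prime)
    (z : Fin k × Fin a → ℤ) (B : ℕ) (hB : p ≤ 2 * B) :
    pr z B (fun x => ¬ LI p x) ≤ 2 ^ (k * a) * (k / (p : ℝ) ^ s) := by
  have hp0 : (0 : ℝ) < p := by exact_mod_cast hp.pos
  have hp1 : (1 : ℝ) ≤ p := by exact_mod_cast hp.one_le
  have h := pr_mod_le z B p hp.one_le hB (fun r => ¬ LId p r)
  simp only [Fintype.card_prod, Fintype.card_fin] at h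
  refine h.trans ?_
  refine mul_le_mul_of_nonneg_left ?_ (by positivity)
  refine (card_not_LId (by omega) p hp).trans ?_
  calc _ ≤ ∑ i : Fin k, 1 / (p : ℝ) ^ s := by
        refine Finset.sum_le_sum fun i _ => ?_
        rw [div_le_div_iff₀ (by positivity) (by positivity), one_mul, ← pow_add]
        exact pow_le_pow_right₀ hp1 (by omega)
    _ = _ := by simp [div_eq_mul_inv]

lemma not_LI_of_det {m : ℕ} (x : Fin m × Fin m → ℤ) (p : ℕ) (hp : p.Prime) :
    ¬ LI p x ↔ (p : ℤ) ∣ (Matrix.of fun j i => x (j, i)).det := by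
  have : Fact p.Prime := ⟨hp⟩
  have h := Matrix.linearIndependent_rows_iff_isUnit (K := ZMod p) (A := (Matrix.of fun j i => (x (j, i) : ZMod p)))
  have e : (Matrix.of fun j i => (x (j, i) : ZMod p)) = (Matrix.of fun j i => x (j, i)).map (Int.castRingHom (ZMod p)) := by
    ext; simp
  have h2 : LI p x ↔ LinearIndependent (ZMod p) (Matrix.of fun j i => (x (j, i) : ZMod p)).row := Iff.rfl
  rw [h2, h, Matrix.isUnit_iff_isUnit_det, isUnit_iff_ne_zero, not_not, e, ← RingHom.mapMatrix_apply, ← RingHom.map_det,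
    eq_intCast, ZMod.intCast_zmod_eq_zero_iff_dvd]

lemma pr_det_zero {m : ℕ} (z : Fin m × Fin m → ℤ) :
    Tendsto (fun B => pr z B (fun x => (Matrix.of fun j i => x (j, i)).det = 0)) atTop (nhds 0) := by
  rw [Metric.tendsto_atTop]
  intro ε hε
  obtain ⟨N, hN⟩ := exists_nat_gt ((2 : ℝ) ^ (m * m) * m / ε)
  obtain ⟨q, hq1, hq⟩ := Nat.exists_infinite_primes (N + 1)
  have hq0 : (0 : ℝ) < q := by exact_mod_cast hq.pos
  refine ⟨q, fun B hB => ?_⟩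
  rw [Real.dist_0_eq_abs, abs_of_nonneg (pr_nonneg _ _ _)]
  calc _ ≤ pr z B (fun x => ¬ LI q x) := pr_mono fun x _ hx => by
        rw [not_LI_of_det x q hq, hx]; exact dvd_zero _
    _ ≤ _ := pr_not_LI (s := 1) rfl le_rfl q hq z B (by omega)
    _ < ε := by
        rw [pow_one, ← mul_div_assoc, div_lt_iff₀ hq0]
        rw [div_lt_iff₀ hε] at hN
        have : (N : ℝ) ≤ q := by exact_mod_cast (by omega : N ≤ q)
        nlinarith

lemma pr_hyper {k : ℕ} (z : Fin k → ℤ) {B : ℕ} (hB : 1 ≤ B) (p : ℕ) (hp : p.Prime) (hpB : 2 * B ≤ p)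
    (v : Fin k → ZMod p) (hv : v ≠ 0) :
    pr z B (fun r => ∑ j, v j * (r j : ZMod p) = 0) ≤ 1 / (2 * B) := by
  classical
  have : Fact p.Prime := ⟨hp⟩
  have hB0 : (0 : ℝ) < B := by exact_mod_cast hB
  obtain ⟨j0, hj0⟩ := Function.ne_iff.1 hv
  let f : {j // j ≠ j0} → Fin k := Subtype.val
  have hk : k = Fintype.card {j : Fin k // j ≠ j0} + 1 := by
    have := j0.pos
    simp; omega
  unfold pr
  have hc : ((bx z B).filter (fun r => ∑ j, v j * (r j : ZMod p) = 0)).card ≤ (bx (z ∘ f) B).card := by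
    refine Finset.card_le_card_of_injOn (fun r => r ∘ f) ?_ ?_
    · intro r hr
      simp only [Finset.coe_filter, Set.mem_ofPred_eq, Finset.mem_coe, mem_bx] at hr ⊢
      exact fun i => hr.1 (f i)
    · intro r hr s hs hrs
      simp only [Finset.coe_filter, Set.mem_ofPred_eq, mem_bx] at hr hs
      have hne : ∀ j, j ≠ j0 → r j = s j := fun j hj => congrFun hrs ⟨j, hj⟩
      have h0 : v j0 * ((r j0 : ZMod p) - (s j0 : ZMod p)) = 0 := by
        have h1 : ∑ j, v j * ((r j : ZMod p) - (s j : ZMod p)) = 0 := by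
          simp only [mul_sub, Finset.sum_sub_distrib]
          rw [hr.2, hs.2, sub_zero]
        rw [Finset.sum_eq_single j0] at h1
        · exact h1
        · intro j _ hj; rw [hne j hj, sub_self, mul_zero]
        · simp
      have h2 : (r j0 : ZMod p) - (s j0 : ZMod p) = 0 := by
        rcases mul_eq_zero.1 h0 with h | h
        · exact absurd h hj0
        · exact h
      have h3 : (p : ℤ) ∣ r j0 - s j0 := by
        rw [← ZMod.intCast_zmod_eq_zero_iff_dvd]; push_cast; exact h2
      have h4 : r j0 - s j0 = 0 := by
        apply Int.eq_zero_of_abs_lt_dvd h3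
        have a1 := hr.1 j0
        have a2 := hs.1 j0
        rw [abs_lt]; constructor <;> omega
      funext j
      by_cases hj : j = j0
      · subst hj; omega
      · exact hne j hj
  rw [card_bx] at hc
  have hc' : ((((bx z B).filter (fun r => ∑ j, v j * (r j : ZMod p) = 0)).card : ℕ) : ℝ) ≤
      (2 * B : ℝ) ^ Fintype.card {j : Fin k // j ≠ j0} := by exact_mod_cast hc
  rw [Fintype.card_fin, div_le_div_iff₀ (by positivity) (by positivity)]
  have : (2 * B : ℝ) ^ k = (2 * B : ℝ) ^ Fintype.card {j : Fin k // j ≠ j0} * (2 * B) := by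
    rw [← pow_succ, ← hk]
  rw [this, one_mul]
  refine mul_le_mul_of_nonneg_right ?_ (by positivity)
  refine le_trans (le_of_eq ?_) hc'
  congr

lemma not_LI_iff {k a : ℕ} (p : ℕ) (x : Fin k × Fin a → ℤ) :
    ¬ LI p x ↔ ∃ v : Fin k → ZMod p, v ≠ 0 ∧ ∀ i, ∑ j, v j * (x (j, i) : ZMod p) = 0 := by
  unfold LI LId
  rw [Fintype.not_linearIndependent_iff]
  constructor
  · rintro ⟨g, h, i, hi⟩
    refine ⟨g, fun h => hi (by rw [h]; rfl), fun i => ?_⟩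
    have := congrFun h i
    simpa [Finset.sum_apply] using this
  · rintro ⟨v, hv, h⟩
    obtain ⟨j, hj⟩ := Function.ne_iff.1 hv
    refine ⟨v, ?_, j, hj⟩
    funext i
    simpa [Finset.sum_apply] using h i

lemma hyper_exists {m : ℕ} (a : Fin (m + 1) × Fin (m + 1) → ℤ) (p : ℕ) (hp : p.Prime)
    (h : LI p (fun t : Fin m × Fin (m + 1) => a (t.1.castSucc, t.2))) :
    ∃ v : Fin (m + 1) → ZMod p, v ≠ 0 ∧ ∀ v' : Fin (m + 1) → ZMod p, v' ≠ 0 →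
      (∀ i, ∑ j, v' j * (a (j, i) : ZMod p) = 0) → ∀ r : Fin (m + 1) → ℤ,
      ∑ j, v' j * (r j : ZMod p) = 0 → ∑ j, v j * (r j : ZMod p) = 0 := by
  have : Fact p.Prime := ⟨hp⟩
  have key : ∀ w : Fin (m + 1) → ZMod p, w (Fin.last m) = 0 → (∀ i, ∑ j, w j * (a (j, i) : ZMod p) = 0) → w = 0 := by
    intro w hw hk
    by_contra hne
    have h' : ¬ ¬ LI p (fun t : Fin m × Fin (m + 1) => a (t.1.castSucc, t.2)) := not_not.2 h
    rw [not_LI_iff] at h'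
    apply h'
    refine ⟨fun j => w j.castSucc, ?_, fun i => ?_⟩
    · intro h0
      apply hne
      funext j
      refine Fin.lastCases hw (fun j => congrFun h0 j) j
    · have := hk i
      rw [Fin.sum_univ_castSucc, hw] at this
      simpa using this
  by_cases hex : ∃ v : Fin (m + 1) → ZMod p, v ≠ 0 ∧ ∀ i, ∑ j, v j * (a (j, i) : ZMod p) = 0
  · obtain ⟨v, hv, hk⟩ := hex
    refine ⟨v, hv, fun v' hv' hk' r hr => ?_⟩
    have hz : ∀ j, v' (Fin.last m) * v j = v (Fin.last m) * v' j := by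
      have := key (fun j => v' (Fin.last m) * v j - v (Fin.last m) * v' j) (by ring) (fun i => by
        have e : ∑ j, (v' (Fin.last m) * v j - v (Fin.last m) * v' j) * (a (j, i) : ZMod p) =
          v' (Fin.last m) * ∑ j, v j * (a (j, i) : ZMod p) - v (Fin.last m) * ∑ j, v' j * (a (j, i) : ZMod p) := by
          rw [Finset.mul_sum, Finset.mul_sum, ← Finset.sum_sub_distrib]
          exact Finset.sum_congr rfl fun j _ => by ring
        rw [e, hk, hk']; ring)
      intro j
      exact sub_eq_zero.1 (congrFun this j)
    have hl : v' (Fin.last m) ≠ 0 := fun h0 => hv' (key v' h0 hk')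
    have : v' (Fin.last m) * ∑ j, v j * (r j : ZMod p) = 0 := by
      calc _ = ∑ j, (v' (Fin.last m) * v j) * (r j : ZMod p) := by
            rw [Finset.mul_sum]; exact Finset.sum_congr rfl fun j _ => by ring
        _ = v (Fin.last m) * ∑ j, v' j * (r j : ZMod p) := by
            rw [Finset.mul_sum]; exact Finset.sum_congr rfl fun j _ => by rw [hz]; ring
        _ = 0 := by rw [hr, mul_zero]
    exact (mul_eq_zero.1 this).resolve_left hl
  · refine ⟨fun _ => 1, fun h => one_ne_zero (congrFun h 0), fun v' hv' hk' => ?_⟩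
    exact absurd ⟨v', hv', hk'⟩ hex

lemma card_big_primes_s13 {m B : ℕ} (hB : (m + 1).factorial < 2 * B) (d : ℤ) (hd : d ≠ 0)
    (hle : |d| ≤ (m + 1).factorial * (2 * B : ℤ) ^ (m + 1)) :
    (d.natAbs.primeFactors.filter (fun p => 2 * B < p)).card ≤ m + 1 := by
  set S := d.natAbs.primeFactors.filter (fun p => 2 * B < p) with hS
  by_contra hcon
  have h1 : (2 * B) ^ S.card ≤ ∏ p ∈ S, p := by
    rw [← Finset.prod_const]
    refine Finset.prod_le_prod' fun p hp => ?_
    exact (Finset.mem_filter.1 hp).2.le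
  have h2 : ∏ p ∈ S, p ≤ d.natAbs := by
    apply Nat.le_of_dvd (Int.natAbs_pos.2 hd)
    refine dvd_trans ?_ (Nat.prod_primeFactors_dvd d.natAbs)
    exact Finset.prod_dvd_prod_of_subset _ _ _ (Finset.filter_subset _ _)
  have h3 : (2 * B) ^ (m + 2) ≤ (2 * B) ^ S.card := Nat.pow_le_pow_right (by omega) (by omega)
  have h4 : d.natAbs ≤ (m + 1).factorial * (2 * B) ^ (m + 1) := by
    zify; exact hle
  have h5 : (m + 1).factorial * (2 * B) ^ (m + 1) < (2 * B) ^ (m + 2) := by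
    rw [pow_succ (2 * B) (m + 1), mul_comm]
    exact Nat.mul_lt_mul_of_pos_left hB (by have : 0 < 2 * B := by omega
                                            positivity)
  omega

def Big {k a : ℕ} (B : ℕ) (x : Fin k × Fin a → ℤ) : Prop := ∃ p : ℕ, p.Prime ∧ 2 * B < p ∧ ¬ LI p x

noncomputable def eSum (m : ℕ) : (Fin (m + 1) × Fin (m + 1)) ⊕ Fin (m + 1) ≃ Fin (m + 1) × Fin (m + 2) :=
  Equiv.ofBijective (Sum.elim (fun t => (t.1, t.2.castSucc)) (fun j => (j, Fin.last (m + 1)))) (by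
    constructor
    · rintro (⟨a, b⟩ | a) (⟨c, d⟩ | c) h
      · simp only [Sum.elim_inl, Prod.mk.injEq, Fin.castSucc_inj] at h
        rw [h.1, h.2]
      · simp only [Sum.elim_inl, Sum.elim_inr, Prod.mk.injEq] at h
        exact absurd h.2 (Fin.castSucc_lt_last b).ne
      · simp only [Sum.elim_inl, Sum.elim_inr, Prod.mk.injEq] at h
        exact absurd h.2 (Fin.castSucc_lt_last d).ne'
      · simp only [Sum.elim_inr, Prod.mk.injEq] at h
        rw [h.1]
    · rintro ⟨j, i⟩
      refine Fin.lastCases ⟨Sum.inr j, rfl⟩ (fun i => ⟨Sum.inl (j, i), rfl⟩) i)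

lemma pr_E {m : ℕ} (z : Fin (m + 1) × Fin (m + 2) → ℤ) {B : ℕ} (hB : (m + 1).factorial < 2 * B)
    (hz : ∀ t, |z t| ≤ B) :
    pr z B (fun x => (Matrix.of fun (j i : Fin (m + 1)) => x (j, i.castSucc)).det ≠ 0 ∧
      ∃ p : ℕ, p.Prime ∧ 2 * B < p ∧ LI p (fun t : Fin m × Fin (m + 1) => x (t.1.castSucc, t.2.castSucc)) ∧
        ¬ LI p x) ≤ (m + 1) / (2 * B) := by
  have hB1 : 1 ≤ B := by
    by_contra h
    have : B = 0 := by omega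
    simp [this] at hB
  have hB0 : (0 : ℝ) < B := by exact_mod_cast hB1
  rw [pr_reindex (eSum m)]
  refine pr_fubini_le _ hB1 _ _ fun a ha => ?_
  have hl : ∀ r : Fin (m + 1) → ℤ, ∀ j i, (Sum.elim a r ∘ (eSum m).symm) (j, Fin.castSucc i) = a (j, i) := by
    intro r j i
    have : (eSum m).symm (j, Fin.castSucc i) = Sum.inl (j, i) := by
      rw [Equiv.symm_apply_eq]; rfl
    simp [this]
  have hr : ∀ r : Fin (m + 1) → ℤ, ∀ j, (Sum.elim a r ∘ (eSum m).symm) (j, Fin.last (m + 1)) = r j := by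
    intro r j
    have : (eSum m).symm (j, Fin.last (m + 1)) = Sum.inr j := by
      rw [Equiv.symm_apply_eq]; rfl
    simp [this]
  set d := (Matrix.of fun (j i : Fin (m + 1)) => a (j, i)).det with hd
  by_cases hd0 : d = 0
  · have : pr ((z ∘ eSum m) ∘ Sum.inr) B (fun r => (Matrix.of fun (j i : Fin (m + 1)) =>
      (Sum.elim a r ∘ (eSum m).symm) (j, i.castSucc)).det ≠ 0 ∧
      ∃ p : ℕ, p.Prime ∧ 2 * B < p ∧ LI p (fun t : Fin m × Fin (m + 1) => (Sum.elim a r ∘ (eSum m).symm) (t.1.castSucc, t.2.castSucc)) ∧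
        ¬ LI p (Sum.elim a r ∘ (eSum m).symm)) ≤ ∑ a ∈ (∅ : Finset ℕ), 0 :=
      pr_union (∅ : Finset ℕ) (fun _ _ => False) (by
        intro r _ h
        exfalso
        apply h.1
        simp only [hl]
        exact hd0) |>.trans (by simp)
    refine this.trans ?_
    simp only [Finset.sum_empty]
    positivity
  have hcard : (d.natAbs.primeFactors.filter (fun p => 2 * B < p)).card ≤ m + 1 := by
    refine card_big_primes_s13 hB d hd0 ?_
    have := Matrix.det_le (R := ℤ) (S := ℤ) (A := Matrix.of fun (j i : Fin (m + 1)) => a (j, i)) (abv := AbsoluteValue.abs)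
      (x := 2 * B) (fun i j => by
        have h1 := mem_bx.1 ha (i, j)
        have h2 := hz ((eSum m) (Sum.inl (i, j)))
        simp only [Function.comp] at h1
        simp only [Matrix.of_apply, AbsoluteValue.abs_apply]
        rw [abs_le] at h2 ⊢
        constructor <;> omega)
    simpa using this
  have hu := pr_union (z := (z ∘ eSum m) ∘ Sum.inr) (B := B) (P := fun r => (Matrix.of fun (j i : Fin (m + 1)) =>
      (Sum.elim a r ∘ (eSum m).symm) (j, i.castSucc)).det ≠ 0 ∧
      ∃ p : ℕ, p.Prime ∧ 2 * B < p ∧ LI p (fun t : Fin m × Fin (m + 1) => (Sum.elim a r ∘ (eSum m).symm) (t.1.castSucc, t.2.castSucc)) ∧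
        ¬ LI p (Sum.elim a r ∘ (eSum m).symm))
      (d.natAbs.primeFactors.filter (fun p => 2 * B < p))
      (fun p r => LI p (fun t : Fin m × Fin (m + 1) => a (t.1.castSucc, t.2)) ∧
        ∃ v' : Fin (m + 1) → ZMod p, v' ≠ 0 ∧ (∀ i, ∑ j, v' j * (a (j, i) : ZMod p) = 0) ∧
          ∑ j, v' j * (r j : ZMod p) = 0) (by
        rintro r _ ⟨_, p, hp, hpB, h1, h2⟩
        rw [not_LI_iff] at h2
        obtain ⟨v, hv, h2⟩ := h2
        simp only [hl] at h1
        have h3 : ∀ i, ∑ j, v j * (a (j, i) : ZMod p) = 0 := by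
          intro i
          have := h2 (Fin.castSucc i)
          simpa only [hl] using this
        have h4 : ∑ j, v j * (r j : ZMod p) = 0 := by
          have := h2 (Fin.last _)
          simpa only [hr] using this
        refine ⟨p, ?_, h1, v, hv, h3, h4⟩
        have h5 := (not_LI_of_det a p hp).1 ((not_LI_iff p a).2 ⟨v, hv, h3⟩)
        simp only [Finset.mem_filter, Nat.mem_primeFactors]
        refine ⟨⟨hp, Int.natCast_dvd.1 h5, Int.natAbs_ne_zero.2 hd0⟩, hpB⟩)
  refine hu.trans ?_
  refine (Finset.sum_le_card_nsmul _ _ (1 / (2 * B : ℝ)) ?_).trans ?_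
  · intro p hp
    simp only [Finset.mem_filter, Nat.mem_primeFactors] at hp
    by_cases h : LI p (fun t : Fin m × Fin (m + 1) => a (t.1.castSucc, t.2))
    · obtain ⟨v, hv, hv2⟩ := hyper_exists a p hp.1.1 h
      refine (pr_mono ?_).trans (pr_hyper ((z ∘ eSum m) ∘ Sum.inr) hB1 p hp.1.1 hp.2.le v hv)
      rintro r _ ⟨_, v', a1, a2, a3⟩
      exact hv2 v' a1 a2 r a3
    · refine (pr_union (∅ : Finset ℕ) (fun _ _ => False) ?_).trans ?_
      · intro r _ h'; exact absurd h'.1 h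
      · simp
  · rw [nsmul_eq_mul, mul_one_div]
    gcongr
    exact_mod_cast hcard

lemma pr_Big (m : ℕ) : ∀ z : Fin m × Fin (m + 1) → ℤ,
    Tendsto (fun B => pr z B (Big B)) atTop (nhds 0) := by
  induction m with
  | zero =>
    intro z
    have : ∀ B, pr z B (Big B) = 0 := by
      intro B
      apply le_antisymm _ (pr_nonneg _ _ _)
      refine (pr_union (∅ : Finset ℕ) (fun _ _ => False) ?_).trans (by simp)
      rintro x _ ⟨p, _, _, h⟩
      rw [not_LI_iff] at h
      obtain ⟨v, hv, _⟩ := h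
      exact absurd (Subsingleton.elim _ _) hv
    simp only [this]
    exact tendsto_const_nhds
  | succ m ih =>
    intro z
    let f1 : Fin (m + 1) × Fin (m + 1) → Fin (m + 1) × Fin (m + 2) := fun t => (t.1, t.2.castSucc)
    let f0 : Fin m × Fin (m + 1) → Fin (m + 1) × Fin (m + 2) := fun t => (t.1.castSucc, t.2.castSucc)
    have hf1 : Function.Injective f1 := by
      rintro ⟨a, b⟩ ⟨c, d⟩ h
      simp only [f1, Prod.mk.injEq, Fin.castSucc_inj] at h
      rw [h.1, h.2]
    have hf0 : Function.Injective f0 := by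
      rintro ⟨a, b⟩ ⟨c, d⟩ h
      simp only [f0, Prod.mk.injEq, Fin.castSucc_inj] at h
      rw [h.1, h.2]
    have ht : Tendsto (fun B : ℕ => ((m : ℝ) + 1) / (2 * B)) atTop (nhds 0) := by
      have := (tendsto_one_div_atTop_nhds_zero_nat (𝕜 := ℝ)).const_mul (((m : ℝ) + 1) / 2)
      simp only [mul_zero] at this
      refine this.congr fun B => ?_
      ring
    have hlim := ((pr_det_zero (z ∘ f1)).add (ih (z ∘ f0))).add ht
    simp only [add_zero] at hlim
    refine tendsto_of_tendsto_of_tendsto_of_le_of_le' tendsto_const_nhds hlim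
      (Eventually.of_forall fun B => pr_nonneg _ _ _) ?_
    obtain ⟨K, hK⟩ : ∃ K : ℕ, ∀ t, |z t| ≤ K := by
      refine ⟨∑ t, (z t).natAbs, fun t => ?_⟩
      have := Finset.single_le_sum (f := fun t => (z t).natAbs) (fun _ _ => Nat.zero_le _) (Finset.mem_univ t)
      zify at this
      simpa using this
    filter_upwards [eventually_ge_atTop (K + (m + 1).factorial + 1)] with B hB
    have hB1 : 1 ≤ B := by omega
    rw [← pr_marg f1 hf1 z hB1, ← pr_marg f0 hf0 z hB1]
    have hE := pr_E z (B := B) (by omega) (fun t => (hK t).trans (by exact_mod_cast (by omega : K ≤ B)))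
    refine le_trans (pr_or (Q := fun x => (Matrix.of fun j i => (x ∘ f1) (j, i)).det = 0 ∨ Big B (x ∘ f0))
      (R := fun x => (Matrix.of fun (j i : Fin (m + 1)) => x (j, i.castSucc)).det ≠ 0 ∧
      ∃ p : ℕ, p.Prime ∧ 2 * B < p ∧ LI p (fun t : Fin m × Fin (m + 1) => x (t.1.castSucc, t.2.castSucc)) ∧
        ¬ LI p x) ?_) (add_le_add (pr_or fun x _ h => h) hE)
    rintro x _ ⟨p, hp, hpB, hL⟩
    by_cases h1 : (Matrix.of fun (j i : Fin (m + 1)) => x (j, i.castSucc)).det = 0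
    · exact Or.inl (Or.inl h1)
    by_cases h2 : LI p (fun t : Fin m × Fin (m + 1) => x (t.1.castSucc, t.2.castSucc))
    · exact Or.inr ⟨h1, p, hp, hpB, h2, hL⟩
    · exact Or.inl (Or.inr ⟨p, hp, hpB, h2⟩)

lemma pr_tail {m : ℕ} (z : Fin m × Fin (m + 1) → ℤ) (B M : ℕ) :
    pr z B (fun x => ∃ p : ℕ, p.Prime ∧ M < p ∧ ¬ LI p x) ≤
      (2 ^ (m * (m + 1)) * m) * (2 / (M + 1)) + pr z B (Big B) := by
  refine (pr_or (Q := fun x => ∃ p ∈ (Finset.Ioo M (2 * B + 1)).filter Nat.Prime, ¬ LI p x) (R := Big B) ?_).trans ?_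
  · rintro x _ ⟨p, hp, hM, h⟩
    by_cases hB : 2 * B < p
    · exact Or.inr ⟨p, hp, hB, h⟩
    · refine Or.inl ⟨p, ?_, h⟩
      simp only [Finset.mem_filter, Finset.mem_Ioo]
      exact ⟨⟨hM, by omega⟩, hp⟩
  · gcongr
    refine (pr_union ((Finset.Ioo M (2 * B + 1)).filter Nat.Prime) (fun p x => ¬ LI p x) (fun x _ h => h)).trans ?_
    calc _ ≤ ∑ p ∈ (Finset.Ioo M (2 * B + 1)).filter Nat.Prime, (2 ^ (m * (m + 1)) * m) * ((p : ℝ) ^ 2)⁻¹ := by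
          refine Finset.sum_le_sum fun p hp => ?_
          simp only [Finset.mem_filter, Finset.mem_Ioo] at hp
          refine (pr_not_LI (s := 2) rfl (by norm_num) p hp.2 z B (by omega)).trans (le_of_eq ?_)
          rw [div_eq_mul_inv, mul_assoc]
      _ ≤ ∑ p ∈ Finset.Ioo M (2 * B + 1), (2 ^ (m * (m + 1)) * m) * ((p : ℝ) ^ 2)⁻¹ :=
          Finset.sum_le_sum_of_subset_of_nonneg (Finset.filter_subset _ _) fun _ _ _ => by positivity
      _ = (2 ^ (m * (m + 1)) * m) * ∑ p ∈ Finset.Ioo M (2 * B + 1), ((p : ℝ) ^ 2)⁻¹ := by rw [Finset.mul_sum]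
      _ ≤ _ := by
          gcongr
          exact sum_Ioo_inv_sq_le M (2 * B + 1)

lemma pr_finite {k a : ℕ} (hka : k ≤ a) (z : Fin k × Fin a → ℤ) (S : Finset ℕ) (hS : ∀ p ∈ S, p.Prime) :
    Tendsto (fun B => pr z B (fun x => ∀ p ∈ S, LI p x)) atTop (nhds (∏ p ∈ S, loc k a p)) := by
  classical
  let q : S → ℕ := fun p => (p : ℕ)
  have hcop : Pairwise (Function.onFun Nat.Coprime q) := by
    intro i j hij
    exact (Nat.coprime_primes (hS _ i.2) (hS _ j.2)).2 (fun h => hij (Subtype.ext h))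
  let N : ℕ := ∏ p, q p
  have hN : 1 ≤ N := Finset.one_le_prod' fun p _ => (hS _ p.2).one_le
  let Q : (Fin k × Fin a → ZMod N) → Prop := fun r =>
    ∀ p : S, LId (q p) (fun t => ZMod.prodEquivPi q hcop (r t) p)
  have h := pr_mod_tendsto z N hN Q
  have hc : Nat.card {r // Q r} = ∏ p : S, Nat.card {r : Fin k × Fin a → ZMod (q p) // LId (q p) r} := by
    rw [← Nat.card_pi]
    let e1 : (Fin k × Fin a → ZMod N) ≃ (∀ p : S, Fin k × Fin a → ZMod (q p)) :=
      ((Equiv.refl _).arrowCongr (ZMod.prodEquivPi q hcop).toEquiv).trans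
        (Equiv.piComm fun (_ : Fin k × Fin a) (p : S) => ZMod (q p))
    refine Nat.card_congr ((e1.subtypeEquiv (q := fun s => ∀ p, LId (q p) (s p)) fun r => ?_).trans
      (Equiv.subtypePiEquivPi (p := fun (p : S) (r : Fin k × Fin a → ZMod (q p)) => LId (q p) r)))
    rfl
  have hlim : ((Nat.card {r // Q r} : ℝ) / (N : ℝ) ^ Fintype.card (Fin k × Fin a)) = ∏ p ∈ S, loc k a p := by
    rw [hc, Fintype.card_prod, Fintype.card_fin, Fintype.card_fin, ← Finset.prod_coe_sort S (fun p => loc k a p)]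
    simp only [N]
    push_cast
    rw [← Finset.prod_pow, ← Finset.prod_div_distrib]
    exact Finset.prod_congr rfl fun p _ => card_LId hka (q p) (hS _ p.2)
  rw [hlim] at h
  refine h.congr fun B => pr_congr fun x => ?_
  simp only [Q, ZMod.prodEquivPi_apply, map_intCast]
  exact ⟨fun h p hp => h ⟨p, hp⟩, fun h p => h p.1 p.2⟩

lemma euler_zeta (k : ℕ) (hk : 2 ≤ k) :
    Tendsto (fun n : ℕ => ∏ p ∈ Nat.primesBelow n, (1 - ((p : ℝ) ^ k)⁻¹)) atTop (nhds (zetaR k)⁻¹) := by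
  let f : ℕ →*₀ ℝ :=
    { toFun := fun n => ((n : ℝ) ^ k)⁻¹
      map_zero' := by simp; omega
      map_one' := by simp
      map_mul' := fun x y => by push_cast; rw [mul_pow, mul_inv] }
  have hsum : Summable (fun n : ℕ => ((n : ℝ) ^ k)⁻¹) := Real.summable_nat_pow_inv.2 (by omega)
  have h := EulerProduct.eulerProduct_completely_multiplicative (f := f) (by
    refine hsum.congr fun n => ?_
    change _ = ‖((n : ℝ) ^ k)⁻¹‖
    rw [Real.norm_of_nonneg (by positivity)])
  have hz : ∑' n, f n = zetaR k := by
    change ∑' n : ℕ, ((n : ℝ) ^ k)⁻¹ = _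
    rw [hsum.tsum_eq_zero_add]
    unfold zetaR
    simp only [one_div, Nat.cast_add, Nat.cast_one, Nat.cast_zero]
    rw [zero_pow (by omega), inv_zero, zero_add]
  rw [hz] at h
  have h2 := h.inv₀ (by have := zeta_ge_one (k := k) hk; linarith)
  refine h2.congr fun n => ?_
  rw [← Finset.prod_inv_distrib]
  exact Finset.prod_congr rfl fun p _ => by rw [inv_inv]; rfl

lemma euler_loc (m : ℕ) :
    Tendsto (fun n : ℕ => ∏ p ∈ Nat.primesBelow n, loc m (m + 1) p) atTop
      (nhds (∏ i : Fin m, zetaR (m + 1 - (i : ℕ)))⁻¹) := by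
  have h := tendsto_finsetProd (Finset.univ : Finset (Fin m)) fun i _ => euler_zeta (m + 1 - (i : ℕ)) (by omega)
  rw [← Finset.prod_inv_distrib]
  refine h.congr fun n => ?_
  rw [Finset.prod_comm]
  refine Finset.prod_congr rfl fun p hp => ?_
  have hp0 : (0 : ℝ) < p := by exact_mod_cast (Nat.prime_of_mem_primesBelow hp).pos
  unfold loc
  refine Finset.prod_congr rfl fun i _ => ?_
  congr 1
  rw [eq_div_iff (by positivity), inv_mul_eq_iff_eq_mul₀ (by positivity), ← pow_add]
  congr 1
  omega

lemma pr_all (m : ℕ) (z : Fin m × Fin (m + 1) → ℤ) :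
    Tendsto (fun B => pr z B (fun x => ∀ p : ℕ, p.Prime → LI p x)) atTop
      (nhds (∏ i : Fin m, zetaR (m + 1 - (i : ℕ)))⁻¹) := by
  set L := (∏ i : Fin m, zetaR (m + 1 - (i : ℕ)))⁻¹ with hL
  rw [Metric.tendsto_atTop]
  intro ε hε
  set C : ℝ := 2 ^ (m * (m + 1)) * m with hC
  have hC0 : 0 ≤ C := by positivity
  have hT : Tendsto (fun M : ℕ => C * (2 / ((M : ℝ) + 1))) atTop (nhds 0) := by
    have := (tendsto_one_div_add_atTop_nhds_zero_nat (𝕜 := ℝ)).const_mul (C * 2)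
    simp only [mul_zero] at this
    refine this.congr fun M => ?_
    ring
  have e1 : ∀ᶠ M : ℕ in atTop, C * (2 / ((M : ℝ) + 1)) < ε / 4 := hT.eventually (gt_mem_nhds (by linarith))
  have e2 : ∀ᶠ M : ℕ in atTop, |∏ p ∈ Nat.primesBelow (M + 1), loc m (m + 1) p - L| < ε / 4 := by
    have := (Metric.tendsto_nhds.1 ((euler_loc m).comp (tendsto_add_atTop_nat 1))) (ε / 4) (by linarith)
    exact this
  obtain ⟨M, h1, h2⟩ := (e1.and e2).exists
  have h3 := (Metric.tendsto_nhds.1 (pr_finite (Nat.le_succ m) z (Nat.primesBelow (M + 1))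
    (fun p hp => Nat.prime_of_mem_primesBelow hp))) (ε / 4) (by linarith)
  have h4 := (Metric.tendsto_nhds.1 (pr_Big m z)) (ε / 4) (by linarith)
  obtain ⟨B0, hB0⟩ := eventually_atTop.1 (h3.and h4)
  refine ⟨B0, fun B hB => ?_⟩
  obtain ⟨h5, h6⟩ := hB0 B hB
  have ht := pr_tail z B M
  have u1 : pr z B (fun x => ∀ p : ℕ, p.Prime → LI p x) ≤ pr z B (fun x => ∀ p ∈ Nat.primesBelow (M + 1), LI p x) :=
    pr_mono fun x _ h p hp => h p (Nat.prime_of_mem_primesBelow hp)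
  have u2 : pr z B (fun x => ∀ p ∈ Nat.primesBelow (M + 1), LI p x) ≤
      pr z B (fun x => ∀ p : ℕ, p.Prime → LI p x) + pr z B (fun x => ∃ p : ℕ, p.Prime ∧ M < p ∧ ¬ LI p x) := by
    refine pr_or fun x _ h => ?_
    by_cases hx : ∃ p : ℕ, p.Prime ∧ M < p ∧ ¬ LI p x
    · exact Or.inr hx
    · left
      intro p hp
      by_cases hpM : p < M + 1
      · exact h p (Nat.mem_primesBelow.2 ⟨hpM, hp⟩)
      · by_contra hn
        exact hx ⟨p, hp, by omega, hn⟩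
  rw [Real.dist_eq, abs_lt] at h5 h6 ⊢
  rw [abs_lt] at h2
  constructor <;> linarith [h5.1, h5.2, h6.1, h6.2, h2.1, h2.2]

lemma matCube_eq {n : ℕ} (S : Set (Matrix (Fin n) (Fin n) ℤ)) (z : Matrix (Fin n) (Fin n) ℤ) (B : ℕ) :
    (matCubeCount S z B : ℝ) / (2 * (B : ℝ)) ^ (n * n) =
      pr (fun t : Fin n × Fin n => z t.1 t.2) B (fun x => (Matrix.of fun i l => x (i, l)) ∈ S) := by
  classical
  unfold matCubeCount pr
  rw [Fintype.card_prod, Fintype.card_fin]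
  congr 2
  apply Finset.card_nbij' (fun A t => A t.1 t.2) (fun x i l => x (i, l))
  · intro A hA
    simp only [Finset.coe_filter, Set.mem_ofPred_eq, mem_bx, Fintype.mem_piFinset, Finset.mem_Ico] at hA ⊢
    exact ⟨fun t => hA.1 t.1 t.2, hA.2⟩
  · intro x hx
    simp only [Finset.coe_filter, Set.mem_ofPred_eq, mem_bx, Fintype.mem_piFinset, Finset.mem_Ico] at hx ⊢
    exact ⟨fun i l => hx.1 (i, l), hx.2⟩
  · intro A _; rfl
  · intro x _; rfl

lemma part_one (n : ℕ) (hn : 2 ≤ n) :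
      HasMatDensity
        {A : Matrix (Fin n) (Fin n) ℤ | ∃ H, IsHNFOf H A ∧
          ∀ i : Fin n, (i : ℕ) < n - 1 → H i i = 1}
        (∏ i : Fin (n - 1), zetaR (n - (i : ℕ)))⁻¹ := by
  obtain ⟨m, rfl⟩ : ∃ m, n = m + 1 := ⟨n - 1, by omega⟩
  intro z
  let f : Fin m × Fin (m + 1) → Fin (m + 1) × Fin (m + 1) := fun t => (t.2, t.1.castSucc)
  have hf : Function.Injective f := by
    rintro ⟨a, b⟩ ⟨c, d⟩ h
    simp only [f, Prod.mk.injEq, Fin.castSucc_inj] at h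
    rw [h.1, h.2]
  have h := pr_all m ((fun t : Fin (m + 1) × Fin (m + 1) => z t.1 t.2) ∘ f)
  refine Tendsto.congr' ?_ h
  filter_upwards [eventually_ge_atTop 1] with B hB
  rw [matCube_eq, ← pr_marg f hf _ hB]
  refine pr_congr fun x => ?_
  rw [Set.mem_ofPred_eq]
  constructor
  · intro h
    exact alg_backward (Matrix.of fun i l => x (i, l)) h
  · intro h p hp
    exact alg_forward (Matrix.of fun i l => x (i, l)) h p hp

/-- Matrices whose HNF diagonal is all `1`s except possibly the last entry have
density `(ζ(n)⋯ζ(2))⁻¹`, and this converges to `(∏_{j≥2} ζ(j))⁻¹ ≈ 0.43575707677`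
as `n → ∞`. -/
theorem density_random_lattice_bases :
    (∀ n : ℕ, 2 ≤ n →
      HasMatDensity
        {A : Matrix (Fin n) (Fin n) ℤ | ∃ H, IsHNFOf H A ∧
          ∀ i : Fin n, (i : ℕ) < n - 1 → H i i = 1}
        (∏ i : Fin (n - 1), zetaR (n - (i : ℕ)))⁻¹) ∧
    Tendsto (fun n : ℕ => (∏ i : Fin (n - 1), zetaR (n - (i : ℕ)))⁻¹) atTop
      (nhds (∏' j : ℕ, zetaR (j + 2))⁻¹) ∧
    |(∏' j : ℕ, zetaR (j + 2))⁻¹ - 0.43575707677| < 1 / 10 ^ 10 := by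
  exact ⟨part_one, part_two, part_three⟩
end

section
/- Let u ∈ ℤ^n be a vector with coprime coordinates and d ≥ 1. The natural density of pairs (x,y) ∈ ℤ^n × ℤ^n with gcd(u·x, u·y) = d equals (d² ζ(2))^{-1}. -/
open Filter

open scoped Classical in
/-- Number of pairs of `S` in the product of cubes of side `2B` centered at `z`. -/
noncomputable def pairCubeCount {n : ℕ} (S : Set ((Fin n → ℤ) × (Fin n → ℤ)))
    (z : (Fin n → ℤ) × (Fin n → ℤ)) (B : ℕ) : ℕ :=
  (Finset.filter (fun p => p ∈ S)
    ((Fintype.piFinset fun i => Finset.Ico (z.1 i - (B : ℤ)) (z.1 i + (B : ℤ))) ×ˢ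
      (Fintype.piFinset fun i => Finset.Ico (z.2 i - (B : ℤ)) (z.2 i + (B : ℤ))))).card

/-- Natural density in `ℤ^n × ℤ^n ≅ ℤ^{2n}`, via cubes of arbitrary center. -/
def HasPairDensity {n : ℕ} (S : Set ((Fin n → ℤ) × (Fin n → ℤ))) (δ : ℝ) : Prop :=
  ∀ z : (Fin n → ℤ) × (Fin n → ℤ),
    Tendsto (fun B : ℕ => (pairCubeCount S z B : ℝ) / (2 * (B : ℝ)) ^ (2 * n))
      atTop (nhds δ)

lemma gd_bezout {n : ℕ} (u : Fin n → ℤ) (hu : Finset.univ.gcd u = 1) :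
    ∃ w : Fin n → ℤ, ∑ i, u i * w i = 1 := by
  have h1 : (1 : ℤ) ∈ Ideal.span (Set.range u) := by
    obtain ⟨g, hg⟩ := IsPrincipalIdealRing.principal (Ideal.span (Set.range u))
    have hg' : Ideal.span (Set.range u) = Ideal.span {g} := hg
    have hd : g ∣ Finset.univ.gcd u := by
      apply Finset.dvd_gcd
      intro i _
      rw [← Ideal.mem_span_singleton, ← hg']
      exact Ideal.subset_span ⟨i, rfl⟩
    rw [hu] at hd
    rw [hg', Ideal.mem_span_singleton]
    exact hd
  obtain ⟨c, hc⟩ := (Ideal.mem_span_range_iff_exists_fun).1 h1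
  exact ⟨c, by rw [← hc]; exact Finset.sum_congr rfl fun i _ => mul_comm _ _⟩

/-- cube -/
noncomputable def gdCube {n : ℕ} (z : Fin n → ℤ) (B : ℕ) : Finset (Fin n → ℤ) :=
  Fintype.piFinset fun i => Finset.Ico (z i - (B : ℤ)) (z i + (B : ℤ))

/-- count of a residue class -/
noncomputable def gdN {n : ℕ} (u z : Fin n → ℤ) (B m : ℕ) (r : ℤ) : ℕ :=
  ((gdCube z B).filter fun x => (m : ℤ) ∣ (∑ i, u i * x i) - r).card

lemma gd_mem_cube {n : ℕ} (z : Fin n → ℤ) (B : ℕ) (x : Fin n → ℤ) :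
    x ∈ gdCube z B ↔ ∀ i, z i - (B : ℤ) ≤ x i ∧ x i < z i + (B : ℤ) := by
  simp [gdCube]

lemma gd_card_cube {n : ℕ} (z : Fin n → ℤ) (B : ℕ) :
    (gdCube z B).card = (2 * B) ^ n := by
  rw [gdCube, Fintype.card_piFinset]
  have : ∀ i, (Finset.Ico (z i - (B : ℤ)) (z i + (B : ℤ))).card = 2 * B := by
    intro i; rw [Int.card_Ico]; omega
  simp [this]

lemma gd_shift {n : ℕ} (u z v : Fin n → ℤ) (V : ℕ) (hV : ∀ i, |v i| ≤ V) (m : ℕ) (r s : ℤ)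
    (hs : ∑ i, u i * v i = s) (B : ℕ) (hB : V ≤ B) :
    gdN u z B m r + (2 * (B - V)) ^ n ≤ gdN u z B m (r + s) + (2 * B) ^ n := by
  have hsub : gdCube z (B - V) ⊆ gdCube z B := by
    intro x hx
    rw [gd_mem_cube] at *
    intro i; have := hx i; omega
  have h1 : gdN u z B m r ≤ gdN u z B m (r + s) + (gdCube z B \ gdCube z (B - V)).card := by
    have h2 : (gdCube z B).filter (fun x => (m : ℤ) ∣ (∑ i, u i * x i) - r) ⊆
        ((gdCube z (B - V)).filter fun x => (m : ℤ) ∣ (∑ i, u i * x i) - r) ∪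
          (gdCube z B \ gdCube z (B - V)) := by
      intro x hx
      simp only [Finset.mem_filter, Finset.mem_union, Finset.mem_sdiff] at *
      tauto
    refine (Finset.card_le_card h2).trans ((Finset.card_union_le _ _).trans ?_)
    gcongr
    unfold gdN
    apply Finset.card_le_card_of_injOn (fun x => x + v)
    · intro x hx
      simp only [Finset.coe_filter, Set.mem_ofPred_eq, gd_mem_cube] at *
      refine ⟨fun i => ?_, ?_⟩
      · have := hx.1 i
        have := abs_le.1 (hV i)
        simp only [Pi.add_apply]
        omega
      · simp only [Pi.add_apply, mul_add, Finset.sum_add_distrib, hs]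
        convert hx.2 using 1
        ring
    · intro x _ y _ h
      exact add_right_cancel h
  have h3 := Finset.card_sdiff_add_card_eq_card hsub
  rw [gd_card_cube, gd_card_cube] at h3
  omega

lemma gd_sum {n : ℕ} (u z : Fin n → ℤ) (B m : ℕ) (hm : 0 < m) :
    ∑ r ∈ Finset.range m, gdN u z B m (r : ℤ) = (2 * B) ^ n := by
  rw [← gd_card_cube z B]
  rw [Finset.card_eq_sum_card_fiberwise (t := Finset.range m)
    (f := fun x => ((∑ i, u i * x i) % (m : ℤ)).toNat)]
  · apply Finset.sum_congr rfl
    intro r hr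
    unfold gdN
    congr 1
    apply Finset.filter_congr
    intro x _
    have hr' := Finset.mem_range.1 hr
    have h0 := Int.emod_nonneg (∑ i, u i * x i) (b := (m : ℤ)) (by omega)
    rw [← Int.emod_emod_of_dvd _ (dvd_refl (m : ℤ))] at h0
    have hlt := Int.emod_lt_of_pos (∑ i, u i * x i) (b := (m : ℤ)) (by omega)
    rw [← Int.modEq_iff_dvd, Int.ModEq, Int.emod_eq_of_lt (a := (r : ℤ)) (by omega) (by omega)]
    simp at h0
    omega
  · intro x _
    have h0 := Int.emod_nonneg (∑ i, u i * x i) (b := (m : ℤ)) (by omega)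
    have hlt := Int.emod_lt_of_pos (∑ i, u i * x i) (b := (m : ℤ)) (by omega)
    simp only [Finset.coe_range, Set.mem_Iio]
    omega

lemma gd_tendsto_E (n V : ℕ) : Tendsto (fun B : ℕ =>
    1 - ((2 * (B - V) : ℕ) : ℝ) ^ n / (2 * (B : ℝ)) ^ n) atTop (nhds 0) := by
  have h : Tendsto (fun B : ℕ => 1 - (1 - (V : ℝ) / (B : ℝ)) ^ n) atTop (nhds 0) := by
    have h1 : Tendsto (fun B : ℕ => (V : ℝ) / (B : ℝ)) atTop (nhds 0) :=
      tendsto_const_div_atTop_nhds_zero_nat _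
    have := ((h1.const_sub 1).pow n).const_sub 1
    simpa using this
  refine h.congr' ?_
  filter_upwards [eventually_ge_atTop (V + 1)] with B hB
  rw [← div_pow]
  congr 2
  have : (0 : ℝ) < B := by exact_mod_cast (by omega : 0 < B)
  push_cast [Nat.cast_sub (show V ≤ B by omega)]
  field_simp

lemma gd_diff {n : ℕ} (u z v : Fin n → ℤ) (m : ℕ) (s : ℤ) (hs : ∑ i, u i * v i = s) :
    Tendsto (fun B : ℕ => (gdN u z B m s : ℝ) / (2 * (B : ℝ)) ^ n
      - (gdN u z B m 0 : ℝ) / (2 * (B : ℝ)) ^ n) atTop (nhds 0) := by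
  obtain ⟨V, hV⟩ : ∃ V : ℕ, ∀ i, |v i| ≤ V := by
    refine ⟨∑ i, (v i).natAbs, fun i => ?_⟩
    rw [Int.abs_eq_natAbs]
    exact_mod_cast Finset.single_le_sum (f := fun i => (v i).natAbs)
      (fun _ _ => Nat.zero_le _) (Finset.mem_univ i)
  apply squeeze_zero_norm' _ (gd_tendsto_E n V)
  filter_upwards [eventually_ge_atTop (V + 1)] with B hB
  have hpos : (0 : ℝ) < (2 * (B : ℝ)) ^ n := by
    have : (0 : ℝ) < B := by exact_mod_cast (by omega : 0 < B)
    positivity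
  have h1 := gd_shift u z v V hV m 0 s hs B (by omega)
  have h2 := gd_shift u z (-v) V (by simpa using hV) m s (-s) (by simp [hs]) B (by omega)
  rw [zero_add] at h1
  rw [add_neg_cancel] at h2
  have h1' : (gdN u z B m 0 : ℝ) + ((2 * (B - V) : ℕ) : ℝ) ^ n ≤ gdN u z B m s + (2 * (B : ℝ)) ^ n := by
    exact_mod_cast h1
  have h2' : (gdN u z B m s : ℝ) + ((2 * (B - V) : ℕ) : ℝ) ^ n ≤ gdN u z B m 0 + (2 * (B : ℝ)) ^ n := by
    exact_mod_cast h2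
  rw [← sub_div, Real.norm_eq_abs, abs_div, abs_of_pos hpos, one_sub_div hpos.ne']
  gcongr
  rw [abs_le]
  constructor <;> linarith

lemma gd_density {n : ℕ} (u z w : Fin n → ℤ) (hw : ∑ i, u i * w i = 1) (m : ℕ) (hm : 0 < m) :
    Tendsto (fun B : ℕ => (gdN u z B m 0 : ℝ) / (2 * (B : ℝ)) ^ n) atTop (nhds (1 / m)) := by
  have hm' : (0 : ℝ) < m := by exact_mod_cast hm
  have h := tendsto_finsetSum (Finset.range m) (fun r _ => gd_diff u z ((r : ℤ) • w) m r (by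
    simp only [Pi.smul_apply, smul_eq_mul, mul_left_comm _ (r : ℤ), ← Finset.mul_sum, hw, mul_one]))
  simp only [Finset.sum_const_zero] at h
  have h2 := (h.const_sub 1).div_const (m : ℝ)
  rw [sub_zero] at h2
  refine h2.congr' ?_
  filter_upwards [eventually_ge_atTop 1] with B hB
  have hpos : (0 : ℝ) < (2 * (B : ℝ)) ^ n := by
    have : (0 : ℝ) < B := by exact_mod_cast (by omega : 0 < B)
    positivity
  have hs : (∑ r ∈ Finset.range m, (gdN u z B m (r : ℤ) : ℝ)) = (2 * (B : ℝ)) ^ n := by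
    exact_mod_cast gd_sum u z B m hm
  rw [Finset.sum_sub_distrib, ← Finset.sum_div, hs, div_self hpos.ne']
  simp
  field_simp

lemma gd_bound {n : ℕ} (u z w : Fin n → ℤ) (hw : ∑ i, u i * w i = 1) (K : ℕ) :
    ∃ C : ℝ, 0 ≤ C ∧ ∀ B m : ℕ, 0 < B → 0 < m → m ≤ K * B →
      (gdN u z B m 0 : ℝ) / (2 * (B : ℝ)) ^ n ≤ C / m := by
  obtain ⟨V, hV⟩ : ∃ V : ℕ, ∀ i, |w i| ≤ V := by
    refine ⟨∑ i, (w i).natAbs, fun i => ?_⟩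
    rw [Int.abs_eq_natAbs]
    exact_mod_cast Finset.single_le_sum (f := fun i => (w i).natAbs)
      (fun _ _ => Nat.zero_le _) (Finset.mem_univ i)
  refine ⟨((1 + K * V : ℕ) : ℝ) ^ n, by positivity, fun B m hB hm hmK => ?_⟩
  have key : gdN u z B m 0 * m ≤ (2 * ((1 + K * V) * B)) ^ n := by
    rw [← gd_card_cube z, ← Finset.card_range m, gdN, ← Finset.card_product]
    apply Finset.card_le_card_of_injOn (fun p => p.1 + (p.2 : ℤ) • w)
    · intro p hp
      simp only [Finset.coe_product, Finset.coe_filter, Set.mem_prod, Set.mem_ofPred_eq,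
        Finset.coe_range, Set.mem_Iio, Finset.card_range, gd_mem_cube] at hp
      rw [Finset.mem_coe, gd_mem_cube]
      intro i
      have h1 := hp.1.1 i
      have h2 : |(p.2 : ℤ) * w i| ≤ K * B * V := by
        rw [abs_mul]
        apply mul_le_mul _ (hV i) (abs_nonneg _) (by positivity)
        rw [Nat.abs_cast]
        exact_mod_cast hp.2.le.trans hmK
      rw [abs_le] at h2
      simp only [Pi.add_apply, Pi.smul_apply, smul_eq_mul]
      push_cast
      constructor <;> nlinarith
    · intro p hp q hq h
      simp only [Finset.coe_product, Finset.coe_filter, Set.mem_prod, Set.mem_ofPred_eq,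
        Finset.coe_range, Set.mem_Iio, Finset.card_range, sub_zero] at hp hq h
      have hdot : ∀ t : (Fin n → ℤ) × ℕ, ∑ i, u i * (t.1 + (t.2 : ℤ) • w) i
          = (∑ i, u i * t.1 i) + t.2 := by
        intro t
        simp only [Pi.add_apply, Pi.smul_apply, smul_eq_mul, mul_add, Finset.sum_add_distrib,
          mul_left_comm _ (t.2 : ℤ), ← Finset.mul_sum, hw, mul_one]
      have h3 : (∑ i, u i * p.1 i) + (p.2 : ℤ) = (∑ i, u i * q.1 i) + q.2 := by
        rw [← hdot, ← hdot, h]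
      have h4 : (m : ℤ) ∣ (p.2 : ℤ) - q.2 := by
        have h7 : (p.2 : ℤ) - q.2 = (∑ i, u i * q.1 i) - ∑ i, u i * p.1 i := by linarith
        rw [h7]
        exact dvd_sub hq.1.2 hp.1.2
      have h5 : (p.2 : ℤ) - q.2 = 0 := by
        apply Int.eq_zero_of_abs_lt_dvd h4
        rw [abs_lt]; omega
      have h6 : p.2 = q.2 := by omega
      rw [h6] at h
      exact Prod.ext (add_right_cancel h) h6
  have hB' : (0 : ℝ) < B := by exact_mod_cast hB
  have hm' : (0 : ℝ) < m := by exact_mod_cast hm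
  rw [div_le_div_iff₀ (by positivity) hm']
  have key' : (gdN u z B m 0 : ℝ) * m ≤ (2 * (((1 + K * V : ℕ) : ℝ) * B)) ^ n := by
    exact_mod_cast key
  refine key'.trans (le_of_eq ?_)
  rw [← mul_pow]; ring

lemma gd_zero {n : ℕ} (u z w : Fin n → ℤ) (hw : ∑ i, u i * w i = 1) :
    Tendsto (fun B : ℕ => (gdN u z B 0 0 : ℝ) / (2 * (B : ℝ)) ^ n) atTop (nhds 0) := by
  rw [Metric.tendsto_atTop]
  intro ε hε
  obtain ⟨k, hk⟩ := exists_nat_one_div_lt hε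
  have h := gd_density u z w hw (k + 1) (by omega)
  have h' := h.eventually_lt_const (u := ε) (by exact_mod_cast hk)
  obtain ⟨N, hN⟩ := eventually_atTop.1 h'
  refine ⟨N, fun B hB => ?_⟩
  rw [Real.dist_eq, sub_zero, abs_of_nonneg (by positivity)]
  refine lt_of_le_of_lt ?_ (hN B hB)
  gcongr
  unfold gdN
  apply Finset.card_le_card
  intro x hx
  simp only [Finset.mem_filter, Nat.cast_zero, zero_dvd_iff] at *
  exact ⟨hx.1, by rw [hx.2]; exact dvd_zero _⟩

open scoped ArithmeticFunction.Moebius in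
lemma gd_moebius_sum : ∑' k : ℕ, (μ k : ℝ) * (1 / (k : ℝ) ^ 2) = (zetaR 2)⁻¹ := by
  have hs : 1 < (2 : ℂ).re := by norm_num
  have h := LSeries_one_mul_Lseries_moebius hs
  rw [LSeries_one_eq_riemannZeta hs, zeta_eq_tsum_one_div_nat_add_one_cpow hs] at h
  have h1 : (∑' n : ℕ, 1 / ((n : ℂ) + 1) ^ (2 : ℂ)) = ((zetaR 2 : ℝ) : ℂ) := by
    rw [zetaR, Complex.ofReal_tsum]
    congr 1; ext n
    push_cast
    norm_cast
  have h2 : LSeries (fun n => ((μ n : ℤ) : ℂ)) 2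
      = ((∑' k : ℕ, (μ k : ℝ) * (1 / (k : ℝ) ^ 2) : ℝ) : ℂ) := by
    rw [LSeries, Complex.ofReal_tsum]
    congr 1; ext n
    rcases eq_or_ne n 0 with rfl | hn
    · simp
    · rw [LSeries.term_of_ne_zero hn]
      push_cast
      rw [mul_one_div]
      norm_cast
  rw [h1, h2] at h
  have h3 : zetaR 2 * (∑' k : ℕ, (μ k : ℝ) * (1 / (k : ℝ) ^ 2)) = 1 := by exact_mod_cast h
  exact eq_inv_of_mul_eq_one_right h3

open scoped ArithmeticFunction.Moebius in
lemma gd_moeb (g d : ℕ) (hd : 1 ≤ d) :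
    HasSum (fun k : ℕ => (μ k : ℝ) * (if k * d ∣ g ∧ g ≠ 0 then 1 else 0))
      (if g = d then 1 else 0) := by
  by_cases hdg : d ∣ g ∧ g ≠ 0
  · obtain ⟨⟨h, rfl⟩, hg⟩ := hdg
    have hh : h ≠ 0 := by rintro rfl; simp at hg
    have hv : (if d * h = d then (1 : ℝ) else 0) = ∑ k ∈ h.divisors,
        (μ k : ℝ) * (if k * d ∣ d * h ∧ d * h ≠ 0 then 1 else 0) := by
      have h1 : ∑ k ∈ h.divisors, (μ k : ℝ) * (if k * d ∣ d * h ∧ d * h ≠ 0 then 1 else 0)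
          = ∑ k ∈ h.divisors, (μ k : ℝ) := by
        apply Finset.sum_congr rfl
        intro k hk
        have hk' : k * d ∣ d * h := by
          rw [mul_comm d h]
          exact mul_dvd_mul_right (Nat.dvd_of_mem_divisors hk) d
        rw [if_pos ⟨hk', hg⟩, mul_one]
      have h2 : ∑ k ∈ h.divisors, μ k = if h = 1 then 1 else 0 := by
        rw [← ArithmeticFunction.coe_mul_zeta_apply, ArithmeticFunction.moebius_mul_coe_zeta,
          ArithmeticFunction.one_apply]
      have h3 : ∑ k ∈ h.divisors, (μ k : ℝ) = if h = 1 then 1 else 0 := by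
        exact_mod_cast h2
      rw [h1, h3]
      have : d * h = d ↔ h = 1 := by
        constructor
        · intro e; exact Nat.eq_of_mul_eq_mul_left (by omega : 0 < d) (by omega)
        · rintro rfl; simp
      simp [this]
    rw [hv]
    apply hasSum_sum_of_ne_finset_zero
    intro k hk
    rw [if_neg, mul_zero]
    rintro ⟨hkd, _⟩
    apply hk
    rw [mul_comm d h] at hkd
    exact Nat.mem_divisors.2 ⟨Nat.dvd_of_mul_dvd_mul_right (by omega) hkd, hh⟩
  · have h1 : ∀ k : ℕ, (μ k : ℝ) * (if k * d ∣ g ∧ g ≠ 0 then 1 else 0) = 0 := by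
      intro k
      rw [if_neg, mul_zero]
      rintro ⟨h, h'⟩
      exact hdg ⟨dvd_of_mul_left_dvd h, h'⟩
    have h2 : g ≠ d := by
      rintro rfl; exact hdg ⟨dvd_rfl, by omega⟩
    simp only [h1, if_neg h2]
    exact hasSum_zero

/-- gcd of the pair -/
noncomputable def gdG {n : ℕ} (u : Fin n → ℤ) (p : (Fin n → ℤ) × (Fin n → ℤ)) : ℕ :=
  Int.gcd (∑ i, u i * p.1 i) (∑ i, u i * p.2 i)

lemma gd_count {n : ℕ} (u : Fin n → ℤ) (z : (Fin n → ℤ) × (Fin n → ℤ)) (B m : ℕ) :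
    (gdN u z.1 B m 0 : ℝ) * gdN u z.2 B m 0
      = ∑ p ∈ gdCube z.1 B ×ˢ gdCube z.2 B, if m ∣ gdG u p then 1 else 0 := by
  rw [Finset.sum_boole, ← Nat.cast_mul, gdN, gdN, ← Finset.card_product,
    ← Finset.filter_product]
  congr 2
  apply Finset.filter_congr
  intro p _
  rw [gdG, sub_zero, sub_zero, Int.dvd_gcd_iff]

lemma gd_count_sub {n : ℕ} (u : Fin n → ℤ) (z : (Fin n → ℤ) × (Fin n → ℤ)) (B m : ℕ) :
    (gdN u z.1 B m 0 : ℝ) * gdN u z.2 B m 0 - (gdN u z.1 B 0 0 : ℝ) * gdN u z.2 B 0 0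
      = ∑ p ∈ gdCube z.1 B ×ˢ gdCube z.2 B, if m ∣ gdG u p ∧ gdG u p ≠ 0 then 1 else 0 := by
  rw [gd_count, gd_count, ← Finset.sum_sub_distrib]
  apply Finset.sum_congr rfl
  intro p _
  by_cases h : gdG u p = 0 <;> simp [h]

open scoped ArithmeticFunction.Moebius in
lemma gd_main_sum {n : ℕ} (u : Fin n → ℤ) (z : (Fin n → ℤ) × (Fin n → ℤ)) (B d : ℕ)
    (hd : 1 ≤ d) :
    HasSum (fun k : ℕ => (μ k : ℝ) * ((gdN u z.1 B (k * d) 0 : ℝ) * gdN u z.2 B (k * d) 0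
      - (gdN u z.1 B 0 0 : ℝ) * gdN u z.2 B 0 0))
      (pairCubeCount {p : (Fin n → ℤ) × (Fin n → ℤ) |
        Int.gcd (∑ i, u i * p.1 i) (∑ i, u i * p.2 i) = d} z B : ℝ) := by
  have h := hasSum_sum (s := gdCube z.1 B ×ˢ gdCube z.2 B)
    (fun p _ => gd_moeb (gdG u p) d hd)
  simp only [← Finset.mul_sum, ← gd_count_sub] at h
  convert h using 1
  rw [Finset.sum_boole, pairCubeCount]
  congr 2
  ext p
  simp only [Finset.mem_filter]
  rfl

lemma gd_K {n : ℕ} (u z : Fin n → ℤ) : ∃ K : ℕ, ∀ B : ℕ, 0 < B → ∀ x ∈ gdCube z B,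
    (∑ i, u i * x i).natAbs ≤ K * B := by
  refine ⟨∑ i, (u i).natAbs * ((z i).natAbs + 1), fun B hB x hx => ?_⟩
  refine (Int.natAbs_sum_le _ _).trans ?_
  rw [Finset.sum_mul]
  apply Finset.sum_le_sum
  intro i _
  rw [Int.natAbs_mul, mul_assoc]
  apply Nat.mul_le_mul_left
  have h := (gd_mem_cube z B x).1 hx i
  have h1 : (x i).natAbs ≤ (z i).natAbs + B := by omega
  nlinarith [Nat.zero_le (z i).natAbs]

lemma gd_dom {n : ℕ} (u w : Fin n → ℤ) (hw : ∑ i, u i * w i = 1)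
    (z : (Fin n → ℤ) × (Fin n → ℤ)) :
    ∃ C : ℝ, ∀ B m : ℕ, 0 < B → 0 < m →
      |((gdN u z.1 B m 0 : ℝ) * gdN u z.2 B m 0
        - (gdN u z.1 B 0 0 : ℝ) * gdN u z.2 B 0 0) / (2 * (B : ℝ)) ^ (2 * n)|
        ≤ C * (1 / (m : ℝ) ^ 2) := by
  obtain ⟨K1, hK1⟩ := gd_K u z.1
  obtain ⟨K2, hK2⟩ := gd_K u z.2
  obtain ⟨C1, hC1, hb1⟩ := gd_bound u z.1 w hw (K1 + K2)
  obtain ⟨C2, hC2, hb2⟩ := gd_bound u z.2 w hw (K1 + K2)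
  refine ⟨C1 * C2, fun B m hB hm => ?_⟩
  have hB' : (0 : ℝ) < B := by exact_mod_cast hB
  have hm' : (0 : ℝ) < m := by exact_mod_cast hm
  have hnn : 0 ≤ (gdN u z.1 B m 0 : ℝ) * gdN u z.2 B m 0
        - (gdN u z.1 B 0 0 : ℝ) * gdN u z.2 B 0 0 := by
    rw [gd_count_sub]
    apply Finset.sum_nonneg
    intro p _
    split_ifs <;> norm_num
  by_cases hmK : m ≤ (K1 + K2) * B
  · rw [abs_of_nonneg (by positivity)]
    have h1 := hb1 B m hB hm hmK
    have h2 := hb2 B m hB hm hmK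
    calc _ ≤ ((gdN u z.1 B m 0 : ℝ) * gdN u z.2 B m 0) / (2 * (B : ℝ)) ^ (2 * n) := by
          gcongr
          have : (0 : ℝ) ≤ (gdN u z.1 B 0 0 : ℝ) * gdN u z.2 B 0 0 := by positivity
          linarith
      _ = ((gdN u z.1 B m 0 : ℝ) / (2 * (B : ℝ)) ^ n) *
            ((gdN u z.2 B m 0 : ℝ) / (2 * (B : ℝ)) ^ n) := by
          rw [two_mul n, pow_add]; field_simp
      _ ≤ (C1 / m) * (C2 / m) := by gcongr
      _ = _ := by field_simp
  · have h0 : (gdN u z.1 B m 0 : ℝ) * gdN u z.2 B m 0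
        - (gdN u z.1 B 0 0 : ℝ) * gdN u z.2 B 0 0 = 0 := by
      rw [gd_count_sub]
      apply Finset.sum_eq_zero
      intro p hp
      rw [if_neg]
      rintro ⟨hdv, hne⟩
      apply hmK
      rw [Finset.mem_product] at hp
      have h1 := hK1 B hB _ hp.1
      have h2 := hK2 B hB _ hp.2
      have hle : gdG u p ≤ (∑ i, u i * p.1 i).natAbs + (∑ i, u i * p.2 i).natAbs := by
        by_cases ha : ∑ i, u i * p.1 i = 0
        · simp [gdG, ha]
        · have := Int.gcd_le_natAbs_left (∑ i, u i * p.2 i) ha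
          rw [gdG]; omega
      have := Nat.le_of_dvd (Nat.pos_of_ne_zero hne) hdv
      rw [add_mul]; omega
    rw [h0]; simp; positivity

/-- For a primitive vector `u`, the density of pairs `(x, y)` with
`gcd(u·x, u·y) = d` is `(d² ζ(2))⁻¹`. -/
theorem density_gcd_dot_products (n : ℕ) (u : Fin n → ℤ)
    (hu : Finset.univ.gcd u = 1) (d : ℕ) (hd : 1 ≤ d) :
    HasPairDensity
      {p : (Fin n → ℤ) × (Fin n → ℤ) |
        Int.gcd (∑ i, u i * p.1 i) (∑ i, u i * p.2 i) = d}
      ((d : ℝ) ^ 2 * zetaR 2)⁻¹ := by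
  intro z
  obtain ⟨w, hw⟩ := gd_bezout u hu
  obtain ⟨C, hC⟩ := gd_dom u w hw z
  have hd' : (0 : ℝ) < d := by exact_mod_cast hd
  have hlim : ((d : ℝ) ^ 2 * zetaR 2)⁻¹
      = ∑' k : ℕ, (ArithmeticFunction.moebius k : ℝ) * (1 / ((k * d : ℕ) : ℝ) ^ 2) := by
    rw [mul_inv, ← gd_moebius_sum, ← tsum_mul_left]
    congr 1; ext k
    push_cast
    rw [mul_pow, one_div, one_div, mul_inv]
    ring
  rw [hlim]
  have hfun : (fun B : ℕ => (pairCubeCount {p : (Fin n → ℤ) × (Fin n → ℤ) |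
        Int.gcd (∑ i, u i * p.1 i) (∑ i, u i * p.2 i) = d} z B : ℝ) / (2 * (B : ℝ)) ^ (2 * n))
      = fun B : ℕ => ∑' k : ℕ, (ArithmeticFunction.moebius k : ℝ) *
        (((gdN u z.1 B (k * d) 0 : ℝ) * gdN u z.2 B (k * d) 0
          - (gdN u z.1 B 0 0 : ℝ) * gdN u z.2 B 0 0) / (2 * (B : ℝ)) ^ (2 * n)) := by
    ext B
    rw [← ((gd_main_sum u z B d hd).div_const _).tsum_eq]
    congr 1; ext k
    rw [mul_div_assoc]
  rw [hfun]
  apply tendsto_tsum_of_dominated_convergence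
    (bound := fun k : ℕ => C * (1 / ((k * d : ℕ) : ℝ) ^ 2))
  · apply Summable.mul_left
    have h := (Real.summable_one_div_nat_pow.2 (by norm_num : 1 < 2)).mul_right (1 / (d : ℝ) ^ 2)
    refine h.congr fun k => ?_
    push_cast
    rw [mul_pow, one_div_mul_one_div]
  · intro k
    rcases Nat.eq_zero_or_pos k with rfl | hk
    · simp
    · apply Tendsto.const_mul
      have hkd : 0 < k * d := Nat.mul_pos hk hd
      have h := ((gd_density u z.1 w hw _ hkd).mul (gd_density u z.2 w hw _ hkd)).sub
        ((gd_zero u z.1 w hw).mul (gd_zero u z.2 w hw))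
      have he : (1 / ((k * d : ℕ) : ℝ)) * (1 / ((k * d : ℕ) : ℝ)) - 0 * 0
          = 1 / ((k * d : ℕ) : ℝ) ^ 2 := by
        rw [one_div_mul_one_div, sq]; ring
      rw [he] at h
      refine h.congr fun B => ?_
      rw [div_mul_div_comm, div_mul_div_comm, ← sub_div, two_mul n, pow_add]
  · filter_upwards [eventually_gt_atTop 0] with B hB k
    rcases Nat.eq_zero_or_pos k with rfl | hk
    · simp
    · rw [norm_mul, Real.norm_eq_abs, Real.norm_eq_abs]
      have h1 : |(ArithmeticFunction.moebius k : ℝ)| ≤ 1 := by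
        exact_mod_cast ArithmeticFunction.abs_moebius_le_one
      have h2 := hC B (k * d) hB (Nat.mul_pos hk hd)
      refine (mul_le_of_le_one_left (abs_nonneg _) h1).trans h2
end
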